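/- arXiv:0810.1840 — 4 statements merged into one kernel-verified Lean document; each statement's English description precedes it below -/
import Mathlib

section
/- Let p be an odd prime and n a positive integer. Then the symmetric group S_n possesses a p-basic set B ⊆ Irr(S_n) that is stable under multiplication by the sign character: if χ ∈ B then ε·χ ∈ B, where ε denotes the sign character of S_n (a degree-one character, so that ε·χ is again an irreducible character). -/
/-!
The irreducible characters of `S_n` are parametrized by beta sets: finite sets `X ⊆ ℕ` with
`N ≥ n` elements and sum `0 + 1 + ⋯ + (N - 1) + n`, i.e. the sets of first column hook lengths of
partitions of `n` padded to `N` rows. The value of the character at cycle type `s` is, up to a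
global sign, the coefficient of the monomial with exponents `X` in the product of the Vandermonde
determinant and the power sum product of type `s` (Frobenius' formula). That these class functions
are irreducible up to sign follows from the Cauchy identity, which makes them orthonormal, and
from the expansion of the determinant, which makes them integral combinations of permutation
characters. Since the power sum products are linearly independent, all irreducible characters
arise. By the Murnaghan–Nakayama rule, multiplication by the sign character is conjugation of
partitions: `X` is replaced by its complement in `{0, …, 2N - 1}`, reflected by `x ↦ 2N - 1 - x`.

Fix a residue `m` modulo `ℓ` and call a beta set `X` flush if no bead of residue `m` can be moved
down: `z + ℓ ∈ X` and `z ≡ m` imply `z ∈ X`. In other words, the component of index `m` of the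
`ℓ`-quotient is empty. The characters of the flush beta sets form a basic set for the classes
whose cycle lengths are not divisible by `ℓ`.

* They span. The product of an alternant and an elementary symmetric function of positive degree
  in the `ℓ`-th powers of the variables is a combination of characters vanishing on the regular
  classes. These relations are unitriangular for a suitable statistic of the beads of residue `m`,
  so that the character of a beta set that is not flush can be eliminated.
* They are independent. Their number is the number of regular classes: a beta set is a flush beta
  set with the runner of residue `m` replaced by an arbitrary one, and a partition is a partition
  without parts divisible by `ℓ` together with one whose parts are all divisible by `ℓ`. As the
  columns of the truncated character table are independent, so are the rows of the flush beta
  sets.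

If `ℓ` is odd, `m` can be chosen with `2m ≡ 2N - 1` modulo `ℓ`. Then the reflection
`x ↦ 2N - 1 - x` preserves the residue class of `m`, and the flush beta sets are stable under
conjugation.
-/

open scoped Classical

noncomputable section

/-- The set of irreducible complex characters of the group `G`. -/
def IrrChar (G : Type) [Group G] : Set (G → ℂ) :=
  {χ | ∃ V : FDRep ℂ G, CategoryTheory.Simple V ∧ χ = FDRep.character V}

/-- Truncation of a class function to the subset `C`: `φ^C`. -/
def truncCF {G : Type} (C : Set G) (φ : G → ℂ) : G → ℂ := fun g =>
  if g ∈ C then φ g else 0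

/-- The scalar product of class functions across the subset `C`:
`⟨α,β⟩_C = (1/|G|) · Σ_{g ∈ C} α(g) · conj(β(g))`. -/
def innerOn {G : Type} [Fintype G] (C : Set G) (α β : G → ℂ) : ℂ :=
  (Fintype.card G : ℂ)⁻¹ * ∑ g : G, if g ∈ C then α g * (starRingEnd ℂ) (β g) else 0

/-- `B` is a `C`-basic set of `b`: `B ⊆ b` and the truncations `χ^C` for `χ ∈ B` form a
`ℤ`-basis of the `ℤ`-submodule of class functions generated by the `χ^C`, `χ ∈ b`. -/
def IsBasicSetOf {G : Type} [Group G] (C : Set G) (b B : Set (G → ℂ)) : Prop :=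
  B ⊆ b ∧
  LinearIndependent ℤ (fun χ : B => truncCF C (χ : G → ℂ)) ∧
  Submodule.span ℤ (truncCF C '' B) = Submodule.span ℤ (truncCF C '' b)

/-- The set of `p`-regular elements of `G` (elements of order coprime to `p`). -/
def pRegular (p : ℕ) (G : Type) [Group G] : Set G :=
  {g | Nat.Coprime (orderOf g) p}

namespace SymmetricGroup

open Finset

/-! ### The Cauchy identity -/

section Cauchy

variable {R S ι : Type*} [CommRing R] [CommRing S] {N : ℕ}

/-- The matrix whose column `j` lists the coefficients of `∏_{k ≠ j} (1 - y_k t)`, that is, the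
signed elementary symmetric functions of the `y_k` with `k ≠ j`. It factors the Cauchy matrix
through a Vandermonde matrix. -/
def erasedProdMatrix (y : Fin N → R) : Matrix (Fin N) (Fin N) R :=
  Matrix.of fun a j => ∑ T ∈ powersetCard (a : ℕ) (univ.erase j), ∏ k ∈ T, (-y k)

lemma map_erasedProdMatrix (f : R →+* S) (y : Fin N → R) :
    (erasedProdMatrix y).map f = erasedProdMatrix fun i => f (y i) := by
  ext a j
  simp [erasedProdMatrix]

lemma map_vandermonde (f : R →+* S) (y : Fin N → R) :
    (Matrix.vandermonde y).map f = Matrix.vandermonde fun i => f (y i) := by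
  ext i j
  simp [Matrix.vandermonde_apply]

lemma map_det_vandermonde (f : R →+* S) (y : Fin N → R) :
    f (Matrix.vandermonde y).det = (Matrix.vandermonde fun i => f (y i)).det := by
  rw [RingHom.map_det, RingHom.mapMatrix_apply, map_vandermonde]

lemma projVandermonde_mul_erasedProdMatrix (x u y : Fin N → R) :
    Matrix.projVandermonde x u * erasedProdMatrix y =
      Matrix.of fun i j => ∏ k ∈ univ.erase j, (u i - x i * y k) := by
  ext i j
  have hcard : (univ.erase j : Finset (Fin N)).card + 1 = N := by
    rw [card_erase_add_one (mem_univ _), card_univ, Fintype.card_fin]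
  have hexpand : ∏ k ∈ univ.erase j, (u i - x i * y k) =
      ∏ k ∈ univ.erase j, (x i * (-y k) + u i) := prod_congr rfl fun k _ => by ring
  simp only [Matrix.mul_apply, Matrix.projVandermonde_apply, erasedProdMatrix, Matrix.of_apply]
  rw [hexpand, prod_add, sum_powerset, hcard, ← Fin.sum_univ_eq_sum_range
    (fun a => ∑ t ∈ powersetCard a (univ.erase j), (∏ k ∈ t, x i * -y k) *
      ∏ _k ∈ univ.erase j \ t, u i)]
  refine sum_congr rfl fun a _ => ?_
  rw [mul_sum]
  refine sum_congr rfl fun T hT => ?_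
  obtain ⟨hTj, hTa⟩ := mem_powersetCard.1 hT
  have hrev : (Fin.rev a : ℕ) = (univ.erase j : Finset (Fin N)).card - a := by
    rw [Fin.val_rev]
    omega
  rw [prod_mul_distrib, prod_const, prod_const, card_sdiff_of_subset hTj, hTa, hrev]
  ring

lemma prod_prod_erase_sub (y : Fin N → R) :
    ∏ j, ∏ k ∈ univ.erase j, (y j - y k) =
      (∏ j, ∏ k ∈ Ioi j, (y j - y k)) * (Matrix.vandermonde y).det := by
  have hsplit (j : Fin N) : ∏ k ∈ univ.erase j, (y j - y k) =
      (∏ k ∈ Ioi j, (y j - y k)) * ∏ k ∈ Iio j, (y j - y k) := by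
    rw [← prod_union (disjoint_left.2 fun _ hk hk' => (mem_Ioi.1 hk).asymm (mem_Iio.1 hk'))]
    congr 1
    ext k
    simp [lt_or_lt_iff_ne, eq_comm]
  have hdet : (Matrix.vandermonde y).det = ∏ j : Fin N, ∏ k ∈ Iio j, (y j - y k) := by
    rw [Matrix.det_vandermonde]
    exact prod_comm' (by simp)
  rw [prod_congr rfl fun j _ => hsplit j, prod_mul_distrib, ← hdet]

lemma det_erasedProdMatrix_of_injective [IsDomain R] {y : Fin N → R}
    (hy : Function.Injective y) : (erasedProdMatrix y).det = (Matrix.vandermonde y).det := by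
  have hdiag : (Matrix.of fun i j => ∏ k ∈ univ.erase j, (y i - 1 * y k)) =
      Matrix.diagonal fun j => ∏ k ∈ univ.erase j, (y j - y k) := by
    ext i j
    obtain rfl | hij := eq_or_ne i j
    · simp
    · rw [Matrix.diagonal_apply_ne _ hij, Matrix.of_apply]
      exact prod_eq_zero (i := i) (mem_erase.2 ⟨hij, mem_univ _⟩) (by simp)
  have hdet := congrArg Matrix.det (projVandermonde_mul_erasedProdMatrix (fun _ => 1) y y)
  rw [Matrix.det_mul, Matrix.det_projVandermonde, hdiag, Matrix.det_diagonal,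
    prod_prod_erase_sub] at hdet
  simp only [one_mul] at hdet
  refine mul_left_cancel₀ (prod_ne_zero_iff.2 fun i _ => prod_ne_zero_iff.2 fun j hj => ?_) hdet
  exact sub_ne_zero.2 fun e => (mem_Ioi.1 hj).ne (hy e)

lemma det_erasedProdMatrix (y : Fin N → R) :
    (erasedProdMatrix y).det = (Matrix.vandermonde y).det := by
  have h := congrArg (MvPolynomial.eval₂Hom (Int.castRingHom R) y)
    (det_erasedProdMatrix_of_injective (MvPolynomial.X_injective (σ := Fin N) (R := ℤ)))
  rw [map_det_vandermonde, RingHom.map_det, RingHom.mapMatrix_apply, map_erasedProdMatrix] at h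
  simpa using h

/-- Cauchy's determinant `det (1 / (1 - x_i y_j))`, with denominators cleared. -/
lemma det_prod_erase_one_sub_mul (x y : Fin N → R) :
    (Matrix.of fun i j => ∏ k ∈ univ.erase j, (1 - x i * y k)).det =
      (Matrix.vandermonde x).det * (Matrix.vandermonde y).det := by
  rw [← projVandermonde_mul_erasedProdMatrix x (fun _ => 1) y, Matrix.det_mul,
    det_erasedProdMatrix, Matrix.vandermonde_eq_projVandermonde x]
  rfl

variable [Fintype ι]

/-- The complete homogeneous symmetric function `h_m` evaluated at the family `z`, as the sum over
the exponent vectors of degree `m`. -/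
def hsum (z : ι → R) (m : ℕ) : R :=
  ∑ l ∈ finsuppAntidiag (univ : Finset ι) m, ∏ i, z i ^ l i

/-- The geometric series `1 / (1 - z t)`, used to expand the Cauchy matrix. -/
def geomSeries (z : R) : PowerSeries R := PowerSeries.rescale z (PowerSeries.mk 1)

lemma geomSeries_mul (z : R) :
    geomSeries z * (1 - PowerSeries.C z * PowerSeries.X) = 1 := by
  have h := congrArg (PowerSeries.rescale z) (PowerSeries.mk_one_mul_one_sub_eq_one R)
  rwa [map_mul, map_sub, map_one, PowerSeries.rescale_X] at h

lemma coeff_prod_geomSeries (z : ι → R) (m : ℕ) :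
    PowerSeries.coeff m (∏ i, geomSeries (z i)) = hsum z m := by
  simp [PowerSeries.coeff_prod, hsum, geomSeries]

lemma det_vandermonde_mul_geomSeries (x y : Fin N → R) :
    PowerSeries.C ((Matrix.vandermonde x).det * (Matrix.vandermonde y).det) *
        PowerSeries.X ^ (∑ i : Fin N, (i : ℕ)) *
        ∏ ij : Fin N × Fin N, geomSeries (x ij.1 * y ij.2) =
      ∑ σ : Equiv.Perm (Fin N), (Equiv.Perm.sign σ : ℤ) • ∏ i, geomSeries (x i * y (σ i)) := by
  let x' : Fin N → PowerSeries R := fun i => PowerSeries.C (x i)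
  let y' : Fin N → PowerSeries R := fun i => PowerSeries.X * PowerSeries.C (y i)
  have hinv (i j : Fin N) : (1 - x' i * y' j) * geomSeries (x i * y j) = 1 := by
    refine Eq.trans ?_ (geomSeries_mul (x i * y j))
    simp only [x', y', map_mul]
    ring
  have hx : (Matrix.vandermonde x').det = PowerSeries.C (Matrix.vandermonde x).det :=
    (map_det_vandermonde _ x).symm
  have hy : (Matrix.vandermonde y').det =
      PowerSeries.X ^ (∑ i : Fin N, (i : ℕ)) * PowerSeries.C (Matrix.vandermonde y).det := by
    rw [map_det_vandermonde, ← prod_pow_eq_pow_sum, ← Matrix.det_mul_row]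
    congr 1
    ext1 i j
    exact mul_pow _ _ _
  have hcauchy := det_prod_erase_one_sub_mul x' y'
  rw [hx, hy, ← Matrix.det_transpose, Matrix.det_apply] at hcauchy
  rw [map_mul, mul_assoc (PowerSeries.C _), mul_comm (PowerSeries.C (Matrix.vandermonde y).det),
    ← hcauchy, sum_mul]
  refine sum_congr rfl fun σ _ => ?_
  rw [smul_mul_assoc, Fintype.prod_prod_type, ← prod_mul_distrib, Units.smul_def]
  congr 1
  refine prod_congr rfl fun i _ => ?_
  rw [Matrix.transpose_apply, Matrix.of_apply, ← mul_prod_erase univ _ (mem_univ (σ i)),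
    mul_left_comm, ← prod_mul_distrib, prod_eq_one fun k _ => hinv i k, mul_one]

lemma det_vandermonde_mul_hsum (x y : Fin N → R) (n : ℕ) :
    (Matrix.vandermonde x).det * (Matrix.vandermonde y).det *
        hsum (fun ij : Fin N × Fin N => x ij.1 * y ij.2) n =
      ∑ σ : Equiv.Perm (Fin N), (Equiv.Perm.sign σ : ℤ) •
        hsum (fun i => x i * y (σ i)) (∑ i : Fin N, (i : ℕ) + n) := by
  have h := congrArg (PowerSeries.coeff (∑ i : Fin N, (i : ℕ) + n))
    (det_vandermonde_mul_geomSeries x y)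
  rw [map_sum, mul_assoc, PowerSeries.coeff_C_mul, add_comm, PowerSeries.coeff_X_pow_mul,
    coeff_prod_geomSeries] at h
  simpa only [map_zsmul, coeff_prod_geomSeries, add_comm n] using h

end Cauchy

/-! ### Words fixed by a permutation -/

section Words

variable {α ι R : Type*} [Fintype α] [Fintype ι] [CommRing R]

/-- The content of the word `F : α → ι`: the number of occurrences of each letter, as an exponent
vector. Words have the same content exactly when a permutation of their positions relates them. -/
def content (F : α → ι) : ι →₀ ℕ := Finsupp.equivFunOnFinite.symm fun a => #{i | F i = a}

lemma content_apply (F : α → ι) (a : ι) : content F a = #{i | F i = a} := rfl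

lemma prod_eq_prod_pow_content (z : ι → R) (F : α → ι) :
    ∏ i, z (F i) = ∏ a, z a ^ content F a := by
  simp only [content_apply, ← prod_const]
  exact (prod_fiberwise' univ F z).symm

lemma mem_finsuppAntidiag_univ {l : ι →₀ ℕ} {n : ℕ} :
    l ∈ finsuppAntidiag univ n ↔ ∑ i, l i = n := by
  simp [mem_finsuppAntidiag]

lemma content_mem_finsuppAntidiag (F : α → ι) :
    content F ∈ finsuppAntidiag univ (Fintype.card α) :=
  mem_finsuppAntidiag_univ.2
    (card_eq_sum_card_fiberwise (f := F) (s := univ) (t := univ) (by simp)).symm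

lemma exists_content_eq {l : ι →₀ ℕ} (hl : l ∈ finsuppAntidiag univ (Fintype.card α)) :
    ∃ F : α → ι, content F = l := by
  rw [mem_finsuppAntidiag_univ] at hl
  let e : α ≃ Σ i, Fin (l i) := Fintype.equivOfCardEq (by simpa using hl.symm)
  refine ⟨fun i => (e i).1, ?_⟩
  ext a
  rw [content_apply, ← Fintype.card_subtype, ← Fintype.card_fin (l a)]
  exact Fintype.card_congr ((e.subtypeEquiv (q := fun s => s.1 = a) (by simp)).trans
    (Equiv.sigmaSubtype (β := fun i => Fin (l i)) a))

lemma exists_comp_eq_of_content_eq {F F' : α → ι} (h : content F = content F') :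
    ∃ g : Equiv.Perm α, F ∘ g = F' := by
  have hfiber (a : ι) : Nonempty ({i // F' i = a} ≃ {i // F i = a}) := by
    refine ⟨Fintype.equivOfCardEq ?_⟩
    rw [Fintype.card_subtype, Fintype.card_subtype]
    exact (DFunLike.congr_fun h a).symm
  let e (a : ι) := (hfiber a).some
  refine ⟨(Equiv.sigmaFiberEquiv F').symm.trans ((Equiv.sigmaCongrRight e).trans
    (Equiv.sigmaFiberEquiv F)), ?_⟩
  ext i
  exact (e (F' i) ⟨i, rfl⟩).2

lemma content_comp (F : α → ι) (g : Equiv.Perm α) : content (F ∘ g) = content F := by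
  ext a
  rw [content_apply, content_apply]
  exact card_equiv g (by simp)

variable [DecidableEq α]

lemma card_comp_eq_self {β : Type*} (F : α → β) (h : Equiv.Perm α) :
    #{g : Equiv.Perm α | (F ∘ h) ∘ g = F ∘ h} = #{g : Equiv.Perm α | F ∘ g = F ∘ h} := by
  refine card_equiv (Equiv.mulLeft h) fun g => ?_
  simp [Function.comp_assoc]

/-- Orbit-stabilizer: the words of content `l` form one orbit. -/
lemma sum_card_comp_eq_self {l : ι →₀ ℕ} (hl : l ∈ finsuppAntidiag univ (Fintype.card α)) :
    ∑ F : α → ι with content F = l, #{g : Equiv.Perm α | F ∘ g = F} =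
      (Fintype.card α).factorial := by
  obtain ⟨F₀, rfl⟩ := exists_content_eq hl
  have hcoset : ∀ F ∈ ({F : α → ι | content F = content F₀} : Finset _),
      #{g : Equiv.Perm α | F ∘ g = F} = #{g : Equiv.Perm α | F₀ ∘ g = F} := by
    intro F hF
    obtain ⟨h, rfl⟩ := exists_comp_eq_of_content_eq (mem_filter.1 hF).2.symm
    exact card_comp_eq_self F₀ h
  rw [sum_congr rfl hcoset, ← card_eq_sum_card_fiberwise (s := univ)
    (f := fun g : Equiv.Perm α => F₀ ∘ g) fun g _ => by simp [content_comp]]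
  exact Fintype.card_perm

/-- The sum of the monomials `∏ z (F i)` over the words `F` fixed by `g`. It counts fixed words by
content, and it is the power sum product attached to the cycle type of `g`. -/
def fixedWordSum (z : ι → R) (g : Equiv.Perm α) : R :=
  ∑ F : α → ι with F ∘ g = F, ∏ i, z (F i)

variable (α) in
lemma sum_fixedWordSum (z : ι → R) :
    ∑ g : Equiv.Perm α, fixedWordSum z g =
      ((Fintype.card α).factorial : R) * hsum z (Fintype.card α) := by
  have hswap : ∑ g : Equiv.Perm α, fixedWordSum z g =
      ∑ F : α → ι, (#{g : Equiv.Perm α | F ∘ g = F} : R) * ∏ i, z (F i) := by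
    simp only [fixedWordSum, sum_filter]
    rw [sum_comm]
    refine sum_congr rfl fun F _ => ?_
    rw [← sum_filter, sum_const, nsmul_eq_mul]
  rw [hswap, hsum, mul_sum, ← sum_fiberwise_of_maps_to (s := univ) (g := content)
    fun F _ => content_mem_finsuppAntidiag F]
  refine sum_congr rfl fun l hl => ?_
  rw [← sum_card_comp_eq_self hl, Nat.cast_sum, sum_mul]
  refine sum_congr rfl fun F hF => ?_
  rw [prod_eq_prod_pow_content, (mem_filter.1 hF).2]

end Words

section CycleType

variable {α ι R κ : Type*} [CommRing R]

lemma apply_eq_of_sameCycle {F : α → ι} {g : Equiv.Perm α} (hF : F ∘ g = F) {i j : α}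
    (hij : g.SameCycle i j) : F i = F j := by
  obtain ⟨m, rfl⟩ := hij
  have hg (i : α) : F (g i) = F i := congrFun hF i
  induction m generalizing i with
  | zero => simp
  | succ m ih => rw [zpow_add_one, Equiv.Perm.mul_apply, ← ih, hg]
  | pred m ih =>
    rw [zpow_sub_one, Equiv.Perm.mul_apply, ← ih, ← hg (g⁻¹ i), ← Equiv.Perm.mul_apply,
      mul_inv_cancel, Equiv.Perm.one_apply]

variable [Fintype α] [DecidableEq α]

/-- The label of a point: the cycle of `g` containing it, or the point itself if it is fixed. -/
def cycleLabel (g : Equiv.Perm α) (i : α) : g.cycleFactorsFinset ⊕ {i // g i = i} :=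
  if h : g i = i then Sum.inr ⟨i, h⟩ else
    Sum.inl ⟨g.cycleOf i, Equiv.Perm.cycleOf_mem_cycleFactorsFinset_iff.2
      (Equiv.Perm.mem_support.2 h)⟩

lemma cycleLabel_eq_inl {g : Equiv.Perm α} {i : α} {c : g.cycleFactorsFinset} :
    cycleLabel g i = Sum.inl c ↔ i ∈ (c : Equiv.Perm α).support := by
  unfold cycleLabel
  split_ifs with h
  · simp only [false_iff]
    exact fun hi =>
      Equiv.Perm.mem_support.1 (Equiv.Perm.mem_cycleFactorsFinset_support_le c.2 hi) h
  · rw [Sum.inl.injEq, Subtype.ext_iff]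
    refine ⟨fun e => ?_, fun hi => (Equiv.Perm.cycle_is_cycleOf hi c.2).symm⟩
    rw [← e, Equiv.Perm.mem_support_cycleOf_iff]
    exact ⟨Equiv.Perm.SameCycle.refl _ _, Equiv.Perm.mem_support.2 h⟩

lemma cycleLabel_eq_inr {g : Equiv.Perm α} {i : α} {c : {i // g i = i}} :
    cycleLabel g i = Sum.inr c ↔ i = c := by
  unfold cycleLabel
  split_ifs with h
  · rw [Sum.inr.injEq, Subtype.ext_iff]
  · simp only [false_iff]
    rintro rfl
    exact h c.2

lemma cycleLabel_surjective (g : Equiv.Perm α) : Function.Surjective (cycleLabel g) := by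
  rintro (c | c)
  · obtain ⟨i, hi⟩ := (Equiv.Perm.mem_cycleFactorsFinset_iff.1 c.2).1.nonempty_support
    exact ⟨i, cycleLabel_eq_inl.2 hi⟩
  · exact ⟨c, cycleLabel_eq_inr.2 rfl⟩

lemma cycleLabel_apply (g : Equiv.Perm α) (i : α) : cycleLabel g (g i) = cycleLabel g i := by
  rcases h : cycleLabel g i with c | c
  · rw [cycleLabel_eq_inl] at h ⊢
    rw [← (Equiv.Perm.mem_cycleFactorsFinset_iff.1 c.2).2 i h]
    exact Equiv.Perm.apply_mem_support.2 h
  · rw [cycleLabel_eq_inr] at h ⊢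
    rw [h, c.2]

lemma sameCycle_of_cycleLabel_eq {g : Equiv.Perm α} {i j : α}
    (hij : cycleLabel g i = cycleLabel g j) : g.SameCycle i j := by
  rcases h : cycleLabel g i with c | c
  · have h' := hij ▸ h
    rw [cycleLabel_eq_inl] at h h'
    rw [Equiv.Perm.cycle_is_cycleOf h c.2, Equiv.Perm.mem_support_cycleOf_iff] at h'
    exact h'.1
  · have h' := hij ▸ h
    rw [cycleLabel_eq_inr] at h h'
    rw [h, h']

variable [Fintype ι]

/-- The words fixed by `g` are the functions of the cycle label. -/
lemma fixedWordSum_eq_prod_cycleLabel (z : ι → R) (g : Equiv.Perm α) :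
    fixedWordSum z g = ∏ k, ∑ a, z a ^ #{i | cycleLabel g i = k} := by
  have hsurj := cycleLabel_surjective g
  rw [fixedWordSum, prod_univ_sum, Fintype.piFinset_univ]
  symm
  refine sum_bij (fun f _ => f ∘ cycleLabel g) (fun f _ => ?_)
    (fun f _ f' _ h => hsurj.injective_comp_right h) (fun F hF => ?_) (fun f _ => ?_)
  · simp only [mem_filter, mem_univ, true_and]
    ext i
    simp [cycleLabel_apply]
  · refine ⟨F ∘ Function.surjInv hsurj, mem_univ _, funext fun i => ?_⟩
    exact apply_eq_of_sameCycle (mem_filter.1 hF).2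
      (sameCycle_of_cycleLabel_eq (Function.surjInv_eq hsurj _))
  · simp only [← prod_const]
    exact prod_fiberwise' univ (cycleLabel g) fun k => z (f k)

/-- The product of the power sums `∑ z_a ^ m` over the exponents `m` in the multiset `s`. -/
def psumProd (z : ι → R) (s : Multiset ℕ) : R := (s.map fun m => ∑ a, z a ^ m).prod

lemma psumProd_zero (z : ι → R) : psumProd z 0 = 1 := rfl

lemma psumProd_cons (z : ι → R) (m : ℕ) (s : Multiset ℕ) :
    psumProd z (m ::ₘ s) = (∑ a, z a ^ m) * psumProd z s := by
  rw [psumProd, Multiset.map_cons, Multiset.prod_cons, psumProd]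

lemma psumProd_add (z : ι → R) (s t : Multiset ℕ) :
    psumProd z (s + t) = psumProd z s * psumProd z t := by
  rw [psumProd, Multiset.map_add, Multiset.prod_add, psumProd, psumProd]

lemma fixedWordSum_eq_psumProd (z : ι → R) (g : Equiv.Perm α) :
    fixedWordSum z g = psumProd z g.partition.parts := by
  rw [fixedWordSum_eq_prod_cycleLabel, Fintype.prod_sum_type]
  simp only [cycleLabel_eq_inl, cycleLabel_eq_inr]
  rw [psumProd, Equiv.Perm.parts_partition, Multiset.map_add, Multiset.prod_add,
    Equiv.Perm.cycleType_def, Multiset.map_map]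
  congr 1
  · rw [prod_coe_sort g.cycleFactorsFinset (fun c => ∑ a, z a ^ #{i | i ∈ c.support})]
    refine prod_congr rfl fun c _ => ?_
    simp only [filter_mem_eq_inter, univ_inter, Function.comp]
  · have hcard (c : {i // g i = i}) : #{i | i = (c : α)} = 1 := by simp [filter_eq']
    simp only [hcard, prod_const, Multiset.map_replicate, Multiset.prod_replicate]
    congr 1
    rw [card_univ, Fintype.card_subtype, ← card_compl]
    congr 1
    ext i
    simp

variable [Fintype κ]

lemma psumProd_mul (x : ι → R) (y : κ → R) (s : Multiset ℕ) :
    psumProd (fun ij : ι × κ => x ij.1 * y ij.2) s = psumProd x s * psumProd y s := by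
  rw [psumProd, psumProd, psumProd, ← Multiset.prod_map_mul]
  congr 1
  refine Multiset.map_congr rfl fun m _ => ?_
  rw [sum_mul_sum, Fintype.sum_prod_type]
  simp [mul_pow]

end CycleType

/-! ### Frobenius' formula and orthonormality -/

section Frobenius

open MvPolynomial

variable {N n : ℕ} {R : Type*} [CommRing R]

/-- A function on `Fin N` as an exponent vector of monomials in `N` variables. -/
abbrev exponent (w : Fin N → ℕ) : Fin N →₀ ℕ := Finsupp.equivFunOnFinite.symm w

variable (N R) in
/-- The Vandermonde determinant in the variables of the polynomial ring. -/
def vandermondePoly : MvPolynomial (Fin N) R := (Matrix.vandermonde X).det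

variable (R) in
/-- The alternant `∑_σ sign σ X ^ (w ∘ σ)`, whose quotient by the Vandermonde determinant is the
Schur function of `w - δ` when `w` is decreasing. -/
def alternant (w : Fin N → ℕ) : MvPolynomial (Fin N) R :=
  ∑ σ : Equiv.Perm (Fin N), (Equiv.Perm.sign σ : ℤ) • monomial (exponent (w ∘ σ)) 1

/-- The coefficient of `X ^ w` in `vandermondePoly * f`. For symmetric `f` and decreasing `w` it is
the multiplicity in `f` of the Schur function of `w - δ`. -/
def alternantCoeff (w : Fin N → ℕ) : MvPolynomial (Fin N) R →ₗ[R] R :=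
  lcoeff R (exponent w) ∘ₗ LinearMap.mulLeft R (vandermondePoly N R)

lemma alternantCoeff_apply (w : Fin N → ℕ) (f : MvPolynomial (Fin N) R) :
    alternantCoeff w f = coeff (exponent w) (vandermondePoly N R * f) := rfl

variable (N R) in
/-- The product of the power sums `p_m` over the exponents `m` in `s`, in the variables of the
polynomial ring. -/
abbrev psumPoly (s : Multiset ℕ) : MvPolynomial (Fin N) R := psumProd X s

lemma prod_X_pow (w : Fin N → ℕ) :
    ∏ i, (X i : MvPolynomial (Fin N) R) ^ w i = monomial (exponent w) 1 := by
  rw [monomial_eq, Finsupp.prod_fintype _ _ (by simp)]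
  simp

lemma mapDomain_exponent_comp (w : Fin N → ℕ) (σ τ : Equiv.Perm (Fin N)) :
    Finsupp.mapDomain τ (exponent (w ∘ σ)) = exponent (w ∘ (σ * τ⁻¹)) := by
  rw [← Finsupp.equivMapDomain_eq_mapDomain]
  ext i
  simp [Finsupp.equivMapDomain]

lemma vandermondePoly_eq_alternant :
    vandermondePoly N R = alternant R fun i : Fin N => (i : ℕ) := by
  rw [vandermondePoly, ← Matrix.det_transpose, Matrix.det_apply, alternant]
  refine sum_congr rfl fun σ _ => ?_
  rw [Units.smul_def, ← prod_X_pow]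
  simp [Matrix.vandermonde_apply]

lemma vandermondePoly_ne_zero [IsDomain R] : vandermondePoly N R ≠ 0 :=
  Matrix.det_vandermonde_ne_zero_iff.2 X_injective

lemma psumPoly_isSymmetric (s : Multiset ℕ) : (psumPoly N R s).IsSymmetric := by
  induction s using Multiset.induction_on with
  | empty => simp [IsSymmetric, psumProd_zero]
  | cons a s ih =>
    rw [psumPoly, psumProd_cons]
    exact (psum_isSymmetric _ _ a).mul ih

lemma rename_alternant (w : Fin N → ℕ) (τ : Equiv.Perm (Fin N)) :
    rename τ (alternant R w) = (Equiv.Perm.sign τ : ℤ) • alternant R w := by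
  rw [alternant, map_sum, smul_sum]
  refine Fintype.sum_equiv (Equiv.mulRight τ⁻¹) _ _ fun σ => ?_
  rw [map_zsmul, rename_monomial, mapDomain_exponent_comp, Equiv.coe_mulRight, smul_smul,
    Equiv.Perm.sign_mul, Equiv.Perm.sign_inv, mul_comm (Equiv.Perm.sign σ), ← Units.val_mul,
    ← mul_assoc, Int.units_mul_self, one_mul, Equiv.Perm.coe_mul]

lemma alternantCoeff_comp (w : Fin N → ℕ) (τ : Equiv.Perm (Fin N)) {f : MvPolynomial (Fin N) R}
    (hf : f.IsSymmetric) :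
    alternantCoeff (w ∘ τ) f = (Equiv.Perm.sign τ : ℤ) • alternantCoeff w f := by
  have hrename : rename τ (vandermondePoly N R * f) =
      (Equiv.Perm.sign τ : ℤ) • (vandermondePoly N R * f) := by
    rw [map_mul, hf τ, vandermondePoly_eq_alternant, rename_alternant, smul_mul_assoc]
  have hcoeff := coeff_rename_mapDomain τ τ.injective (vandermondePoly N R * f) (exponent (w ∘ τ))
  rw [mapDomain_exponent_comp, mul_inv_cancel, hrename] at hcoeff
  rw [alternantCoeff_apply, alternantCoeff_apply, ← hcoeff, coeff_smul]
  rfl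

lemma alternantCoeff_eq_zero [IsAddTorsionFree R] {w : Fin N → ℕ} (hw : ¬ Function.Injective w)
    {f : MvPolynomial (Fin N) R} (hf : f.IsSymmetric) : alternantCoeff w f = 0 := by
  simp only [Function.Injective, not_forall] at hw
  obtain ⟨i, j, hij, hne⟩ := hw
  have hswap : w ∘ Equiv.swap i j = w := by
    rw [Equiv.comp_swap_eq_update, hij, Function.update_eq_self, ← hij, Function.update_eq_self]
  have h := alternantCoeff_comp w (Equiv.swap i j) hf
  rw [hswap, Equiv.Perm.sign_swap hne] at h
  exact self_eq_neg.1 (by simpa using h)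

lemma coeff_alternant (w v : Fin N → ℕ) :
    coeff (exponent v) (alternant R w) = ∑ σ : Equiv.Perm (Fin N),
      if w ∘ σ = v then ((Equiv.Perm.sign σ : ℤ) : R) else 0 := by
  rw [alternant, coeff_sum]
  refine sum_congr rfl fun σ _ => ?_
  rw [coeff_smul, coeff_monomial]
  simp only [Equiv.apply_eq_iff_eq]
  split_ifs <;> simp

lemma prod_C_X_mul_X_pow (σ : Equiv.Perm (Fin N)) (l : Fin N →₀ ℕ) :
    ∏ i, (C (X i) * X (σ i) : MvPolynomial (Fin N) (MvPolynomial (Fin N) R)) ^ l i =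
      monomial (exponent (l ∘ σ.symm)) (monomial (exponent l) 1) := by
  simp only [mul_pow, prod_mul_distrib]
  rw [← mul_one (monomial (exponent l) (1 : R)), ← C_mul_monomial, ← prod_X_pow, ← prod_X_pow,
    map_prod]
  congr 1
  · simp
  · exact Fintype.prod_equiv σ _ _ fun i => by simp

lemma coeff_hsum_C_X_mul_X (w : Fin N → ℕ) (σ : Equiv.Perm (Fin N)) :
    coeff (exponent w) (hsum (fun i => (C (X i) * X (σ i) :
      MvPolynomial (Fin N) (MvPolynomial (Fin N) R))) (∑ i, w i)) =
      monomial (exponent (w ∘ σ)) 1 := by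
  rw [hsum, sum_congr rfl fun l _ => prod_C_X_mul_X_pow σ l, coeff_sum]
  simp only [coeff_monomial, Equiv.apply_eq_iff_eq]
  rw [sum_eq_single (exponent (w ∘ σ))]
  · rw [if_pos (_root_.funext fun i => by simp)]
    rfl
  · intro l _ hl
    refine if_neg ?_
    rintro rfl
    exact hl (by ext i; simp)
  · refine fun h => absurd (mem_finsuppAntidiag_univ.2 ?_) h
    exact Fintype.sum_equiv σ _ _ fun i => by simp

lemma map_psumProd {ι R S : Type*} [Fintype ι] [CommRing R] [CommRing S] (f : R →+* S) (z : ι → R)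
    (s : Multiset ℕ) : f (psumProd z s) = psumProd (fun i => f (z i)) s := by
  simp [psumProd, map_multiset_prod]

/-- The Cauchy identity in two sets of variables, the second set being that of the outer
polynomial ring. -/
lemma C_vandermondePoly_mul_sum_psumPoly (n : ℕ) :
    C (vandermondePoly N R) * map C (vandermondePoly N R) * ∑ g : Equiv.Perm (Fin n),
      C (psumPoly N R g.partition.parts) * map C (psumPoly N R g.partition.parts) =
    (n.factorial : MvPolynomial (Fin N) (MvPolynomial (Fin N) R)) *
      ∑ σ : Equiv.Perm (Fin N), (Equiv.Perm.sign σ : ℤ) •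
        hsum (fun i => (C (X i) * X (σ i) : MvPolynomial (Fin N) (MvPolynomial (Fin N) R)))
          (∑ i : Fin N, (i : ℕ) + n) := by
  let x (i : Fin N) : MvPolynomial (Fin N) (MvPolynomial (Fin N) R) := C (X i)
  let y (i : Fin N) : MvPolynomial (Fin N) (MvPolynomial (Fin N) R) := X i
  have hx : C (vandermondePoly N R) = (Matrix.vandermonde x).det :=
    map_det_vandermonde (C : _ →+* MvPolynomial (Fin N) (MvPolynomial (Fin N) R)) _
  have hy : map C (vandermondePoly N R) = (Matrix.vandermonde y).det := by
    rw [vandermondePoly, map_det_vandermonde]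
    simp only [map_X, y]
  have hg (g : Equiv.Perm (Fin n)) :
      C (psumPoly N R g.partition.parts) * map C (psumPoly N R g.partition.parts) =
        fixedWordSum (fun ij : Fin N × Fin N => x ij.1 * y ij.2) g := by
    rw [fixedWordSum_eq_psumProd, psumProd_mul, map_psumProd, map_psumProd]
    simp only [map_X, x, y]
  rw [hx, hy, sum_congr rfl fun g _ => hg g, sum_fixedWordSum, Fintype.card_fin, mul_left_comm,
    det_vandermonde_mul_hsum x y n]

/-- Frobenius' formula in dual form: the characteristic polynomial of the class function
`g ↦ alternantCoeff w p_g` is the Schur function `alternant w / vandermondePoly`. -/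
lemma vandermondePoly_mul_sum_alternantCoeff {w : Fin N → ℕ}
    (hw : ∑ i, w i = ∑ i : Fin N, (i : ℕ) + n) :
    vandermondePoly N R * ∑ g : Equiv.Perm (Fin n),
      C (alternantCoeff w (psumPoly N R g.partition.parts)) * psumPoly N R g.partition.parts =
      (n.factorial : R) • alternant R w := by
  have h := congrArg (coeff (exponent w)) (C_vandermondePoly_mul_sum_psumPoly (N := N) (R := R) n)
  rw [mul_assoc, mul_sum, mul_sum, coeff_sum, ← map_natCast (C : MvPolynomial (Fin N) R →+* _),
    coeff_C_mul, coeff_sum] at h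
  rw [mul_sum]
  refine Eq.trans (sum_congr rfl fun g _ => ?_) (h.trans ?_)
  · rw [mul_left_comm (map C (vandermondePoly N R)), coeff_C_mul, coeff_C_mul, ← RingHom.map_mul,
      coeff_map, alternantCoeff_apply]
    ring
  · rw [alternant, Nat.cast_smul_eq_nsmul, nsmul_eq_mul]
    refine congrArg (fun t => (n.factorial : MvPolynomial (Fin N) R) * t)
      (sum_congr rfl fun σ _ => ?_)
    rw [coeff_smul, ← hw, coeff_hsum_C_X_mul_X]

/-- The value at the cycle type `s` of the virtual character of exponent vector `w`. By Frobenius'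
formula this is a coefficient of `vandermondePoly` times the power sum product of `s`. -/
def frobeniusValue (w : Fin N → ℕ) (s : Multiset ℕ) : ℂ := alternantCoeff w (psumPoly N ℂ s)

/-- The virtual character of the symmetric group of exponent vector `w`. It is irreducible up to
sign or zero. -/
def frobeniusChar (n : ℕ) (w : Fin N → ℕ) (g : Equiv.Perm (Fin n)) : ℂ :=
  frobeniusValue w g.partition.parts

lemma vandermondePoly_mul_sum_frobeniusChar {w : Fin N → ℕ}
    (hw : ∑ i, w i = ∑ i : Fin N, (i : ℕ) + n) :
    vandermondePoly N ℂ * ∑ g : Equiv.Perm (Fin n),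
      C (frobeniusChar n w g) * psumPoly N ℂ g.partition.parts =
      (n.factorial : ℂ) • alternant ℂ w :=
  vandermondePoly_mul_sum_alternantCoeff hw

lemma sum_frobeniusChar_mul_frobeniusChar {w : Fin N → ℕ} (v : Fin N → ℕ)
    (hw : ∑ i, w i = ∑ i : Fin N, (i : ℕ) + n) :
    ∑ g : Equiv.Perm (Fin n), frobeniusChar n w g * frobeniusChar n v g = (n.factorial : ℂ) *
      ∑ σ : Equiv.Perm (Fin N), if w ∘ σ = v then ((Equiv.Perm.sign σ : ℤ) : ℂ) else 0 := by
  have h := congrArg (coeff (exponent v)) (vandermondePoly_mul_sum_frobeniusChar hw)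
  rw [coeff_smul, coeff_alternant, mul_sum, coeff_sum] at h
  rw [← smul_eq_mul (n.factorial : ℂ), ← h]
  refine sum_congr rfl fun g _ => ?_
  rw [mul_left_comm, coeff_C_mul]
  rfl

end Frobenius

/-! ### Linear independence of power sum products -/

section LinearIndependence

open MvPolynomial

section Weight

variable {κ ι R : Type*} [Fintype κ]

/-- The exponent vector of the monomial `∏ k, X (F k) ^ f k`. -/
def monomialWeight (f : κ → ℕ) (F : κ → ι) : ι →₀ ℕ := ∑ k, Finsupp.single (F k) (f k)

lemma coeff_psumProd_X [DecidableEq κ] [Fintype ι] [DecidableEq ι] [CommRing R]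
    (f : κ → ℕ) (m : ι →₀ ℕ) :
    coeff m (psumProd (X : ι → MvPolynomial ι R) (univ.val.map f)) =
      (#{F : κ → ι | monomialWeight f F = m} : R) := by
  have hmonomial (F : κ → ι) : ∏ k, (X (F k) : MvPolynomial ι R) ^ f k =
      monomial (monomialWeight f F) 1 := by
    simp only [X_pow_eq_monomial, monomialWeight, monomial_sum_one]
  have hprod : psumProd (X : ι → MvPolynomial ι R) (univ.val.map f) =
      ∏ k, ∑ a, X a ^ f k := by
    rw [psumProd, Multiset.map_map]
    rfl
  rw [hprod, prod_univ_sum, Fintype.piFinset_univ, sum_congr rfl fun F _ => hmonomial F, coeff_sum]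
  simp [coeff_monomial]

lemma support_monomialWeight_subset (f : κ → ℕ) (F : κ → ι) :
    (monomialWeight f F).support ⊆ univ.image F := by
  intro i hi
  rw [Finsupp.mem_support_iff, monomialWeight, Finsupp.finsetSum_apply] at hi
  obtain ⟨k, -, hk⟩ := exists_ne_zero_of_sum_ne_zero hi
  exact mem_image.2 ⟨k, mem_univ k, by_contra fun h => hk (Finsupp.single_eq_of_ne (Ne.symm h))⟩

lemma card_support_monomialWeight_le (f : κ → ℕ) (F : κ → ι) :
    #(monomialWeight f F).support ≤ Fintype.card κ :=
  (card_le_card (support_monomialWeight_subset f F)).trans card_image_le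

lemma monomialWeight_apply_of_injective (f : κ → ℕ) {F : κ → ι} (hF : Function.Injective F)
    (k : κ) : monomialWeight f F (F k) = f k := by
  rw [monomialWeight, Finsupp.finsetSum_apply, Fintype.sum_eq_single k, Finsupp.single_eq_same]
  exact fun j hj => Finsupp.single_eq_of_ne fun h => hj (hF h).symm

lemma card_support_monomialWeight_of_injective {f : κ → ℕ} (hf : ∀ k, f k ≠ 0) {F : κ → ι}
    (hF : Function.Injective F) : #(monomialWeight f F).support = Fintype.card κ := by
  refine (card_support_monomialWeight_le f F).antisymm ?_
  rw [← card_univ, ← card_image_of_injective univ hF]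
  refine card_le_card fun i hi => ?_
  obtain ⟨k, -, rfl⟩ := mem_image.1 hi
  rw [Finsupp.mem_support_iff, monomialWeight_apply_of_injective f hF]
  exact hf k

lemma map_support_monomialWeight {f : κ → ℕ} {F : κ → ι}
    (h : #(monomialWeight f F).support = Fintype.card κ) :
    (monomialWeight f F).support.val.map (monomialWeight f F) = univ.val.map f := by
  have hle : #(univ.image F) ≤ #(monomialWeight f F).support := card_image_le.trans h.ge
  have hsupp := eq_of_subset_of_card_le (support_monomialWeight_subset f F) hle
  have hF : Function.Injective F := by
    rw [← Set.injOn_univ, ← coe_univ, ← card_image_iff, ← hsupp, h, card_univ]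
  rw [hsupp, image_val_of_injOn hF.injOn, Multiset.map_map]
  exact Multiset.map_congr rfl fun k _ => monomialWeight_apply_of_injective f hF k

end Weight

variable {R : Type*} [CommRing R] [CharZero R] {N : ℕ}

lemma exists_map_univ_eq {β : Type*} (s : Multiset β) :
    ∃ (k : ℕ) (f : Fin k → β), univ.val.map f = s :=
  Quotient.inductionOn s fun l => ⟨l.length, l.get, by simp⟩

/-- Triangularity: a monomial of the power sum product of `s` involves at most as many variables as
`s` has elements, with equality only if `s` lists its exponents. -/
lemma card_support_le_of_coeff_psumPoly_ne_zero {s : Multiset ℕ} {m : Fin N →₀ ℕ}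
    (hm : coeff m (psumPoly N R s) ≠ 0) :
    #m.support ≤ s.card ∧ (#m.support = s.card → m.support.val.map m = s) := by
  obtain ⟨k, f, rfl⟩ := exists_map_univ_eq s
  rw [coeff_psumProd_X, Nat.cast_ne_zero, card_ne_zero] at hm
  obtain ⟨F, hF⟩ := hm
  obtain rfl := (mem_filter.1 hF).2
  rw [Multiset.card_map, card_val, card_univ]
  exact ⟨card_support_monomialWeight_le f F, map_support_monomialWeight⟩

lemma exists_coeff_psumPoly_ne_zero {s : Multiset ℕ} (hs : ∀ a ∈ s, a ≠ 0) (hN : s.card ≤ N) :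
    ∃ m : Fin N →₀ ℕ, coeff m (psumPoly N R s) ≠ 0 ∧ #m.support = s.card := by
  obtain ⟨k, f, rfl⟩ := exists_map_univ_eq s
  rw [Multiset.card_map, card_val, card_univ] at hN ⊢
  obtain ⟨F⟩ : Nonempty (Fin k ↪ Fin N) :=
    Function.Embedding.nonempty_of_card_le (by simpa using hN)
  refine ⟨monomialWeight f F, ?_, card_support_monomialWeight_of_injective (fun i => hs _ ?_)
    F.injective⟩
  · rw [coeff_psumProd_X, Nat.cast_ne_zero, card_ne_zero]
    exact ⟨F, by simp⟩
  · exact Multiset.mem_map_of_mem f (mem_univ i)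

lemma card_parts_le {d : ℕ} (l : Nat.Partition d) : l.parts.card ≤ d := by
  simpa [l.parts_sum] using Multiset.card_nsmul_le_sum (a := 1) fun _ hx => l.parts_pos hx

lemma linearIndependent_psumPoly [IsDomain R] {d : ℕ} (hd : d ≤ N) :
    LinearIndependent R fun l : Nat.Partition d => psumPoly N R l.parts := by
  rw [Fintype.linearIndependent_iff]
  intro c hc
  by_contra! hne
  obtain ⟨l₁, hl₁⟩ := hne
  obtain ⟨l₀, hl₀, hmax⟩ := exists_max_image {l : Nat.Partition d | c l ≠ 0}
    (fun l => l.parts.card) ⟨l₁, by simpa using hl₁⟩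
  obtain ⟨m, hm, hcard⟩ := exists_coeff_psumPoly_ne_zero (R := R) (N := N)
    (fun a ha => (l₀.parts_pos ha).ne') ((card_parts_le l₀).trans hd)
  have hparts := (card_support_le_of_coeff_psumPoly_ne_zero hm).2 hcard
  have hcoeff := congrArg (coeff m) hc
  rw [coeff_sum, sum_eq_single l₀, coeff_smul, smul_eq_mul] at hcoeff
  · exact mul_ne_zero (mem_filter.1 hl₀).2 hm hcoeff
  · intro l _ hl
    rw [coeff_smul, smul_eq_mul]
    by_contra hprod
    obtain ⟨hle, heq⟩ :=
      card_support_le_of_coeff_psumPoly_ne_zero (right_ne_zero_of_mul hprod)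
    have hl_le := hmax l (by simpa using left_ne_zero_of_mul hprod)
    exact hl (Nat.Partition.ext ((heq (by omega)).symm.trans hparts))
  · simp

end LinearIndependence

/-! ### Generalized characters of finite groups -/

lemma trace_eq_add_of_isCompl {K V : Type*} [Field K] [AddCommGroup V] [Module K V]
    [FiniteDimensional K V] (f : V →ₗ[K] V) {P Q : Submodule K V} (h : IsCompl P Q)
    (hP : ∀ x ∈ P, f x ∈ P) (hQ : ∀ x ∈ Q, f x ∈ Q) :
    LinearMap.trace K V f = LinearMap.trace K P (f.restrict hP) +
      LinearMap.trace K Q (f.restrict hQ) := by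
  rw [← LinearMap.trace_prodMap',
    ← LinearMap.trace_conj' ((f.restrict hP).prodMap (f.restrict hQ)) (P.prodEquivOfIsCompl Q h)]
  congr 1
  ext x
  obtain ⟨y, rfl⟩ := (P.prodEquivOfIsCompl Q h).surjective x
  simp [LinearEquiv.conj_apply]

lemma exists_isCompl_of_not_isIrreducible {K G V : Type*} [Field K] [Group G] [Finite G]
    [NeZero (Nat.card G : K)] [AddCommGroup V] [Module K V] [Nontrivial V]
    {ρ : Representation K G V} (hρ : ¬ρ.IsIrreducible) :
    ∃ P Q : Subrepresentation ρ,
      IsCompl P.toSubmodule Q.toSubmodule ∧ P.toSubmodule ≠ ⊥ ∧ P.toSubmodule ≠ ⊤ := by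
  obtain ⟨P, hbot, htop⟩ : ∃ P : Subrepresentation ρ, P ≠ ⊥ ∧ P ≠ ⊤ := by
    by_contra! h
    have : Nontrivial (Subrepresentation ρ) :=
      ⟨⊥, ⊤, fun e => bot_ne_top (α := Submodule K V) (congrArg Subrepresentation.toSubmodule e)⟩
    exact hρ ⟨fun P => or_iff_not_imp_left.2 (h P)⟩
  obtain ⟨Q, hQ⟩ := exists_isCompl P
  refine ⟨P, Q, IsCompl.of_eq (congrArg Subrepresentation.toSubmodule hQ.inf_eq_bot)
    (congrArg Subrepresentation.toSubmodule hQ.sup_eq_top), fun h => hbot ?_, fun h => htop ?_⟩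
  · exact Subrepresentation.toSubmodule_injective h
  · exact Subrepresentation.toSubmodule_injective h

section Characters

variable {G : Type} [Group G]

lemma character_ofMulAction (Y : Type) [Finite Y] [MulAction G Y] (g : G) :
    (Representation.ofMulAction ℂ G Y).character g = Nat.card (MulAction.fixedBy Y g) := by
  have : Fintype Y := Fintype.ofFinite Y
  rw [Representation.character, LinearMap.trace_eq_matrix_trace ℂ (MonoidAlgebra.basis Y ℂ),
    Matrix.trace]
  simp only [Matrix.diag_apply, LinearMap.toMatrix_apply, MonoidAlgebra.basis_apply,
    Representation.ofMulAction_single]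
  simp only [← MonoidAlgebra.basis_apply, Module.Basis.repr_self, Finsupp.single_apply]
  rw [sum_boole, ← Nat.subtype_card (p := (· ∈ MulAction.fixedBy Y g)) _ (by simp)]

section Finite

variable [Finite G]

lemma card_ne_zero : (Nat.card G : ℂ) ≠ 0 := Nat.cast_ne_zero.2 Nat.card_pos.ne'

lemma character_mem_irrChar {V : Type} [AddCommGroup V] [Module ℂ V] [FiniteDimensional ℂ V]
    (ρ : Representation ℂ G V) [ρ.IsIrreducible] : ρ.character ∈ IrrChar G := by
  let : Invertible (Nat.card G : ℂ) := invertibleOfNonzero card_ne_zero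
  have : Fintype G := Fintype.ofFinite G
  refine ⟨FDRep.of ρ, (FDRep.simple_iff_char_is_norm_one _).2 ?_, rfl⟩
  have h := Representation.char_orthonormal ρ ρ
  rwa [if_pos ⟨Representation.Equiv.refl ρ⟩, inv_mul_eq_iff_eq_mul₀ card_ne_zero, mul_one] at h

theorem character_mem_span_irrChar {V : Type} [AddCommGroup V] [Module ℂ V]
    [FiniteDimensional ℂ V] (ρ : Representation ℂ G V) :
    ρ.character ∈ Submodule.span ℤ (IrrChar G) := by
  induction hd : Module.finrank ℂ V using Nat.strong_induction_on generalizing V with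
  | _ d ih =>
    by_cases hirr : ρ.IsIrreducible
    · exact Submodule.subset_span (character_mem_irrChar ρ)
    rcases subsingleton_or_nontrivial V with hV | hV
    · have hzero : ρ.character = 0 := by
        ext g
        rw [Representation.character, Subsingleton.elim (ρ g) 0, map_zero, Pi.zero_apply]
      exact hzero ▸ zero_mem _
    have : NeZero (Nat.card G : ℂ) := ⟨card_ne_zero⟩
    obtain ⟨P, Q, hPQ, hbot, htop⟩ := exists_isCompl_of_not_isIrreducible hirr
    have hadd := Submodule.finrank_add_eq_of_isCompl hPQ
    have hPpos : 0 < Module.finrank ℂ P.toSubmodule := by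
      rwa [Module.finrank_pos_iff, Submodule.nontrivial_iff_ne_bot]
    have hPlt := Submodule.finrank_lt htop
    have hchar : ρ.character = P.toRepresentation.character + Q.toRepresentation.character := by
      ext g
      exact trace_eq_add_of_isCompl (ρ g) hPQ (P.apply_mem_toSubmodule g)
        (Q.apply_mem_toSubmodule g)
    rw [hchar]
    exact add_mem (ih _ (by omega) _ rfl) (ih _ (by omega) _ rfl)

lemma card_fixedBy_mem_span_irrChar (Y : Type) [Finite Y] [MulAction G Y] :
    (fun g : G => (Nat.card (MulAction.fixedBy Y g) : ℂ)) ∈ Submodule.span ℤ (IrrChar G) := by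
  simpa only [← character_ofMulAction] using
    character_mem_span_irrChar (Representation.ofMulAction ℂ G Y)

end Finite

section Pairing

variable [Fintype G]

/-- The bilinear form `(1/|G|) ∑ a(g) b(g⁻¹)` on functions on `G`, which agrees with the Hermitian
scalar product on characters. -/
def charPairing (a b : G → ℂ) : ℂ := (Nat.card G : ℂ)⁻¹ * ∑ g : G, a g * b g⁻¹

lemma charPairing_comm (a b : G → ℂ) : charPairing a b = charPairing b a := by
  rw [charPairing, charPairing, ← Equiv.sum_comp (Equiv.inv G) fun g => a g * b g⁻¹]
  simp [mul_comm]

lemma charPairing_neg_left (a b : G → ℂ) : charPairing (-a) b = -charPairing a b := by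
  simp [charPairing]

lemma charPairing_neg_right (a b : G → ℂ) : charPairing a (-b) = -charPairing a b := by
  rw [charPairing_comm, charPairing_neg_left, charPairing_comm]

lemma charPairing_sum_smul_left {ι R : Type*} [CommRing R] [Algebra R ℂ] (s : Finset ι) (c : ι → R)
    (a : ι → G → ℂ) (b : G → ℂ) :
    charPairing (∑ i ∈ s, c i • a i) b = ∑ i ∈ s, c i • charPairing (a i) b := by
  simp only [charPairing, Finset.sum_apply, Pi.smul_apply, sum_mul, mul_sum, smul_sum,
    smul_mul_assoc, mul_smul_comm]
  exact sum_comm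

theorem charPairing_irrChar {a b : G → ℂ} (ha : a ∈ IrrChar G) (hb : b ∈ IrrChar G) :
    charPairing a b = if a = b then 1 else 0 := by
  let : Invertible (Nat.card G : ℂ) := invertibleOfNonzero card_ne_zero
  obtain ⟨V, hV, rfl⟩ := ha
  obtain ⟨W, hW, rfl⟩ := hb
  split_ifs with h
  · rw [← h, charPairing, (FDRep.simple_iff_char_is_norm_one V).1 hV,
      inv_mul_cancel₀ card_ne_zero]
  · refine (FDRep.char_orthonormal V W).trans (if_neg ?_)
    rintro ⟨i⟩
    exact h (FDRep.char_iso i)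

lemma exists_eq_one_or_neg_one_of_sum_sq_eq_one {ι : Type*} {t : Finset ι} {c : ι → ℤ}
    (h : ∑ a ∈ t, c a ^ 2 = 1) :
    ∃ b ∈ t, (c b = 1 ∨ c b = -1) ∧ ∀ a ∈ t, a ≠ b → c a = 0 := by
  obtain ⟨b, hb, hcb⟩ : ∃ b ∈ t, c b ≠ 0 := by
    by_contra! h0
    rw [sum_eq_zero fun a ha => by rw [h0 a ha]; rfl] at h
    exact zero_ne_one h
  rw [← add_sum_erase t _ hb] at h
  have hrest : 0 ≤ ∑ a ∈ t.erase b, c a ^ 2 := sum_nonneg fun a _ => sq_nonneg _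
  have hpos : 0 < c b ^ 2 := by positivity
  refine ⟨b, hb, sq_eq_one_iff.1 (by omega), fun a ha hab => ?_⟩
  have hzero : ∑ a ∈ t.erase b, c a ^ 2 = 0 := by omega
  exact pow_eq_zero_iff two_ne_zero |>.1
    ((sum_eq_zero_iff_of_nonneg fun a _ => sq_nonneg _).1 hzero a (mem_erase.2 ⟨hab, ha⟩))

theorem mem_irrChar_or_neg_mem_irrChar {θ : G → ℂ} (hθ : θ ∈ Submodule.span ℤ (IrrChar G))
    (hnorm : charPairing θ θ = 1) : θ ∈ IrrChar G ∨ -θ ∈ IrrChar G := by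
  obtain ⟨c, t, ht, -, rfl⟩ := Submodule.mem_span_iff_exists_finset_subset.1 hθ
  have hcoeff : ∀ b ∈ t, charPairing b (∑ a ∈ t, c a • a) = c b := by
    intro b hb
    rw [charPairing_comm, charPairing_sum_smul_left t c (fun a => a) b]
    rw [sum_congr rfl fun a ha => by rw [charPairing_irrChar (ht ha) (ht hb)]]
    simp [hb]
  rw [charPairing_sum_smul_left t c (fun a => a),
    sum_congr rfl fun a ha => by rw [hcoeff a ha, zsmul_eq_mul, ← sq]] at hnorm
  obtain ⟨b, hb, hcb, hzero⟩ := exists_eq_one_or_neg_one_of_sum_sq_eq_one (by exact_mod_cast hnorm)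
  rw [sum_eq_single_of_mem b hb fun a ha hab => by rw [hzero a ha hab, zero_smul]]
  rcases hcb with h | h
  · exact Or.inl (by rw [h, one_smul]; exact ht hb)
  · exact Or.inr (by rw [h, neg_smul, one_smul, neg_neg]; exact ht hb)

end Pairing

variable [Finite G]

theorem linearIndependent_irrChar : LinearIndependent ℂ (Subtype.val : IrrChar G → G → ℂ) := by
  have : Fintype G := Fintype.ofFinite G
  rw [linearIndependent_iff']
  intro s c hc b hb
  have hpair := charPairing_sum_smul_left s c Subtype.val b.1
  rw [hc, sum_congr rfl fun a _ => by rw [charPairing_irrChar a.2 b.2]] at hpair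
  simpa [charPairing, Subtype.coe_inj, hb] using hpair.symm

lemma exists_apply_one_eq_natCast {ψ : G → ℂ} (hψ : ψ ∈ IrrChar G) :
    ∃ k : ℕ, 0 < k ∧ ψ 1 = k := by
  have : Fintype G := Fintype.ofFinite G
  have hself := charPairing_irrChar hψ hψ
  obtain ⟨V, -, rfl⟩ := hψ
  refine ⟨Module.finrank ℂ V, Nat.pos_of_ne_zero fun h => ?_, FDRep.char_one V⟩
  have : Subsingleton V := Module.finrank_zero_iff.1 h
  have hzero (g : G) : V.character g = 0 := by
    rw [FDRep.character, Subsingleton.elim (V.ρ g) 0, map_zero]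
  simp [charPairing, hzero] at hself

end Characters

/-! ### The Frobenius class functions are generalized characters -/

open MvPolynomial

/-- The action of `S_n` by place permutations on the words of content `α`. -/
abbrev wordAction {N n : ℕ} (α : Fin N →₀ ℕ) :
    MulAction (Equiv.Perm (Fin n)) {F : Fin n → Fin N // content F = α} where
  smul g F := ⟨F.1 ∘ (g⁻¹ : Equiv.Perm (Fin n)), by rw [content_comp, F.2]⟩
  one_smul F := Subtype.ext rfl
  mul_smul g h F := Subtype.ext rfl

lemma coeff_psumPoly_partition {N n : ℕ} (α : Fin N →₀ ℕ) (g : Equiv.Perm (Fin n)) :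
    coeff α (psumPoly N ℂ g.partition.parts) =
      #{F : Fin n → Fin N | F ∘ g = F ∧ content F = α} := by
  have hword (F : Fin n → Fin N) :
      ∏ i, (X (F i) : MvPolynomial (Fin N) ℂ) = monomial (content F) 1 := by
    rw [prod_eq_prod_pow_content, prod_X_pow]
    rfl
  rw [psumPoly, ← fixedWordSum_eq_psumProd, fixedWordSum, coeff_sum]
  simp only [hword, coeff_monomial]
  rw [sum_boole, filter_filter]
  congr!

lemma coeff_psumPoly_mem_span_irrChar {N n : ℕ} (α : Fin N →₀ ℕ) :
    (fun g : Equiv.Perm (Fin n) => coeff α (psumPoly N ℂ g.partition.parts)) ∈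
      Submodule.span ℤ (IrrChar (Equiv.Perm (Fin n))) := by
  let := wordAction (n := n) α
  convert card_fixedBy_mem_span_irrChar (G := Equiv.Perm (Fin n))
    {F : Fin n → Fin N // content F = α} with g
  rw [coeff_psumPoly_partition,
    ← Nat.subtype_card (p := fun F : Fin n → Fin N => F ∘ g = F ∧ content F = α) _ (by simp)]
  have hfix (F : Fin n → Fin N) : F ∘ (g⁻¹ : Equiv.Perm (Fin n)) = F ↔ F ∘ g = F := by
    constructor <;> intro h <;> (nth_rewrite 1 [← h]; ext i; simp)
  refine congrArg _ (Nat.card_congr ⟨fun F => ⟨⟨F.1, F.2.2⟩, Subtype.ext ((hfix _).2 F.2.1)⟩,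
    fun F => ⟨F.1.1, (hfix _).1 (congrArg Subtype.val F.2), F.1.2⟩, fun F => rfl, fun F => rfl⟩)

/-- Expanding the Vandermonde determinant writes `frobeniusChar n w` as an alternating sum of
permutation characters. -/
theorem frobeniusChar_mem_span_irrChar {N : ℕ} (n : ℕ) (w : Fin N → ℕ) :
    frobeniusChar n w ∈ Submodule.span ℤ (IrrChar (Equiv.Perm (Fin n))) := by
  let e (σ : Equiv.Perm (Fin N)) := exponent ((fun i : Fin N => (i : ℕ)) ∘ σ)
  have h : frobeniusChar n w = ∑ σ : Equiv.Perm (Fin N), (Equiv.Perm.sign σ : ℤ) •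
      (if e σ ≤ exponent w then (fun g : Equiv.Perm (Fin n) =>
        coeff (exponent w - e σ) (psumPoly N ℂ g.partition.parts)) else 0) := by
    ext g
    rw [frobeniusChar, frobeniusValue, alternantCoeff_apply, vandermondePoly_eq_alternant,
      alternant, sum_mul, coeff_sum, Finset.sum_apply]
    refine sum_congr rfl fun σ _ => ?_
    rw [smul_mul_assoc, coeff_smul, coeff_monomial_mul', Pi.smul_apply]
    split_ifs <;> simp [e]
  rw [h]
  refine Submodule.sum_mem _ fun σ _ => Submodule.smul_mem _ _ ?_
  split_ifs
  · exact coeff_psumPoly_mem_span_irrChar _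
  · exact Submodule.zero_mem _

/-! ### The irreducible characters of the symmetric group -/

section IrreducibleCharacters

open MvPolynomial

variable {N n d : ℕ}

lemma sum_fin_val (N : ℕ) : ∑ i : Fin N, (i : ℕ) = N.choose 2 := by
  rw [Fin.sum_univ_eq_sum_range fun i => i, sum_range_id, Nat.choose_two_right]

lemma degree_exponent (w : Fin N → ℕ) : (exponent w).degree = ∑ i, w i := by
  rw [Finsupp.degree_eq_sum]
  rfl

lemma vandermondePoly_isHomogeneous (N : ℕ) (R : Type*) [CommRing R] :
    (vandermondePoly N R).IsHomogeneous (N.choose 2) := by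
  rw [vandermondePoly_eq_alternant, alternant]
  refine IsHomogeneous.sum _ _ _ fun σ _ => ?_
  rw [zsmul_eq_mul, ← map_intCast (C : R →+* MvPolynomial (Fin N) R), C_mul_monomial]
  refine isHomogeneous_monomial _ ?_
  rw [degree_exponent, ← sum_fin_val]
  exact Equiv.sum_comp σ fun i => (i : ℕ)

lemma psumPoly_isHomogeneous (N : ℕ) (R : Type*) [CommRing R] (s : Multiset ℕ) :
    (psumPoly N R s).IsHomogeneous s.sum := by
  induction s using Multiset.induction_on with
  | empty => simpa [psumProd_zero] using isHomogeneous_one (Fin N) R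
  | cons a s ih =>
    rw [psumPoly, psumProd_cons, Multiset.sum_cons]
    refine (IsHomogeneous.sum _ _ _ fun i _ => ?_).mul ih
    simpa using (isHomogeneous_X R i).pow a

lemma frobeniusValue_eq_zero_of_sum_ne {w : Fin N → ℕ} {s : Multiset ℕ}
    (h : ∑ i, w i ≠ N.choose 2 + s.sum) : frobeniusValue w s = 0 :=
  ((vandermondePoly_isHomogeneous N ℂ).mul (psumPoly_isHomogeneous N ℂ s)).coeff_eq_zero
    (by rwa [degree_exponent])

lemma frobeniusValue_comp (w : Fin N → ℕ) (τ : Equiv.Perm (Fin N)) (s : Multiset ℕ) :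
    frobeniusValue (w ∘ τ) s = Equiv.Perm.sign τ • frobeniusValue w s :=
  alternantCoeff_comp w τ (psumPoly_isSymmetric s)

lemma frobeniusValue_eq_zero_of_not_injective {w : Fin N → ℕ} (hw : ¬Function.Injective w)
    (s : Multiset ℕ) : frobeniusValue w s = 0 :=
  alternantCoeff_eq_zero hw (psumPoly_isSymmetric s)

/-- The vectors of beta numbers of partitions of `n`, in any order: up to order, these are
`i ↦ l i + i` for the partitions `l` of `n` into at most `N` parts. -/
def IsBetaVector (n : ℕ) (w : Fin N → ℕ) : Prop :=
  Function.Injective w ∧ ∑ i, w i = N.choose 2 + n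

lemma partition_inv {α : Type*} [Fintype α] [DecidableEq α] (g : Equiv.Perm α) :
    g⁻¹.partition = g.partition :=
  Equiv.Perm.partition_eq_of_isConj.1
    (Equiv.Perm.isConj_of_cycleType_eq (Equiv.Perm.cycleType_inv g))

lemma charPairing_frobeniusChar {w : Fin N → ℕ} (hw : IsBetaVector n w) (v : Fin N → ℕ) :
    charPairing (frobeniusChar n w) (frobeniusChar n v) = ∑ σ : Equiv.Perm (Fin N),
      if w ∘ σ = v then ((Equiv.Perm.sign σ : ℤ) : ℂ) else 0 := by
  have hinv (g : Equiv.Perm (Fin n)) : frobeniusChar n v g⁻¹ = frobeniusChar n v g := by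
    rw [frobeniusChar, frobeniusChar, partition_inv]
  simp only [charPairing, hinv]
  rw [sum_frobeniusChar_mul_frobeniusChar v (by rw [hw.2, sum_fin_val]),
    Nat.card_eq_fintype_card, Fintype.card_perm, Fintype.card_fin,
    inv_mul_cancel_left₀ (Nat.cast_ne_zero.2 n.factorial_ne_zero)]

lemma charPairing_frobeniusChar_self {w : Fin N → ℕ} (hw : IsBetaVector n w) :
    charPairing (frobeniusChar n w) (frobeniusChar n w) = 1 := by
  rw [charPairing_frobeniusChar hw, sum_eq_single 1]
  · simp
  · exact fun σ _ hσ => if_neg fun h => hσ (Equiv.ext fun i => hw.1 (congrFun h i))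
  · simp

lemma charPairing_frobeniusChar_of_range_ne {w v : Fin N → ℕ} (hw : IsBetaVector n w)
    (h : Set.range w ≠ Set.range v) :
    charPairing (frobeniusChar n w) (frobeniusChar n v) = 0 := by
  rw [charPairing_frobeniusChar hw]
  refine sum_eq_zero fun σ _ => if_neg ?_
  rintro rfl
  exact h (σ.surjective.range_comp w).symm

theorem frobeniusChar_mem_irrChar_or_neg {w : Fin N → ℕ} (hw : IsBetaVector n w) :
    frobeniusChar n w ∈ IrrChar (Equiv.Perm (Fin n)) ∨
      -frobeniusChar n w ∈ IrrChar (Equiv.Perm (Fin n)) :=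
  mem_irrChar_or_neg_mem_irrChar (frobeniusChar_mem_span_irrChar n w)
    (charPairing_frobeniusChar_self hw)

lemma eq_zero_of_sum_mul_frobeniusValue_eq_zero (hd : d ≤ N) (c : Nat.Partition d → ℂ)
    (h : ∀ w : Fin N → ℕ, IsBetaVector d w → ∑ l, c l * frobeniusValue w l.parts = 0) :
    c = 0 := by
  have hzero : vandermondePoly N ℂ * ∑ l, c l • psumPoly N ℂ l.parts = 0 := by
    ext m
    obtain ⟨w, rfl⟩ := Finsupp.equivFunOnFinite.symm.surjective m
    change alternantCoeff w (∑ l, c l • psumPoly N ℂ l.parts) = 0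
    simp only [map_sum, map_smul, smul_eq_mul]
    by_cases hw : IsBetaVector d w
    · exact h w hw
    refine sum_eq_zero fun l _ => mul_eq_zero_of_right _ ?_
    by_cases hinj : Function.Injective w
    · exact frobeniusValue_eq_zero_of_sum_ne fun e => hw ⟨hinj, by rw [e, l.parts_sum]⟩
    · exact frobeniusValue_eq_zero_of_not_injective hinj l.parts
  exact _root_.funext (Fintype.linearIndependent_iff.1 (linearIndependent_psumPoly hd) c
    ((mul_eq_zero.1 hzero).resolve_left vandermondePoly_ne_zero))

lemma apply_one_eq_zero_of_charPairing_eq_zero (hN : n ≤ N) {ψ : Equiv.Perm (Fin n) → ℂ}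
    (h : ∀ w : Fin N → ℕ, IsBetaVector n w → charPairing (frobeniusChar n w) ψ = 0) :
    ψ 1 = 0 := by
  have hzero := eq_zero_of_sum_mul_frobeniusValue_eq_zero (N := N) (by simpa using hN)
    (fun l => ∑ g : Equiv.Perm (Fin n) with g.partition = l, ψ g⁻¹) fun w hw => by
      have hpair := (mul_eq_zero.1 (h w (by simpa using hw))).resolve_left
        (inv_ne_zero card_ne_zero)
      rw [← sum_fiberwise_of_maps_to (fun g _ => mem_univ g.partition)] at hpair
      rw [← hpair]
      refine sum_congr rfl fun l _ => ?_
      rw [sum_mul]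
      refine sum_congr rfl fun g hg => ?_
      rw [frobeniusChar, (mem_filter.1 hg).2, mul_comm]
  have hclass : (univ.filter fun g : Equiv.Perm (Fin n) =>
      g.partition = (1 : Equiv.Perm (Fin n)).partition) = {1} := by
    ext g
    simp [← Equiv.Perm.partition_eq_of_isConj]
  simpa [hclass] using congrFun hzero (1 : Equiv.Perm (Fin n)).partition

theorem exists_eq_smul_frobeniusChar (hN : n ≤ N) {ψ : Equiv.Perm (Fin n) → ℂ}
    (hψ : ψ ∈ IrrChar (Equiv.Perm (Fin n))) :
    ∃ w : Fin N → ℕ, IsBetaVector n w ∧ ∃ e : ℤˣ, ψ = e • frobeniusChar n w := by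
  by_contra! hcon
  obtain ⟨k, hk, hk'⟩ := exists_apply_one_eq_natCast hψ
  refine hk.ne' (Nat.cast_eq_zero.1 (hk'.symm.trans
    (apply_one_eq_zero_of_charPairing_eq_zero hN fun w hw => ?_)))
  rcases frobeniusChar_mem_irrChar_or_neg hw with h | h
  · rw [charPairing_irrChar h hψ, if_neg fun e => hcon w hw 1 (by rw [← e, one_smul])]
  · rw [← neg_eq_zero, ← charPairing_neg_left, charPairing_irrChar h hψ,
      if_neg fun e => hcon w hw (-1) (by rw [← e, Units.neg_smul, one_smul])]

end IrreducibleCharacters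

/-! ### Beta sets -/

section BetaSets

variable {N n d : ℕ} {X Y : Finset ℕ} {x : ℕ}

lemma choose_two_card_le_sum (X : Finset ℕ) : (#X).choose 2 ≤ ∑ x ∈ X, x := by
  induction X using Finset.induction_on_max with
  | empty => simp
  | insert a s hs ih =>
    have hcard : #s ≤ a := by
      simpa using card_le_card (show s ⊆ range a from fun x hx => mem_range.2 (hs x hx))
    have ha : a ∉ s := fun h => (hs a h).false
    rw [card_insert_of_notMem ha, sum_insert ha, Nat.choose_succ_succ, Nat.choose_one_right]
    exact add_le_add hcard ih

/-- The beta sets with `N` elements of the partitions of `d`: the sets `{l i + i | i < N}` for the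
partitions `l` of `d` into at most `N` parts. -/
def betaSets (N d : ℕ) : Finset (Finset ℕ) :=
  (powersetCard N (range (N + d))).filter fun X => ∑ x ∈ X, x = N.choose 2 + d

lemma mem_betaSets : X ∈ betaSets N d ↔ #X = N ∧ ∑ x ∈ X, x = N.choose 2 + d := by
  rw [betaSets, mem_filter, mem_powersetCard]
  refine ⟨fun h => ⟨h.1.2, h.2⟩, fun h => ⟨⟨fun x hx => ?_, h.1⟩, h.2⟩⟩
  have hle := choose_two_card_le_sum (X.erase x)
  have hsum := add_sum_erase X (fun x => x) hx
  have hcard := card_erase_add_one hx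
  have hN := Nat.choose_succ_succ #(X.erase x) 1
  rw [Nat.choose_one_right, Nat.succ_eq_add_one, hcard, h.1] at hN
  rw [mem_range]
  lia

lemma lt_of_mem_betaSets (hX : X ∈ betaSets N d) (hx : x ∈ X) : x < N + d :=
  mem_range.1 ((mem_powersetCard.1 (mem_filter.1 hX).1).1 hx)

lemma mem_of_add_lt_of_mem_betaSets (hX : X ∈ betaSets N d) (hx : x + d < N) : x ∈ X := by
  by_contra h
  have hle := choose_two_card_le_sum (insert x X)
  rw [card_insert_of_notMem h, sum_insert h, Nat.choose_succ_succ, Nat.choose_one_right,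
    (mem_betaSets.1 hX).1, (mem_betaSets.1 hX).2] at hle
  lia

/-- The increasing enumeration of a set with `N` elements, and the zero vector for other sets. -/
def sortedVector (N : ℕ) (X : Finset ℕ) : Fin N → ℕ :=
  if h : #X = N then X.orderEmbOfFin h else 0

lemma sortedVector_injective (h : #X = N) : Function.Injective (sortedVector N X) := by
  rw [sortedVector, dif_pos h]
  exact (X.orderEmbOfFin h).injective

lemma image_sortedVector (h : #X = N) : univ.image (sortedVector N X) = X := by
  rw [sortedVector, dif_pos h]
  ext x
  simp

lemma sortedVector_mem (h : #X = N) (i : Fin N) : sortedVector N X i ∈ X := by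
  simpa only [image_sortedVector h] using mem_image_of_mem (sortedVector N X) (mem_univ i)

lemma sum_sortedVector (h : #X = N) : ∑ i, sortedVector N X i = ∑ x ∈ X, x := by
  conv_rhs => rw [← image_sortedVector h]
  rw [sum_image (sortedVector_injective h).injOn]

lemma isBetaVector_sortedVector (h : X ∈ betaSets N d) : IsBetaVector d (sortedVector N X) := by
  rw [mem_betaSets] at h
  exact ⟨sortedVector_injective h.1, by rw [sum_sortedVector h.1, h.2]⟩

lemma IsBetaVector.image_mem_betaSets {w : Fin N → ℕ} (h : IsBetaVector d w) :
    univ.image w ∈ betaSets N d := by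
  rw [mem_betaSets, card_image_of_injective _ h.1, sum_image h.1.injOn]
  exact ⟨by simp, h.2⟩

lemma exists_perm_of_image_eq {w v : Fin N → ℕ} (hw : Function.Injective w)
    (h : univ.image w = univ.image v) : ∃ τ : Equiv.Perm (Fin N), w = v ∘ τ := by
  have hex (i : Fin N) : ∃ j, v j = w i := by
    have hmem := mem_image_of_mem w (mem_univ i)
    rw [h] at hmem
    simpa using hmem
  choose f hf using hex
  have hinj : Function.Injective f := fun a b e => hw (by rw [← hf a, ← hf b, e])
  exact ⟨Equiv.ofBijective f (Finite.injective_iff_bijective.1 hinj), funext fun i => (hf i).symm⟩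

/-- The value at the cycle type `s` of the virtual character attached to the beta set `X`. -/
def betaValue (N : ℕ) (X : Finset ℕ) (s : Multiset ℕ) : ℂ := frobeniusValue (sortedVector N X) s

lemma exists_frobeniusValue_eq_smul_betaValue {w : Fin N → ℕ} (hw : Function.Injective w) :
    ∃ e : ℤˣ, ∀ s, frobeniusValue w s = e • betaValue N (univ.image w) s := by
  have hcard : #(univ.image w) = N := by simp [card_image_of_injective _ hw]
  obtain ⟨τ, hτ⟩ := exists_perm_of_image_eq hw (image_sortedVector hcard).symm
  refine ⟨Equiv.Perm.sign τ, fun s => ?_⟩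
  conv_lhs => rw [hτ]
  exact frobeniusValue_comp _ τ s

/-- The irreducible character attached to the beta set `X`: the Frobenius character up to sign. -/
def betaChar (N n : ℕ) (X : Finset ℕ) : Equiv.Perm (Fin n) → ℂ :=
  if frobeniusChar n (sortedVector N X) ∈ IrrChar (Equiv.Perm (Fin n)) then
    frobeniusChar n (sortedVector N X)
  else -frobeniusChar n (sortedVector N X)

lemma betaChar_mem_irrChar (hX : X ∈ betaSets N n) :
    betaChar N n X ∈ IrrChar (Equiv.Perm (Fin n)) := by
  rw [betaChar]
  split_ifs with h
  · exact h
  · exact (frobeniusChar_mem_irrChar_or_neg (isBetaVector_sortedVector hX)).resolve_left h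

lemma exists_betaChar_eq_smul (N n : ℕ) (X : Finset ℕ) :
    ∃ e : ℤˣ, ∀ g, betaChar N n X g = e • betaValue N X g.partition.parts := by
  rw [betaChar]
  split_ifs
  · exact ⟨1, fun g => (one_smul _ _).symm⟩
  · exact ⟨-1, fun g => by rw [Units.neg_smul, one_smul]; rfl⟩

lemma exists_frobeniusChar_eq_smul_betaChar (n : ℕ) {w : Fin N → ℕ} (hw : Function.Injective w) :
    ∃ e : ℤˣ, frobeniusChar n w = e • betaChar N n (univ.image w) := by
  obtain ⟨e, he⟩ := exists_frobeniusValue_eq_smul_betaValue hw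
  obtain ⟨e', he'⟩ := exists_betaChar_eq_smul N n (univ.image w)
  refine ⟨e * e', funext fun g => ?_⟩
  rw [Pi.smul_apply, he', frobeniusChar, he, smul_smul, mul_assoc, Int.units_mul_self, mul_one]

lemma eq_of_eq_units_smul {α : Type*} {φ ψ : α → ℂ} {a : α} (hφ : ∃ k : ℕ, 0 < k ∧ φ a = k)
    (hψ : ∃ k : ℕ, 0 < k ∧ ψ a = k) {e : ℤˣ} (h : φ = e • ψ) : φ = ψ := by
  obtain rfl | rfl := Int.units_eq_one_or e
  · rwa [one_smul] at h
  obtain ⟨k, hk, hφa⟩ := hφ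
  obtain ⟨l, -, hψa⟩ := hψ
  have hsum : φ a + ψ a = 0 := by simp [h]
  rw [hφa, hψa, ← Nat.cast_add, Nat.cast_eq_zero] at hsum
  lia

theorem exists_eq_betaChar (hN : n ≤ N) {ψ : Equiv.Perm (Fin n) → ℂ}
    (hψ : ψ ∈ IrrChar (Equiv.Perm (Fin n))) : ∃ X ∈ betaSets N n, ψ = betaChar N n X := by
  obtain ⟨w, hw, e, he⟩ := exists_eq_smul_frobeniusChar hN hψ
  obtain ⟨e', he'⟩ := exists_frobeniusChar_eq_smul_betaChar n hw.1
  have hX := hw.image_mem_betaSets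
  refine ⟨_, hX, eq_of_eq_units_smul (e := e * e') (exists_apply_one_eq_natCast hψ)
    (exists_apply_one_eq_natCast (betaChar_mem_irrChar hX)) ?_⟩
  rw [he, he', smul_smul]

theorem betaChar_injOn (N n : ℕ) : Set.InjOn (betaChar N n) (betaSets N n) := by
  intro X hX Y hY h
  by_contra hne
  have horth := charPairing_frobeniusChar_of_range_ne (v := sortedVector N Y)
    (isBetaVector_sortedVector hX) fun hrange => hne <| by
      rw [← image_sortedVector (mem_betaSets.1 hX).1, ← image_sortedVector (mem_betaSets.1 hY).1]
      ext x
      simpa using Set.ext_iff.1 hrange x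
  have hzero : charPairing (betaChar N n X) (betaChar N n Y) = 0 := by
    rw [betaChar, betaChar]
    split_ifs <;> simp only [charPairing_neg_left, charPairing_neg_right, horth, neg_zero]
  rw [h, charPairing_irrChar (betaChar_mem_irrChar hY) (betaChar_mem_irrChar hY),
    if_pos rfl] at hzero
  exact one_ne_zero hzero

end BetaSets

/-! ### Removal of rim hooks and the sign character -/

section RimHooks

open MvPolynomial

variable {N n d : ℕ} {X : Finset ℕ} {x : ℕ}

lemma frobeniusValue_cons (w : Fin N → ℕ) (m : ℕ) (t : Multiset ℕ) :
    frobeniusValue w (m ::ₘ t) =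
      ∑ i, if m ≤ w i then frobeniusValue (Function.update w i (w i - m)) t else 0 := by
  rw [frobeniusValue, alternantCoeff_apply, psumPoly, psumProd_cons, mul_left_comm, sum_mul,
    coeff_sum]
  refine sum_congr rfl fun i _ => ?_
  rw [X_pow_eq_monomial, coeff_monomial_mul', one_mul]
  refine if_congr Finsupp.single_le_iff (congrArg (fun v => coeff v _) ?_) rfl
  ext j
  obtain rfl | hj := eq_or_ne j i
  · simp
  · simp [hj]

/-- The Murnaghan–Nakayama rule in terms of beta numbers `w` and their complement `u`
in `{0, …, K - 1}`. -/
lemma frobeniusValue_cons_of_compl {K m : ℕ} {w u : Fin N → ℕ} (hu : Function.Injective u)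
    (hwK : ∀ i, w i < K) (hcover : ∀ y < K, (∃ i, w i = y) ∨ ∃ j, u j = y) (hm : 0 < m)
    (t : Multiset ℕ) :
    frobeniusValue w (m ::ₘ t) =
      ∑ i, ∑ j, if w i = u j + m then frobeniusValue (Function.update w i (u j)) t else 0 := by
  rw [frobeniusValue_cons]
  refine sum_congr rfl fun i _ => ?_
  split_ifs with hle
  · rcases hcover (w i - m) ((Nat.sub_le _ _).trans_lt (hwK i)) with ⟨k, hk⟩ | ⟨j, hj⟩
    · have hki : k ≠ i := by rintro rfl; lia
      have hval : frobeniusValue (Function.update w i (w i - m)) t = 0 :=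
        frobeniusValue_eq_zero_of_not_injective
          (fun hinj => hki (hinj (by simp [hki, hk]))) t
      rw [hval, eq_comm]
      refine sum_eq_zero fun j _ => ?_
      split_ifs with hj
      · rwa [hj, Nat.add_sub_cancel] at hval
      · rfl
    · rw [Fintype.sum_eq_single j fun k hk => if_neg fun e => hk (hu (by lia)),
        if_pos (by lia), hj]
  · exact (sum_eq_zero fun j _ => if_neg (by lia)).symm

lemma frobeniusValue_zero (w : Fin N → ℕ) :
    frobeniusValue w 0 = ∑ σ : Equiv.Perm (Fin N),
      if (fun i => (σ i : ℕ)) = w then ((Equiv.Perm.sign σ : ℤ) : ℂ) else 0 := by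
  rw [frobeniusValue, alternantCoeff_apply, psumPoly, psumProd_zero, mul_one,
    vandermondePoly_eq_alternant, coeff_alternant]
  rfl

lemma frobeniusValue_zero_perm (σ : Equiv.Perm (Fin N)) :
    frobeniusValue (fun i => (σ i : ℕ)) 0 = ((Equiv.Perm.sign σ : ℤ) : ℂ) := by
  rw [frobeniusValue_zero, Fintype.sum_eq_single σ, if_pos rfl]
  exact fun τ h => if_neg fun e => h (Equiv.ext fun i => Fin.ext (congrFun e i))

/-- The bijection of two copies of `{0, …, N - 1}` onto `{0, …, 2 N - 1}` in which the second copy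
is reflected, so that exchanging the two copies is the reflection `x ↦ 2 N - 1 - x`. -/
def unfold (N : ℕ) : Fin N ⊕ Fin N → ℕ := Sum.elim (fun a => a) fun b => 2 * N - 1 - b

lemma unfold_lt (c : Fin N ⊕ Fin N) : unfold N c < 2 * N := by
  rcases c with a | a <;> simp only [unfold, Sum.elim_inl, Sum.elim_inr] <;> lia

lemma unfold_swap (c : Fin N ⊕ Fin N) : unfold N c.swap = 2 * N - 1 - unfold N c := by
  rcases c with a | a <;> simp only [unfold, Sum.elim_inl, Sum.elim_inr, Sum.swap_inl, Sum.swap_inr]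
  lia

lemma unfold_injective (N : ℕ) : Function.Injective (unfold N) := by
  rintro (a | a) (b | b) h <;> simp only [unfold, Sum.elim_inl, Sum.elim_inr] at h
  · rw [Fin.ext h]
  · lia
  · lia
  · rw [Fin.ext (show (a : ℕ) = b by lia)]

lemma exists_unfold_eq (hx : x < 2 * N) : ∃ c, unfold N c = x := by
  by_cases h : x < N
  · exact ⟨Sum.inl ⟨x, h⟩, rfl⟩
  · exact ⟨Sum.inr ⟨2 * N - 1 - x, by lia⟩, by simp only [unfold, Sum.elim_inr]; lia⟩

/-- The beta numbers selected by a permutation `π` of `{0, …, 2 N - 1}` as the values at the first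
`N` positions, in the folded coordinates of `unfold`. -/
def leftVector (π : Equiv.Perm (Fin N ⊕ Fin N)) (i : Fin N) : ℕ := unfold N (π (Sum.inl i))

/-- Conjugation by the exchange of the two halves. As partitions, `leftVector (exchange π)` is the
conjugate of `leftVector π`. -/
def exchange (π : Equiv.Perm (Fin N ⊕ Fin N)) : Equiv.Perm (Fin N ⊕ Fin N) :=
  (Equiv.sumComm (Fin N) (Fin N)).permCongr π

lemma exchange_inl (π : Equiv.Perm (Fin N ⊕ Fin N)) (j : Fin N) :
    exchange π (Sum.inl j) = (π (Sum.inr j)).swap := rfl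

lemma exchange_inr (π : Equiv.Perm (Fin N ⊕ Fin N)) (i : Fin N) :
    exchange π (Sum.inr i) = (π (Sum.inl i)).swap := rfl

lemma exchange_exchange (π : Equiv.Perm (Fin N ⊕ Fin N)) : exchange (exchange π) = π := by
  ext c
  simp [exchange]

lemma exchange_mul_swap (π : Equiv.Perm (Fin N ⊕ Fin N)) (i j : Fin N) :
    exchange (π * Equiv.swap (Sum.inl i) (Sum.inr j)) =
      exchange π * Equiv.swap (Sum.inl j) (Sum.inr i) := by
  rw [exchange, Equiv.permCongr_mul, Equiv.permCongr_def _ (Equiv.swap _ _),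
    Equiv.symm_trans_swap_trans, Equiv.swap_comm]
  rfl

lemma exchange_sumCongr (σ τ : Equiv.Perm (Fin N)) :
    exchange (Equiv.Perm.sumCongr σ τ) = Equiv.Perm.sumCongr τ σ := by
  ext (i | i) <;> rfl

lemma leftVector_injective (π : Equiv.Perm (Fin N ⊕ Fin N)) : Function.Injective (leftVector π) :=
  (unfold_injective N).comp (π.injective.comp Sum.inl_injective)

lemma leftVector_mul_swap (π : Equiv.Perm (Fin N ⊕ Fin N)) (i j : Fin N) :
    leftVector (π * Equiv.swap (Sum.inl i) (Sum.inr j)) =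
      Function.update (leftVector π) i (unfold N (π (Sum.inr j))) := by
  ext k
  obtain rfl | hk := eq_or_ne k i
  · simp [leftVector]
  · simp [leftVector, hk, Equiv.swap_apply_of_ne_of_ne]

lemma leftVector_sumCongr (σ τ : Equiv.Perm (Fin N)) :
    leftVector (Equiv.Perm.sumCongr σ τ) = fun i => (σ i : ℕ) := rfl

lemma exists_leftVector_eq_or (π : Equiv.Perm (Fin N ⊕ Fin N)) (hx : x < 2 * N) :
    (∃ i, leftVector π i = x) ∨ ∃ j, unfold N (π (Sum.inr j)) = x := by
  obtain ⟨c, rfl⟩ := exists_unfold_eq hx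
  obtain ⟨i | j, rfl⟩ := π.surjective c
  · exact Or.inl ⟨i, rfl⟩
  · exact Or.inr ⟨j, rfl⟩

lemma frobeniusValue_leftVector_cons (π : Equiv.Perm (Fin N ⊕ Fin N)) {m : ℕ} (hm : 0 < m)
    (t : Multiset ℕ) :
    frobeniusValue (leftVector π) (m ::ₘ t) = ∑ i, ∑ j,
      if unfold N (π (Sum.inl i)) = unfold N (π (Sum.inr j)) + m then
        frobeniusValue (leftVector (π * Equiv.swap (Sum.inl i) (Sum.inr j))) t else 0 := by
  simp only [leftVector_mul_swap]
  exact frobeniusValue_cons_of_compl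
    ((unfold_injective N).comp (π.injective.comp Sum.inr_injective))
    (fun i => unfold_lt (π (Sum.inl i))) (fun _ => exists_leftVector_eq_or π) hm t

lemma frobeniusValue_leftVector_zero {π : Equiv.Perm (Fin N ⊕ Fin N)}
    (hπ : π ∉ (Equiv.Perm.sumCongrHom (Fin N) (Fin N)).range) :
    frobeniusValue (leftVector π) 0 = 0 := by
  rw [frobeniusValue_zero]
  refine sum_eq_zero fun σ _ => if_neg fun h =>
    hπ (Equiv.Perm.mem_sumCongrHom_range_of_perm_mapsTo_inl ?_)
  rintro _ ⟨i, rfl⟩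
  exact ⟨σ i, unfold_injective N (congrFun h i)⟩

lemma sign_smul_frobeniusValue_leftVector_zero (π : Equiv.Perm (Fin N ⊕ Fin N)) :
    Equiv.Perm.sign π • frobeniusValue (leftVector π) 0 =
      frobeniusValue (leftVector (exchange π)) 0 := by
  by_cases hπ : π ∈ (Equiv.Perm.sumCongrHom (Fin N) (Fin N)).range
  · obtain ⟨⟨σ, τ⟩, rfl⟩ := hπ
    change Equiv.Perm.sign (Equiv.Perm.sumCongr σ τ) •
      frobeniusValue (leftVector (Equiv.Perm.sumCongr σ τ)) 0 =
        frobeniusValue (leftVector (exchange (Equiv.Perm.sumCongr σ τ))) 0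
    rw [exchange_sumCongr, leftVector_sumCongr, leftVector_sumCongr, frobeniusValue_zero_perm,
      frobeniusValue_zero_perm, Equiv.Perm.sign_sumCongr]
    rcases Int.units_eq_one_or (Equiv.Perm.sign σ) with h | h <;> simp [h, Units.smul_def]
  · have hexchange : exchange π ∉ (Equiv.Perm.sumCongrHom (Fin N) (Fin N)).range := by
      rintro ⟨⟨σ, τ⟩, h⟩
      refine hπ ⟨(τ, σ), ?_⟩
      rw [← exchange_exchange π, ← h]
      exact (exchange_sumCongr σ τ).symm
    rw [frobeniusValue_leftVector_zero hπ, frobeniusValue_leftVector_zero hexchange, smul_zero]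

lemma sign_smul_frobeniusValue_leftVector {s : Multiset ℕ} (hs : ∀ a ∈ s, 0 < a)
    (π : Equiv.Perm (Fin N ⊕ Fin N)) :
    Equiv.Perm.sign π • frobeniusValue (leftVector π) s =
      (-1 : ℤˣ) ^ s.card • frobeniusValue (leftVector (exchange π)) s := by
  induction s using Multiset.induction_on generalizing π with
  | empty => simpa using sign_smul_frobeniusValue_leftVector_zero π
  | cons m t ih =>
    have hm : 0 < m := hs m (Multiset.mem_cons_self m t)
    rw [frobeniusValue_leftVector_cons π hm, frobeniusValue_leftVector_cons (exchange π) hm,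
      sum_comm]
    simp only [smul_sum]
    refine sum_congr rfl fun j _ => sum_congr rfl fun i _ => ?_
    have hi := unfold_lt (π (Sum.inl i))
    have hj := unfold_lt (π (Sum.inr j))
    have hiff : unfold N (π (Sum.inl i)) = unfold N (π (Sum.inr j)) + m ↔
        unfold N (exchange π (Sum.inl j)) = unfold N (exchange π (Sum.inr i)) + m := by
      rw [exchange_inl, exchange_inr, unfold_swap, unfold_swap]
      lia
    rw [smul_ite, smul_ite, if_congr hiff ?_ ?_]
    · have h := ih (fun a ha => hs a (Multiset.mem_cons_of_mem ha))
        (π * Equiv.swap (Sum.inl i) (Sum.inr j))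
      rw [Equiv.Perm.sign_mul, Equiv.Perm.sign_swap Sum.inl_ne_inr, mul_neg_one,
        Units.neg_smul, exchange_mul_swap, neg_eq_iff_eq_neg] at h
      rw [h, Multiset.card_cons, pow_succ, mul_neg_one, Units.neg_smul]
    · simp

/-- The beta set of the conjugate partition: the complement, reflected in `{0, …, 2 N - 1}`. -/
def conjBetaSet (N : ℕ) (X : Finset ℕ) : Finset ℕ :=
  (range (2 * N)).filter fun x => 2 * N - 1 - x ∉ X

lemma mem_conjBetaSet : x ∈ conjBetaSet N X ↔ x < 2 * N ∧ 2 * N - 1 - x ∉ X := by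
  rw [conjBetaSet, mem_filter, mem_range]

lemma image_leftVector_exchange (π : Equiv.Perm (Fin N ⊕ Fin N)) :
    univ.image (leftVector (exchange π)) = conjBetaSet N (univ.image (leftVector π)) := by
  ext x
  simp only [mem_conjBetaSet, mem_image, mem_univ, true_and, not_exists]
  constructor
  · rintro ⟨j, rfl⟩
    refine ⟨unfold_lt _, fun i h => ?_⟩
    rw [leftVector, leftVector, exchange_inl, ← unfold_swap, Sum.swap_swap] at h
    exact Sum.inl_ne_inr (π.injective (unfold_injective N h))
  · rintro ⟨hx, h⟩
    obtain ⟨j, hj⟩ := (exists_leftVector_eq_or π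
      (show 2 * N - 1 - x < 2 * N by lia)).resolve_left (not_exists.2 h)
    exact ⟨j, by rw [leftVector, exchange_inl, unfold_swap, hj]; lia⟩

lemma sum_leftVector_exchange (π : Equiv.Perm (Fin N ⊕ Fin N)) :
    ∑ i, leftVector (exchange π) i = ∑ i, leftVector π i := by
  have hcompl : ∑ j, leftVector (exchange π) j + ∑ j, unfold N (π (Sum.inr j)) =
      ∑ _j : Fin N, (2 * N - 1) := by
    rw [← sum_add_distrib]
    refine sum_congr rfl fun j _ => ?_
    have := unfold_lt (π (Sum.inr j))
    rw [leftVector, exchange_inl, unfold_swap]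
    lia
  have htotal : ∑ i, leftVector π i + ∑ j, unfold N (π (Sum.inr j)) =
      ∑ _j : Fin N, (2 * N - 1) := by
    have h := Equiv.sum_comp π (unfold N)
    rw [Fintype.sum_sum_type, Fintype.sum_sum_type,
      ← sum_add_distrib (f := fun a => unfold N (Sum.inl a))] at h
    refine h.trans (sum_congr rfl fun a _ => ?_)
    simp only [unfold, Sum.elim_inl, Sum.elim_inr]
    lia
  exact Nat.add_right_cancel (hcompl.trans htotal.symm)

lemma exists_image_leftVector_eq (hd : d ≤ N) (hX : X ∈ betaSets N d) :
    ∃ π : Equiv.Perm (Fin N ⊕ Fin N), univ.image (leftVector π) = X := by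
  have hcard := (mem_betaSets.1 hX).1
  have hex (i : Fin N) : ∃ c, unfold N c = sortedVector N X i :=
    exists_unfold_eq ((lt_of_mem_betaSets hX (sortedVector_mem hcard i)).trans_le (by lia))
  choose f hf using hex
  have hinj : Function.Injective f := fun a b e =>
    sortedVector_injective hcard (by rw [← hf, ← hf, e])
  obtain ⟨π, hπ⟩ := Equiv.Perm.exists_extending_pair Sum.inl f Sum.inl_injective hinj
  refine ⟨π, ?_⟩
  rw [← image_sortedVector hcard]
  exact congrArg (univ.image ·) (_root_.funext fun i => by rw [leftVector, hπ, hf])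

lemma conjBetaSet_mem_betaSets (hd : d ≤ N) (hX : X ∈ betaSets N d) :
    conjBetaSet N X ∈ betaSets N d := by
  obtain ⟨π, rfl⟩ := exists_image_leftVector_eq hd hX
  rw [← image_leftVector_exchange]
  refine IsBetaVector.image_mem_betaSets ⟨leftVector_injective _, ?_⟩
  rw [sum_leftVector_exchange, ← (mem_betaSets.1 hX).2, sum_image (leftVector_injective π).injOn]

lemma exists_betaValue_conjBetaSet (hd : d ≤ N) (hX : X ∈ betaSets N d) :
    ∃ e : ℤˣ, ∀ s : Multiset ℕ, (∀ a ∈ s, 0 < a) →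
      (-1 : ℤˣ) ^ s.card • betaValue N X s = e • betaValue N (conjBetaSet N X) s := by
  obtain ⟨π, rfl⟩ := exists_image_leftVector_eq hd hX
  obtain ⟨e, he⟩ := exists_frobeniusValue_eq_smul_betaValue (leftVector_injective π)
  obtain ⟨e', he'⟩ := exists_frobeniusValue_eq_smul_betaValue (leftVector_injective (exchange π))
  rw [image_leftVector_exchange] at he'
  refine ⟨(Equiv.Perm.sign π * e)⁻¹ * e', fun s hs => ?_⟩
  rw [mul_smul, ← he', eq_inv_smul_iff, smul_comm, mul_smul, ← he,
    sign_smul_frobeniusValue_leftVector hs, smul_smul, Int.units_mul_self, one_smul]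

lemma sign_eq_neg_one_pow_card_parts (g : Equiv.Perm (Fin n)) :
    Equiv.Perm.sign g = (-1) ^ n * (-1) ^ g.partition.parts.card := by
  have hle : g.cycleType.sum ≤ n := by
    rw [Equiv.Perm.sum_cycleType]
    simpa using card_le_univ g.support
  rw [Equiv.Perm.sign_of_cycleType, Equiv.Perm.parts_partition, ← Equiv.Perm.sum_cycleType,
    Multiset.card_add, Multiset.card_replicate, Fintype.card_fin, ← pow_add]
  refine neg_one_pow_congr ?_
  simp only [Nat.even_add, Nat.even_sub hle]
  tauto

theorem sign_mul_betaChar (hn : n ≤ N) (hX : X ∈ betaSets N n) :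
    (fun g => ((Equiv.Perm.sign g : ℤ) : ℂ) * betaChar N n X g) =
      betaChar N n (conjBetaSet N X) := by
  obtain ⟨k, hk, hk'⟩ := exists_apply_one_eq_natCast (betaChar_mem_irrChar hX)
  obtain ⟨e, he⟩ := exists_betaValue_conjBetaSet hn hX
  obtain ⟨e₁, he₁⟩ := exists_betaChar_eq_smul N n X
  obtain ⟨e₂, he₂⟩ := exists_betaChar_eq_smul N n (conjBetaSet N X)
  refine eq_of_eq_units_smul (e := (-1) ^ n * e₁ * e * e₂) ⟨k, hk, by simpa using hk'⟩
    (exists_apply_one_eq_natCast (betaChar_mem_irrChar (conjBetaSet_mem_betaSets hn hX)))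
    (_root_.funext fun g => ?_)
  have hparts := he g.partition.parts fun _ ha => g.partition.parts_pos ha
  rw [Pi.smul_apply, he₁, he₂, sign_eq_neg_one_pow_card_parts, ← zsmul_eq_mul, ← Units.smul_def,
    smul_smul, smul_smul, mul_assoc _ e₂ e₂, Int.units_mul_self, mul_one, mul_smul _ e, ← hparts,
    smul_smul]
  exact congrArg (· • betaValue N X g.partition.parts) (mul_right_comm _ _ _)

end RimHooks

/-! ### Relations between values on the classes with no part divisible by `ℓ` -/

section Relations

open MvPolynomial

variable {N ℓ k n : ℕ} {R K : Type*} [CommRing R] [Field K]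

/-- The exponent vector `v` with `ℓ` added to the entries indexed by `T`. -/
def shiftOn (ℓ : ℕ) (T : Finset (Fin N)) (v : Fin N → ℕ) : Fin N → ℕ :=
  fun i => if i ∈ T then v i + ℓ else v i

lemma sum_shiftOn (ℓ : ℕ) (T : Finset (Fin N)) (v : Fin N → ℕ) :
    ∑ i, shiftOn ℓ T v i = ∑ i, v i + ℓ * #T := by
  have hadd (i : Fin N) : shiftOn ℓ T v i = v i + if i ∈ T then ℓ else 0 := by
    rw [shiftOn]
    split_ifs <;> rfl
  simp only [hadd, sum_add_distrib, sum_ite_mem, univ_inter, sum_const, smul_eq_mul, mul_comm]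

lemma monomial_exponent_shiftOn_comp (ℓ : ℕ) (T : Finset (Fin N)) (v : Fin N → ℕ)
    (σ : Equiv.Perm (Fin N)) :
    monomial (exponent (shiftOn ℓ T v ∘ σ)) (1 : R) =
      expand ℓ (∏ i ∈ T, X (σ.symm i)) * monomial (exponent (v ∘ σ)) 1 := by
  have hprod : expand ℓ (∏ i ∈ T, X (σ.symm i) : MvPolynomial (Fin N) R) =
      ∏ i, if σ i ∈ T then X i ^ ℓ else 1 := by
    simp only [map_prod, expand_X]
    rw [← Finset.prod_ite_mem_eq T]
    exact Fintype.prod_equiv σ.symm _ _ fun i => by simp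
  rw [hprod, ← prod_X_pow, ← prod_X_pow, ← prod_mul_distrib]
  refine prod_congr rfl fun i _ => ?_
  simp only [Function.comp, shiftOn]
  split_ifs
  · rw [pow_add, mul_comm]
  · rw [one_mul]

/-- A Pieri rule for the elementary symmetric function in the `ℓ`-th powers of the variables. -/
lemma sum_alternant_shiftOn (ℓ k : ℕ) (v : Fin N → ℕ) :
    ∑ T ∈ powersetCard k univ, alternant R (shiftOn ℓ T v) =
      expand ℓ (esymm (Fin N) R k) * alternant R v := by
  simp only [alternant]
  rw [sum_comm, mul_sum]
  refine sum_congr rfl fun σ _ => ?_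
  have hesymm : esymm (Fin N) R k = ∑ T ∈ powersetCard k univ, ∏ i ∈ T, X (σ.symm i) := by
    conv_lhs => rw [← rename_esymm (Fin N) R k σ.symm, esymm]
    simp only [map_sum, map_prod, rename_X]
  rw [← smul_sum, mul_smul_comm, hesymm, map_sum, sum_mul]
  exact congrArg (_ • ·) (sum_congr rfl fun T _ => monomial_exponent_shiftOn_comp ℓ T v σ)

variable (N ℓ k K) in
/-- The span of the power sum products of degree `ℓ * k` with all exponents divisible by `ℓ`. -/
def multiplePsumSpan : Submodule K (MvPolynomial (Fin N) K) :=
  Submodule.span K (psumPoly N K '' {s | s.sum = ℓ * k ∧ ∀ a ∈ s, 0 < a ∧ ℓ ∣ a})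

lemma mul_psum_mem_multiplePsumSpan (hℓ : 0 < ℓ) {a : ℕ} (ha : 0 < a)
    {f : MvPolynomial (Fin N) K} (hf : f ∈ multiplePsumSpan N ℓ k K) :
    f * psum (Fin N) K (ℓ * a) ∈ multiplePsumSpan N ℓ (k + a) K := by
  refine Submodule.span_induction (p := fun f _ => f * psum (Fin N) K (ℓ * a) ∈ _) ?_ ?_ ?_ ?_ hf
  · rintro _ ⟨s, ⟨hsum, hs⟩, rfl⟩
    refine Submodule.subset_span ⟨(ℓ * a) ::ₘ s, ⟨?_, ?_⟩, ?_⟩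
    · rw [Multiset.sum_cons, hsum, mul_add, add_comm]
    · exact Multiset.forall_mem_cons.2 ⟨⟨Nat.mul_pos hℓ ha, dvd_mul_right _ _⟩, hs⟩
    · rw [psumPoly, psumProd_cons, mul_comm, psum]
  · rw [zero_mul]
    exact Submodule.zero_mem _
  · intro f g _ _ hf hg
    rw [add_mul]
    exact Submodule.add_mem _ hf hg
  · intro c f _ hf
    rw [smul_mul_assoc]
    exact Submodule.smul_mem _ _ hf

lemma expand_psum (ℓ a : ℕ) : expand ℓ (psum (Fin N) R a) = psum (Fin N) R (ℓ * a) := by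
  simp [psum, pow_mul]

lemma expand_esymm_mem_multiplePsumSpan [CharZero K] (hℓ : 0 < ℓ) (k : ℕ) :
    expand ℓ (esymm (Fin N) K k) ∈ multiplePsumSpan N ℓ k K := by
  induction k using Nat.strong_induction_on with
  | _ k ih =>
    rcases Nat.eq_zero_or_pos k with rfl | hk
    · refine Submodule.subset_span ⟨0, by simp, ?_⟩
      rw [psumPoly, psumProd_zero, esymm_zero, map_one]
    have hsign (j : ℕ) {f : MvPolynomial (Fin N) K} (hf : f ∈ multiplePsumSpan N ℓ k K) :
        (-1) ^ j * f ∈ multiplePsumSpan N ℓ k K := by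
      rcases neg_one_pow_eq_or (MvPolynomial (Fin N) K) j with h | h
      · rwa [h, one_mul]
      · rw [h, neg_one_mul]
        exact Submodule.neg_mem _ hf
    have hnewton := congrArg (expand ℓ) (mul_esymm_eq_sum (Fin N) K k)
    simp only [map_mul, map_sum, map_pow, map_neg, map_one, map_natCast, expand_psum] at hnewton
    rw [← Submodule.smul_mem_iff _ (Nat.cast_ne_zero.2 hk.ne' : (k : K) ≠ 0),
      Nat.cast_smul_eq_nsmul, nsmul_eq_mul, hnewton]
    refine hsign _ (Submodule.sum_mem _ fun a ha => ?_)
    rw [mem_filter, HasAntidiagonal.mem_antidiagonal] at ha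
    rw [mul_assoc]
    refine hsign _ ?_
    rw [← ha.1]
    exact mul_psum_mem_multiplePsumSpan hℓ (by omega) (ih _ ha.2)

lemma eq_zero_of_sum_smul_mem_span_image {ι M : Type*} [Fintype ι] [AddCommGroup M]
    [Module R M] {b : ι → M} (hb : LinearIndependent R b) {c : ι → R} {S : Set ι}
    (h : ∑ i, c i • b i ∈ Submodule.span R (b '' S)) {i : ι} (hi : i ∉ S) : c i = 0 := by
  obtain ⟨f, hf, heq⟩ := (Finsupp.mem_span_image_iff_linearCombination R).1 h
  rw [← Fintype.linearCombination_apply,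
    ← Finsupp.linearCombination_eq_fintype_linearCombination_apply] at heq
  obtain rfl := hb heq
  exact Finsupp.notMem_support_iff.1 fun hmem => hi (hf hmem)

lemma eq_zero_of_sum_smul_psumPoly_mem_span [CharZero K] (hN : n ≤ N) {F : Multiset ℕ → K}
    {S : Set (Nat.Partition (Fintype.card (Fin n)))}
    (h : ∑ g : Equiv.Perm (Fin n), F g.partition.parts • psumPoly N K g.partition.parts ∈
      Submodule.span K ((fun l => psumPoly N K l.parts) '' S))
    {g : Equiv.Perm (Fin n)} (hg : g.partition ∉ S) : F g.partition.parts = 0 := by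
  rw [← sum_fiberwise_of_maps_to (fun g _ => mem_univ g.partition)] at h
  have hfiber (l : Nat.Partition (Fintype.card (Fin n))) :
      ∑ g : Equiv.Perm (Fin n) with g.partition = l,
        F g.partition.parts • psumPoly N K g.partition.parts =
      ((#{g : Equiv.Perm (Fin n) | g.partition = l} : K) * F l.parts) • psumPoly N K l.parts := by
    rw [mul_smul, Nat.cast_smul_eq_nsmul, ← sum_const]
    exact sum_congr rfl fun g hg => by rw [(mem_filter.1 hg).2]
  rw [sum_congr rfl fun l _ => hfiber l] at h
  have hzero := eq_zero_of_sum_smul_mem_span_image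
    (linearIndependent_psumPoly (by simpa using hN)) h hg
  refine (mul_eq_zero.1 hzero).resolve_left (Nat.cast_ne_zero.2 (Finset.card_ne_zero.2 ⟨g, ?_⟩))
  exact mem_filter.2 ⟨mem_univ _, rfl⟩

lemma expand_esymm_mul_psumPoly_mem_span [CharZero K] (hℓ : 0 < ℓ) (hk : 0 < k) {e d : ℕ}
    (hd : e + ℓ * k = d) (l : Nat.Partition e) :
    expand ℓ (esymm (Fin N) K k) * psumPoly N K l.parts ∈ Submodule.span K
      ((fun l : Nat.Partition d => psumPoly N K l.parts) '' {l | ∃ a ∈ l.parts, ℓ ∣ a}) := by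
  refine Submodule.span_induction (p := fun f _ => f * psumPoly N K l.parts ∈ _) ?_ ?_ ?_ ?_
    (expand_esymm_mem_multiplePsumSpan (N := N) (K := K) hℓ k)
  · rintro _ ⟨s, ⟨hsum, hs⟩, rfl⟩
    obtain ⟨a, ha⟩ : ∃ a, a ∈ s := by
      refine Multiset.exists_mem_of_ne_zero ?_
      rintro rfl
      exact (Nat.mul_pos hℓ hk).ne hsum
    refine Submodule.subset_span ⟨⟨s + l.parts, ?_, ?_⟩, ⟨a, ?_, (hs a ha).2⟩, psumProd_add _ _ _⟩
    · intro i hi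
      exact (Multiset.mem_add.1 hi).elim (fun hi => (hs i hi).1) l.parts_pos
    · rw [Multiset.sum_add, hsum, l.parts_sum, add_comm, hd]
    · exact Multiset.mem_add.2 (Or.inl ha)
  · rw [zero_mul]
    exact Submodule.zero_mem _
  · intro f g _ _ hf hg
    rw [add_mul]
    exact Submodule.add_mem _ hf hg
  · intro c f _ hf
    rw [smul_mul_assoc]
    exact Submodule.smul_mem _ _ hf

lemma sum_frobeniusValue_shiftOn_smul_psumPoly {e : ℕ} {v : Fin N → ℕ}
    (hv : ∑ i, v i = N.choose 2 + e) (hn : e + ℓ * k = n) :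
    ∑ g : Equiv.Perm (Fin n), (∑ T ∈ powersetCard k univ,
        frobeniusValue (shiftOn ℓ T v) g.partition.parts) • psumPoly N ℂ g.partition.parts =
      ((n.factorial : ℂ) * (e.factorial : ℂ)⁻¹) • (expand ℓ (esymm (Fin N) ℂ k) *
        ∑ h : Equiv.Perm (Fin e), C (frobeniusChar e v h) * psumPoly N ℂ h.partition.parts) := by
  have hT (T : Finset (Fin N)) (hT : T ∈ powersetCard k univ) :
      vandermondePoly N ℂ * ∑ g : Equiv.Perm (Fin n),
        C (frobeniusChar n (shiftOn ℓ T v) g) * psumPoly N ℂ g.partition.parts =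
        (n.factorial : ℂ) • alternant ℂ (shiftOn ℓ T v) := by
    refine vandermondePoly_mul_sum_frobeniusChar ?_
    rw [sum_shiftOn, (mem_powersetCard.1 hT).2, hv, sum_fin_val, add_assoc, hn]
  apply mul_left_cancel₀ (vandermondePoly_ne_zero (N := N) (R := ℂ))
  rw [mul_smul_comm, mul_left_comm, vandermondePoly_mul_sum_frobeniusChar (by rw [hv, sum_fin_val]),
    mul_smul_comm, smul_smul, mul_assoc, inv_mul_cancel₀ (Nat.cast_ne_zero.2 e.factorial_ne_zero),
    mul_one, ← sum_alternant_shiftOn, smul_sum, ← sum_congr rfl hT, ← mul_sum, sum_comm]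
  simp only [sum_smul, smul_eq_C_mul, frobeniusChar]

/-- Multiplying a Schur function by a positive degree elementary symmetric function in the `ℓ`-th
powers of the variables only leaves power sum products with an exponent divisible by `ℓ`. -/
lemma sum_frobeniusValue_shiftOn_eq_zero (hℓ : 0 < ℓ) (hN : n ≤ N) (hk : 0 < k) {v : Fin N → ℕ}
    (hv : ∑ i, v i + ℓ * k = N.choose 2 + n) (hv' : N.choose 2 ≤ ∑ i, v i)
    {g : Equiv.Perm (Fin n)} (hg : ∀ a ∈ g.partition.parts, ¬ℓ ∣ a) :
    ∑ T ∈ powersetCard k univ, frobeniusValue (shiftOn ℓ T v) g.partition.parts = 0 := by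
  obtain ⟨e, he⟩ := Nat.exists_eq_add_of_le hv'
  have hsum := sum_frobeniusValue_shiftOn_smul_psumPoly (ℓ := ℓ) (k := k) (n := n) he (by omega)
  refine eq_zero_of_sum_smul_psumPoly_mem_span (K := ℂ) hN
    (F := fun s => ∑ T ∈ powersetCard k univ, frobeniusValue (shiftOn ℓ T v) s)
    (S := {l | ∃ a ∈ l.parts, ℓ ∣ a}) ?_ fun ⟨a, ha, hdvd⟩ => hg a ha hdvd
  rw [hsum, mul_sum]
  refine Submodule.smul_mem _ _ (Submodule.sum_mem _ fun h _ => ?_)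
  rw [← smul_eq_C_mul, mul_smul_comm]
  refine Submodule.smul_mem _ _ (expand_esymm_mul_psumPoly_mem_span hℓ hk ?_ _)
  simp only [Fintype.card_fin]
  omega

end Relations

/-! ### Flush beta sets and the spanning property -/

section Spanning

variable {N n ℓ m z : ℕ} {X : Finset ℕ}

/-- The beta sets of partitions of `d` which are flush on the runner of residue `m` of the
`ℓ`-abacus: no bead of that runner can be moved down to the position below it. -/
def flushBetaSets (ℓ m N d : ℕ) : Finset (Finset ℕ) :=
  {X ∈ betaSets N d | ∀ z, z % ℓ = m → z + ℓ ∈ X → z ∈ X}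

lemma mem_flushBetaSets {d : ℕ} :
    X ∈ flushBetaSets ℓ m N d ↔ X ∈ betaSets N d ∧ ∀ z, z % ℓ = m → z + ℓ ∈ X → z ∈ X :=
  mem_filter

/-- The sum of the squares of the beta numbers of residue `m`. It decreases along the rewriting of
the character of a beta set in terms of flush ones. -/
def residueEnergy (ℓ m : ℕ) (X : Finset ℕ) : ℕ := ∑ x ∈ X, if x % ℓ = m then x ^ 2 else 0

lemma sum_lt_sum_of_card_eq {ι : Type*} {S T : Finset ι} {f : ι → ℕ} {c : ℕ} (hcard : #T = #S)
    (hne : T ≠ S) (hS : ∀ i ∈ S, c ≤ f i) (hT : ∀ i ∉ S, f i < c) :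
    ∑ i ∈ T, f i < ∑ i ∈ S, f i := by
  refine sum_sdiff_lt_sum_sdiff.1 ?_
  have hnonempty : (T \ S).Nonempty :=
    sdiff_nonempty.2 fun hsub => hne (eq_of_subset_of_card_le hsub hcard.ge)
  calc ∑ i ∈ T \ S, f i < ∑ _i ∈ T \ S, c :=
        sum_lt_sum_of_nonempty hnonempty fun i hi => hT i (mem_sdiff.1 hi).2
    _ = ∑ _i ∈ S \ T, c := by rw [sum_const, sum_const, card_sdiff_comm hcard]
    _ ≤ ∑ i ∈ S \ T, f i := sum_le_sum fun i hi => hS i (mem_sdiff.1 hi).1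

lemma residueEnergy_image_shiftOn {v : Fin N → ℕ} {T : Finset (Fin N)}
    (hinj : Function.Injective (shiftOn ℓ T v)) :
    residueEnergy ℓ m (univ.image (shiftOn ℓ T v)) = ∑ i, (if v i % ℓ = m then v i ^ 2 else 0) +
      ∑ i ∈ T, if v i % ℓ = m then 2 * ℓ * v i + ℓ ^ 2 else 0 := by
  rw [residueEnergy, sum_image hinj.injOn, ← Finset.sum_ite_mem_eq T, ← sum_add_distrib]
  refine sum_congr rfl fun i _ => ?_
  by_cases h : i ∈ T
  · simp only [shiftOn, h, if_true, Nat.add_mod_right]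
    split_ifs <;> ring
  · simp only [shiftOn, h, if_false, add_zero]

/-- The indices of the beads at or above the position `z` on its runner. -/
def runnerAbove (ℓ z : ℕ) (v : Fin N → ℕ) : Finset (Fin N) :=
  {i | v i % ℓ = z % ℓ ∧ z ≤ v i}

lemma mem_runnerAbove {v : Fin N → ℕ} {i : Fin N} :
    i ∈ runnerAbove ℓ z v ↔ v i % ℓ = z % ℓ ∧ z ≤ v i := by
  simp [runnerAbove]

lemma residueEnergy_image_shiftOn_lt (hℓ : 0 < ℓ) {v : Fin N → ℕ} {T : Finset (Fin N)}
    (hcard : #T = #(runnerAbove ℓ z v)) (hne : T ≠ runnerAbove ℓ z v)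
    (hT : Function.Injective (shiftOn ℓ T v))
    (habove : Function.Injective (shiftOn ℓ (runnerAbove ℓ z v) v)) :
    residueEnergy ℓ (z % ℓ) (univ.image (shiftOn ℓ T v)) <
      residueEnergy ℓ (z % ℓ) (univ.image (shiftOn ℓ (runnerAbove ℓ z v) v)) := by
  rw [residueEnergy_image_shiftOn hT, residueEnergy_image_shiftOn habove]
  refine Nat.add_lt_add_left (sum_lt_sum_of_card_eq (c := 2 * ℓ * z + ℓ ^ 2) hcard hne
    (fun i hi => ?_) fun i hi => ?_) _
  · obtain ⟨hmod, hle⟩ := mem_runnerAbove.1 hi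
    rw [if_pos hmod]
    gcongr
  · split_ifs with hmod
    · have hlt : v i < z := not_le.1 fun hle => hi (mem_runnerAbove.2 ⟨hmod, hle⟩)
      gcongr
    · positivity

lemma exists_shiftOn_runnerAbove_eq {w : Fin N → ℕ} (hw : Function.Injective w)
    (hz : ∀ i, w i ≠ z) (hz' : ∃ i, w i = z + ℓ) :
    ∃ v : Fin N → ℕ, Function.Injective v ∧ (runnerAbove ℓ z v).Nonempty ∧
      shiftOn ℓ (runnerAbove ℓ z v) v = w := by
  have hgap {i : Fin N} (hmod : w i % ℓ = z % ℓ) (hlt : z < w i) : z + ℓ ≤ w i := by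
    have hdvd : ℓ ∣ w i - z := (Nat.modEq_iff_dvd' hlt.le).1 hmod.symm
    have := Nat.le_of_dvd (by omega) hdvd
    omega
  let v (i : Fin N) : ℕ := if w i % ℓ = z % ℓ ∧ z < w i then w i - ℓ else w i
  have hmem (i : Fin N) : i ∈ runnerAbove ℓ z v ↔ w i % ℓ = z % ℓ ∧ z < w i := by
    rw [mem_runnerAbove]
    by_cases h : w i % ℓ = z % ℓ ∧ z < w i
    · have hle := hgap h.1 h.2
      have hmod : (w i - ℓ) % ℓ = z % ℓ := by
        rw [← h.1, ← Nat.add_mod_right, Nat.sub_add_cancel (by omega)]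
      simp only [v, if_pos h, h, hmod, true_and, and_self, iff_true]
      omega
    · simp only [v, if_neg h, (hz i).symm.le_iff_lt]
  have hshift : shiftOn ℓ (runnerAbove ℓ z v) v = w := by
    funext i
    simp only [shiftOn, hmem]
    split_ifs with h
    · have := hgap h.1 h.2
      simp only [v, if_pos h]
      omega
    · simp only [v, if_neg h]
  refine ⟨v, fun i j hij => hw ?_, ?_, hshift⟩
  · have hiff : i ∈ runnerAbove ℓ z v ↔ j ∈ runnerAbove ℓ z v := by
      rw [mem_runnerAbove, mem_runnerAbove, hij]
    rw [← hshift, shiftOn, shiftOn, hij]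
    simp only [hiff]
  · obtain ⟨i, hi⟩ := hz'
    have hne := hz i
    exact ⟨i, (hmem i).2 ⟨by rw [hi, Nat.add_mod_right], by omega⟩⟩

/-- The permutations without a cycle (or fixed point) of length divisible by `ℓ`. For `ℓ` prime
these are the `ℓ`-regular elements, see `cycleRegular_eq_pRegular`. -/
def cycleRegular (ℓ n : ℕ) : Set (Equiv.Perm (Fin n)) := {g | ∀ a ∈ g.partition.parts, ¬ℓ ∣ a}

lemma mem_cycleRegular {g : Equiv.Perm (Fin n)} :
    g ∈ cycleRegular ℓ n ↔ ∀ a ∈ g.partition.parts, ¬ℓ ∣ a := Iff.rfl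

lemma truncCF_units_smul {G : Type} (C : Set G) (e : ℤˣ) (φ : G → ℂ) :
    truncCF C (e • φ) = e • truncCF C φ := by
  funext g
  rw [Pi.smul_apply, truncCF, truncCF, Pi.smul_apply]
  split_ifs
  · rfl
  · rw [smul_zero]

lemma sum_truncCF_frobeniusChar_shiftOn_eq_zero (hℓ : 0 < ℓ) (hN : n ≤ N) {v : Fin N → ℕ}
    (hv : Function.Injective v) {S : Finset (Fin N)} (hS : S.Nonempty)
    (hsum : ∑ i, shiftOn ℓ S v i = N.choose 2 + n) :
    ∑ T ∈ powersetCard #S univ, truncCF (cycleRegular ℓ n) (frobeniusChar n (shiftOn ℓ T v)) =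
      0 := by
  have hle := choose_two_card_le_sum (univ.image v)
  rw [card_image_of_injective _ hv, sum_image hv.injOn, card_univ, Fintype.card_fin] at hle
  rw [sum_shiftOn] at hsum
  funext g
  rw [Finset.sum_apply, Pi.zero_apply]
  by_cases hg : g ∈ cycleRegular ℓ n
  · simp only [truncCF, if_pos hg, frobeniusChar]
    exact sum_frobeniusValue_shiftOn_eq_zero hℓ hN hS.card_pos hsum hle hg
  · simp only [truncCF, if_neg hg, sum_const_zero]

lemma truncCF_frobeniusChar_mem {w : Fin N → ℕ} {C : Set (Equiv.Perm (Fin n))}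
    {M : Submodule ℤ (Equiv.Perm (Fin n) → ℂ)}
    (h : Function.Injective w → truncCF C (betaChar N n (univ.image w)) ∈ M) :
    truncCF C (frobeniusChar n w) ∈ M := by
  by_cases hw : Function.Injective w
  · obtain ⟨e, he⟩ := exists_frobeniusChar_eq_smul_betaChar n hw
    rw [he, truncCF_units_smul]
    exact M.smul_mem (e : ℤ) (h hw)
  · have hzero : truncCF C (frobeniusChar n w) = 0 := by
      funext g
      simp [truncCF, frobeniusChar, frobeniusValue_eq_zero_of_not_injective hw]
    rw [hzero]
    exact M.zero_mem

/-- If a bead of the runner `m` can be moved down, the relation moving all the beads above the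
resulting gap expresses the truncated character through beta sets of smaller energy. -/
theorem truncCF_betaChar_mem_span (hℓ : 0 < ℓ) (hN : n ≤ N) (hX : X ∈ betaSets N n) :
    truncCF (cycleRegular ℓ n) (betaChar N n X) ∈ Submodule.span ℤ
      (truncCF (cycleRegular ℓ n) '' (betaChar N n '' flushBetaSets ℓ m N n)) := by
  induction hE : residueEnergy ℓ m X using Nat.strong_induction_on generalizing X with
  | _ E ih =>
  by_cases hflush : X ∈ flushBetaSets ℓ m N n
  · exact Submodule.subset_span ⟨_, ⟨X, hflush, rfl⟩, rfl⟩
  rw [mem_flushBetaSets] at hflush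
  push Not at hflush
  obtain ⟨z, rfl, hzX, hz⟩ := hflush hX
  have hcard := (mem_betaSets.1 hX).1
  have hmem (x : ℕ) : x ∈ X ↔ ∃ i, sortedVector N X i = x := by
    conv_lhs => rw [← image_sortedVector hcard]
    simp
  obtain ⟨v, hv, hS, hshift⟩ := exists_shiftOn_runnerAbove_eq (sortedVector_injective hcard)
    (fun i hi => hz ((hmem z).2 ⟨i, hi⟩)) ((hmem _).1 hzX)
  have hw := isBetaVector_sortedVector hX
  have hrel := sum_truncCF_frobeniusChar_shiftOn_eq_zero hℓ hN hv hS (by rw [hshift, hw.2])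
  rw [← add_sum_erase _ _ (mem_powersetCard.2 ⟨subset_univ _, rfl⟩), hshift] at hrel
  obtain ⟨e, he⟩ := exists_frobeniusChar_eq_smul_betaChar n hw.1
  rw [image_sortedVector hcard] at he
  rw [he, truncCF_units_smul] at hrel
  rw [← Submodule.smul_mem_iff' _ e, eq_neg_of_add_eq_zero_left hrel]
  refine Submodule.neg_mem _ (Submodule.sum_mem _ fun T hT => truncCF_frobeniusChar_mem fun hinj =>
    ih _ ?_ ?_ rfl)
  · rw [← hE, ← image_sortedVector hcard, ← hshift]
    exact residueEnergy_image_shiftOn_lt hℓ (mem_powersetCard.1 (mem_of_mem_erase hT)).2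
      (ne_of_mem_erase hT) hinj (hshift ▸ hw.1)
  · refine IsBetaVector.image_mem_betaSets ⟨hinj, ?_⟩
    rw [sum_shiftOn, (mem_powersetCard.1 (mem_of_mem_erase hT)).2, ← sum_shiftOn, hshift, hw.2]

end Spanning

/-! ### The character table and its regular columns -/

section Table

variable {n N ℓ m : ℕ}

lemma exists_parts_partition_eq (l : Nat.Partition n) :
    ∃ g : Equiv.Perm (Fin n), g.partition.parts = l.parts := by
  have hone : ∀ a ∈ l.parts.filter (¬2 ≤ ·), a = 1 := fun a ha => by
    have := l.parts_pos (Multiset.mem_filter.1 ha).1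
    have := (Multiset.mem_filter.1 ha).2
    omega
  have hsum : (l.parts.filter (2 ≤ ·)).sum + Multiset.card (l.parts.filter (¬2 ≤ ·)) = n := by
    conv_rhs => rw [← l.parts_sum, ← Multiset.filter_add_not (2 ≤ ·) l.parts, Multiset.sum_add,
      Multiset.eq_replicate_card.2 hone, Multiset.sum_replicate, smul_eq_mul, mul_one]
  obtain ⟨g, hg⟩ := (Equiv.Perm.exists_with_cycleType_iff (α := Fin n)
    (m := l.parts.filter (2 ≤ ·))).2
      ⟨by rw [Fintype.card_fin]; omega, fun a ha => (Multiset.mem_filter.1 ha).2⟩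
  refine ⟨g, ?_⟩
  rw [Equiv.Perm.parts_partition, ← Equiv.Perm.sum_cycleType, hg, Fintype.card_fin,
    Nat.sub_eq_of_eq_add' hsum.symm, ← Multiset.eq_replicate_card.2 hone,
    Multiset.filter_add_not]

/-- A chosen permutation of cycle type `l`, to index the columns of the character table by
partitions. -/
def permOfPartition (l : Nat.Partition n) : Equiv.Perm (Fin n) :=
  (exists_parts_partition_eq l).choose

lemma parts_partition_permOfPartition (l : Nat.Partition n) :
    (permOfPartition l).partition.parts = l.parts :=
  (exists_parts_partition_eq l).choose_spec

lemma betaChar_congr {g h : Equiv.Perm (Fin n)} (hgh : g.partition.parts = h.partition.parts)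
    (N : ℕ) (X : Finset ℕ) : betaChar N n X g = betaChar N n X h := by
  obtain ⟨e, he⟩ := exists_betaChar_eq_smul N n X
  rw [he, he, hgh]

lemma permOfPartition_mem_cycleRegular {l : Nat.Partition n}
    (hl : l ∈ Nat.Partition.restricted n (¬ℓ ∣ ·)) : permOfPartition l ∈ cycleRegular ℓ n := by
  rw [mem_cycleRegular, parts_partition_permOfPartition]
  exact (mem_filter.1 hl).2

lemma eq_zero_of_sum_mul_betaChar_eq_zero (hn : n ≤ N) {c : Nat.Partition n → ℂ}
    (h : ∀ X ∈ betaSets N n, ∑ l, c l * betaChar N n X (permOfPartition l) = 0) : c = 0 := by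
  refine eq_zero_of_sum_mul_frobeniusValue_eq_zero hn c fun w hw => ?_
  obtain ⟨e, he⟩ := exists_frobeniusChar_eq_smul_betaChar n hw.1
  have hvalue (l : Nat.Partition n) : frobeniusValue w l.parts =
      e • betaChar N n (univ.image w) (permOfPartition l) := by
    rw [← parts_partition_permOfPartition l]
    exact congrFun he _
  simp only [hvalue, mul_smul_comm]
  rw [← smul_sum, h _ hw.image_mem_betaSets, smul_zero]

theorem card_betaSets_le : #(betaSets N n) ≤ Fintype.card (Nat.Partition n) := by
  have hchar : LinearIndependent ℂ fun X : betaSets N n => betaChar N n X :=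
    linearIndependent_irrChar.comp (fun X : betaSets N n => ⟨_, betaChar_mem_irrChar X.2⟩)
      fun X Y h => Subtype.ext (betaChar_injOn N n X.2 Y.2 (congrArg Subtype.val h))
  have hrows : LinearIndependent ℂ
      fun (X : betaSets N n) (l : Nat.Partition n) => betaChar N n X (permOfPartition l) := by
    rw [Fintype.linearIndependent_iff] at hchar ⊢
    refine fun c hc => hchar c (funext fun g => ?_)
    let l : Nat.Partition n :=
      ⟨g.partition.parts, g.partition.parts_pos, by simpa using g.partition.parts_sum⟩
    have hg := betaChar_congr (parts_partition_permOfPartition l) N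
    simpa [hg] using congrFun hc l
  simpa using hrows.fintype_card_le_finrank

theorem card_partition_le_card_betaSets (hn : n ≤ N) :
    Fintype.card (Nat.Partition n) ≤ #(betaSets N n) := by
  have hcolumns : LinearIndependent ℂ
      fun (l : Nat.Partition n) (X : betaSets N n) => betaChar N n X (permOfPartition l) := by
    rw [Fintype.linearIndependent_iff]
    refine fun c hc => congrFun (eq_zero_of_sum_mul_betaChar_eq_zero hn fun X hX => ?_)
    simpa using congrFun hc ⟨X, hX⟩
  simpa using hcolumns.fintype_card_le_finrank

/-- The part of the character table of `S_n` with columns the `ℓ`-regular cycle types and rows the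
flush beta sets. -/
def regularTable (ℓ m N n : ℕ) :
    Matrix (Nat.Partition.restricted n (¬ℓ ∣ ·)) (flushBetaSets ℓ m N n) ℂ :=
  Matrix.of fun l X => betaChar N n X (permOfPartition l.1)

lemma sum_mul_betaChar_eq_zero_of_flushBetaSets (hℓ : 0 < ℓ) (hn : n ≤ N)
    {c : Nat.Partition.restricted n (¬ℓ ∣ ·) → ℂ}
    (h : ∀ X ∈ flushBetaSets ℓ m N n, ∑ l, c l * betaChar N n X (permOfPartition l.1) = 0)
    {X : Finset ℕ} (hX : X ∈ betaSets N n) :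
    ∑ l, c l * betaChar N n X (permOfPartition l.1) = 0 := by
  let φ : (Equiv.Perm (Fin n) → ℂ) →ₗ[ℤ] ℂ :=
    ∑ l, (LinearMap.mulLeft ℤ (c l)).comp (LinearMap.proj (permOfPartition l.1))
  have hφ (Y : Finset ℕ) : φ (truncCF (cycleRegular ℓ n) (betaChar N n Y)) =
      ∑ l, c l * betaChar N n Y (permOfPartition l.1) := by
    simp [φ, truncCF, permOfPartition_mem_cycleRegular]
  have hle : Submodule.span ℤ (truncCF (cycleRegular ℓ n) '' (betaChar N n ''
      flushBetaSets ℓ m N n)) ≤ LinearMap.ker φ := by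
    rw [Submodule.span_le]
    rintro _ ⟨_, ⟨Y, hY, rfl⟩, rfl⟩
    exact (hφ Y).trans (h Y hY)
  rw [← hφ]
  exact hle (truncCF_betaChar_mem_span hℓ hn hX)

theorem linearIndependent_row_regularTable (hℓ : 0 < ℓ) (hn : n ≤ N) :
    LinearIndependent ℂ (regularTable ℓ m N n).row := by
  rw [Fintype.linearIndependent_iff]
  intro c hc l
  have hflush (X) (hX : X ∈ flushBetaSets ℓ m N n) :
      ∑ l, c l * betaChar N n X (permOfPartition l.1) = 0 := by
    simpa [regularTable] using congrFun hc ⟨X, hX⟩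
  let c' (l : Nat.Partition n) : ℂ :=
    if h : l ∈ Nat.Partition.restricted n (¬ℓ ∣ ·) then c ⟨l, h⟩ else 0
  have hc' : c' = 0 := eq_zero_of_sum_mul_betaChar_eq_zero hn fun X hX => by
    rw [← sum_mul_betaChar_eq_zero_of_flushBetaSets hℓ hn hflush hX]
    rw [← sum_subset (subset_univ (Nat.Partition.restricted n (¬ℓ ∣ ·)))
      fun l _ hl => by simp only [c', dif_neg hl, zero_mul], ← sum_coe_sort]
    simp [c']
  simpa [c'] using congrFun hc' l

theorem card_restricted_le_card_flushBetaSets (hℓ : 0 < ℓ) (hn : n ≤ N) :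
    #(Nat.Partition.restricted n (¬ℓ ∣ ·)) ≤ #(flushBetaSets ℓ m N n) := by
  simpa using (linearIndependent_row_regularTable hℓ hn).fintype_card_le_finrank

lemma linearIndependent_col_of_card_eq {ι κ K : Type*} [Fintype ι] [Fintype κ] [Field K]
    {A : Matrix ι κ K} (h : LinearIndependent K A.row)
    (hcard : Fintype.card ι = Fintype.card κ) : LinearIndependent K A.col := by
  rw [linearIndependent_iff_card_eq_finrank_span, ← hcard, ← h.rank_matrix,
    A.rank_eq_finrank_span_cols]
  rfl

end Table

/-! ### Replacing a runner of the abacus -/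

section Runner

variable {ℓ m : ℕ}

/-- The beads of `W` of residue `m` modulo `ℓ`, as positions on their runner of the `ℓ`-abacus. -/
def runner (ℓ m : ℕ) (W : Finset ℕ) : Finset ℕ := {x ∈ W | x % ℓ = m}.image (· / ℓ)

/-- The bead configuration `Z` with its runner of residue `m` replaced by `Q`. -/
def replaceRunner (ℓ m : ℕ) (Z Q : Finset ℕ) : Finset ℕ :=
  {x ∈ Z | x % ℓ ≠ m} ∪ Q.image (m + ℓ * ·)

lemma add_mul_mod_eq (hm : m < ℓ) (q : ℕ) : (m + ℓ * q) % ℓ = m := by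
  rw [Nat.add_mul_mod_self_left, Nat.mod_eq_of_lt hm]

lemma add_mul_div_eq (hm : m < ℓ) (q : ℕ) : (m + ℓ * q) / ℓ = q := by
  rw [Nat.add_mul_div_left _ _ (m.zero_le.trans_lt hm), Nat.div_eq_of_lt hm, zero_add]

lemma add_mul_injective (hm : m < ℓ) : Function.Injective (m + ℓ * · : ℕ → ℕ) :=
  Function.LeftInverse.injective (g := (· / ℓ)) (add_mul_div_eq hm)

lemma mem_runner (hm : m < ℓ) {W : Finset ℕ} {q : ℕ} : q ∈ runner ℓ m W ↔ m + ℓ * q ∈ W := by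
  simp only [runner, mem_image, mem_filter]
  constructor
  · rintro ⟨x, ⟨hx, rfl⟩, rfl⟩
    rwa [Nat.mod_add_div]
  · exact fun h => ⟨_, ⟨h, add_mul_mod_eq hm q⟩, add_mul_div_eq hm q⟩

lemma replaceRunner_runner (W : Finset ℕ) : replaceRunner ℓ m W (runner ℓ m W) = W := by
  have himage : (runner ℓ m W).image (m + ℓ * ·) = {x ∈ W | x % ℓ = m} := by
    rw [runner, image_image]
    refine (image_congr fun x hx => ?_).trans image_id
    rw [Function.comp_apply, ← (mem_filter.1 hx).2, Nat.mod_add_div, id]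
  rw [replaceRunner, himage, union_comm]
  exact filter_union_filter_not_eq _ W

lemma runner_replaceRunner (hm : m < ℓ) (Z Q : Finset ℕ) :
    runner ℓ m (replaceRunner ℓ m Z Q) = Q := by
  ext q
  rw [mem_runner hm, replaceRunner, mem_union, mem_filter,
    (add_mul_injective hm).mem_finset_image]
  simp [add_mul_mod_eq hm]

lemma filter_replaceRunner (hm : m < ℓ) (Z Q : Finset ℕ) :
    {x ∈ replaceRunner ℓ m Z Q | x % ℓ ≠ m} = {x ∈ Z | x % ℓ ≠ m} := by
  rw [replaceRunner, filter_union, filter_filter, filter_eq_empty_iff (s := Q.image _) |>.2,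
    union_empty]
  · simp only [and_self]
  · rintro _ hx
    obtain ⟨q, -, rfl⟩ := mem_image.1 hx
    exact not_not.2 (add_mul_mod_eq hm q)

lemma disjoint_filter_image (hm : m < ℓ) (Z Q : Finset ℕ) :
    Disjoint {x ∈ Z | x % ℓ ≠ m} (Q.image (m + ℓ * ·)) := by
  rw [disjoint_right]
  intro x hx hx'
  obtain ⟨q, -, rfl⟩ := mem_image.1 hx
  exact (mem_filter.1 hx').2 (add_mul_mod_eq hm q)

lemma card_replaceRunner (hm : m < ℓ) (Z Q : Finset ℕ) :
    #(replaceRunner ℓ m Z Q) = #{x ∈ Z | x % ℓ ≠ m} + #Q := by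
  rw [replaceRunner, card_union_of_disjoint (disjoint_filter_image hm Z Q),
    card_image_of_injective _ (add_mul_injective hm)]

lemma sum_replaceRunner (hm : m < ℓ) (Z Q : Finset ℕ) :
    ∑ x ∈ replaceRunner ℓ m Z Q, x =
      ∑ x ∈ Z with x % ℓ ≠ m, x + (m * #Q + ℓ * ∑ q ∈ Q, q) := by
  rw [replaceRunner, sum_union (disjoint_filter_image hm Z Q),
    sum_image (add_mul_injective hm).injOn, sum_add_distrib, sum_const, mul_sum, smul_eq_mul,
    mul_comm m]

lemma eq_range_card_of_succ_mem {s : Finset ℕ} (h : ∀ q, q + 1 ∈ s → q ∈ s) : s = range #s := by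
  have hanti : Antitone (· ∈ s) := antitone_nat_of_succ_le h
  refine eq_of_subset_of_card_le (fun q hq => mem_range.2 ?_) (card_range _).le
  have hsub : range (q + 1) ⊆ s := fun j hj => hanti (mem_range_succ_iff.1 hj) hq
  simpa using card_le_card hsub

variable {N n k : ℕ} {Z Q : Finset ℕ}

lemma runner_eq_range (hm : m < ℓ) (hZ : Z ∈ flushBetaSets ℓ m N n) :
    runner ℓ m Z = range #(runner ℓ m Z) := by
  refine eq_range_card_of_succ_mem fun q hq => ?_
  rw [mem_runner hm] at hq ⊢
  exact (mem_flushBetaSets.1 hZ).2 _ (add_mul_mod_eq hm q) (by rwa [mul_add_one, ← add_assoc] at hq)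

lemma le_card_runner (hm : m < ℓ) (hZ : Z ∈ betaSets N n) (h : n + ℓ * k ≤ N) :
    k ≤ #(runner ℓ m Z) := by
  have hsub : range k ⊆ runner ℓ m Z := fun q hq => by
    rw [mem_runner hm]
    refine mem_of_add_lt_of_mem_betaSets hZ ?_
    have := Nat.mul_le_mul_left ℓ (Nat.succ_le_of_lt (mem_range.1 hq))
    rw [Nat.mul_succ] at this
    omega
  simpa using card_le_card hsub

lemma replaceRunner_mem_betaSets (hm : m < ℓ) (hZ : Z ∈ flushBetaSets ℓ m N n)
    (hQ : Q ∈ betaSets #(runner ℓ m Z) k) : replaceRunner ℓ m Z Q ∈ betaSets N (n + ℓ * k) := by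
  obtain ⟨hcardZ, hsumZ⟩ := mem_betaSets.1 (mem_flushBetaSets.1 hZ).1
  obtain ⟨hcardQ, hsumQ⟩ := mem_betaSets.1 hQ
  have hcard := card_replaceRunner hm Z (runner ℓ m Z)
  have hsum := sum_replaceRunner hm Z (runner ℓ m Z)
  have hrunner : ∑ q ∈ runner ℓ m Z, q = (#(runner ℓ m Z)).choose 2 := by
    conv_lhs => rw [runner_eq_range hm hZ]
    rw [sum_range_id, Nat.choose_two_right]
  rw [replaceRunner_runner] at hcard hsum
  rw [mem_betaSets, card_replaceRunner hm, sum_replaceRunner hm, hcardQ, hsumQ, mul_add]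
  rw [hrunner] at hsum
  omega

lemma replaceRunner_inj (hm : m < ℓ) {Z' Q' : Finset ℕ} {n' : ℕ}
    (hZ : Z ∈ flushBetaSets ℓ m N n) (hZ' : Z' ∈ flushBetaSets ℓ m N n')
    (hQ : #Q = #(runner ℓ m Z)) (hQ' : #Q' = #(runner ℓ m Z'))
    (h : replaceRunner ℓ m Z Q = replaceRunner ℓ m Z' Q') : Z = Z' ∧ Q = Q' := by
  obtain rfl : Q = Q' := by rw [← runner_replaceRunner hm Z Q, h, runner_replaceRunner hm]
  have hfilter : {x ∈ Z | x % ℓ ≠ m} = {x ∈ Z' | x % ℓ ≠ m} := by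
    rw [← filter_replaceRunner hm Z Q, h, filter_replaceRunner hm]
  have hrunner : runner ℓ m Z = runner ℓ m Z' := by
    rw [runner_eq_range hm hZ, runner_eq_range hm hZ', ← hQ, ← hQ']
  refine ⟨?_, rfl⟩
  rw [← replaceRunner_runner (ℓ := ℓ) (m := m) Z, ← replaceRunner_runner (ℓ := ℓ) (m := m) Z',
    replaceRunner, replaceRunner, hfilter, hrunner]

theorem sum_card_flushBetaSets_mul_le (hm : m < ℓ) (hn : n ≤ N) :
    ∑ k ∈ range (n / ℓ + 1),
      #(flushBetaSets ℓ m N (n - ℓ * k)) * Fintype.card (Nat.Partition k) ≤ #(betaSets N n) := by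
  have hle {k : ℕ} (hk : k ∈ range (n / ℓ + 1)) : ℓ * k ≤ n :=
    (Nat.mul_le_mul_left ℓ (mem_range_succ_iff.1 hk)).trans (Nat.mul_div_le n ℓ)
  let S : Finset (Σ _ : ℕ, Σ _ : Finset ℕ, Finset ℕ) := (range (n / ℓ + 1)).sigma fun k =>
    (flushBetaSets ℓ m N (n - ℓ * k)).sigma fun Z => betaSets #(runner ℓ m Z) k
  calc _ ≤ #S := by
        rw [card_sigma]
        refine sum_le_sum fun k hk => ?_
        rw [card_sigma, ← smul_eq_mul]
        refine card_nsmul_le_sum _ _ _ fun Z hZ => card_partition_le_card_betaSets ?_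
        exact le_card_runner hm (mem_flushBetaSets.1 hZ).1 (by rwa [Nat.sub_add_cancel (hle hk)])
    _ ≤ #(betaSets N n) := by
        refine card_le_card_of_injOn (fun t => replaceRunner ℓ m t.2.1 t.2.2) ?_ ?_
        · rintro ⟨k, Z, Q⟩ h
          obtain ⟨hk, h⟩ := mem_sigma.1 h
          obtain ⟨hZ, hQ⟩ := mem_sigma.1 h
          have hmem := replaceRunner_mem_betaSets hm hZ hQ
          rwa [Nat.sub_add_cancel (hle hk)] at hmem
        · rintro ⟨k, Z, Q⟩ h ⟨k', Z', Q'⟩ h' heq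
          obtain ⟨hZ, hQ⟩ := mem_sigma.1 (mem_sigma.1 h).2
          obtain ⟨hZ', hQ'⟩ := mem_sigma.1 (mem_sigma.1 h').2
          rw [mem_betaSets] at hQ hQ'
          obtain ⟨rfl, rfl⟩ := replaceRunner_inj hm hZ hZ' hQ.1 hQ'.1 heq
          obtain rfl : k = k' := Nat.add_left_cancel (hQ.2.symm.trans hQ'.2)
          rfl

end Runner

/-! ### The number of flush beta sets -/

section Counting

variable {ℓ m n N : ℕ}

lemma exists_parts_eq_add_map (hℓ : 0 < ℓ) (l : Nat.Partition n) :
    ∃ k, ℓ * k ≤ n ∧ ∃ r ∈ Nat.Partition.restricted (n - ℓ * k) (¬ℓ ∣ ·),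
      ∃ q : Nat.Partition k, l.parts = r.parts + q.parts.map (ℓ * ·) := by
  let quot : Multiset ℕ := (l.parts.filter (ℓ ∣ ·)).map (· / ℓ)
  have hquot : quot.map (ℓ * ·) = l.parts.filter (ℓ ∣ ·) := by
    rw [Multiset.map_map, Multiset.map_congr rfl (g := id), Multiset.map_id]
    exact fun a ha => Nat.mul_div_cancel' (Multiset.mem_filter.1 ha).2
  have hparts : l.parts = l.parts.filter (¬ℓ ∣ ·) + quot.map (ℓ * ·) := by
    rw [hquot, add_comm, Multiset.filter_add_not]
  have hsum : (l.parts.filter (¬ℓ ∣ ·)).sum + ℓ * quot.sum = n := by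
    have := congrArg Multiset.sum hparts
    rwa [l.parts_sum, Multiset.sum_add, Multiset.sum_map_mul_left, Multiset.map_id', eq_comm]
      at this
  have hpos : ∀ a ∈ quot, 0 < a := fun a ha => by
    obtain ⟨b, hb, rfl⟩ := Multiset.mem_map.1 ha
    obtain ⟨hb, hdvd⟩ := Multiset.mem_filter.1 hb
    exact Nat.div_pos (Nat.le_of_dvd (l.parts_pos hb) hdvd) hℓ
  refine ⟨quot.sum, by omega, ⟨l.parts.filter (¬ℓ ∣ ·),
    fun h => l.parts_pos (Multiset.mem_filter.1 h).1, by omega⟩, ?_, ⟨quot, hpos _, rfl⟩, hparts⟩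
  exact mem_filter.2 ⟨mem_univ _, fun a ha => (Multiset.mem_filter.1 ha).2⟩

theorem card_partition_le_sum (hℓ : 0 < ℓ) (n : ℕ) :
    Fintype.card (Nat.Partition n) ≤ ∑ k ∈ range (n / ℓ + 1),
      #(Nat.Partition.restricted (n - ℓ * k) (¬ℓ ∣ ·)) * Fintype.card (Nat.Partition k) := by
  let S : Finset (Σ k, Nat.Partition (n - ℓ * k) × Nat.Partition k) :=
    (range (n / ℓ + 1)).sigma fun k => Nat.Partition.restricted (n - ℓ * k) (¬ℓ ∣ ·) ×ˢ univ
  have hinj : Function.Injective (Nat.Partition.parts : Nat.Partition n → Multiset ℕ) :=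
    fun _ _ => Nat.Partition.ext
  calc Fintype.card (Nat.Partition n)
      = #((univ : Finset (Nat.Partition n)).image Nat.Partition.parts) :=
        (card_image_of_injective _ hinj).symm
    _ ≤ #S := by
        refine card_le_card_of_surjOn (fun t => t.2.1.parts + t.2.2.parts.map (ℓ * ·)) ?_
        intro _ hs
        obtain ⟨l, -, rfl⟩ := mem_image.1 hs
        obtain ⟨k, hk, r, hr, q, hl⟩ := exists_parts_eq_add_map hℓ l
        have hk' : k ≤ n / ℓ := (Nat.le_div_iff_mul_le hℓ).2 (by rwa [mul_comm])
        exact ⟨⟨k, r, q⟩, mem_sigma.2 ⟨mem_range_succ_iff.2 hk',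
          mem_product.2 ⟨hr, mem_univ q⟩⟩, hl.symm⟩
    _ = _ := by simp only [S, card_sigma, card_product, card_univ]

/-- Put `a k = #(restricted (n - ℓ k)) #(Partition k)` and
`b k = #(flushBetaSets ℓ m N (n - ℓ k)) #(Partition k)`. Then `a k ≤ b k`, while
`∑ b k ≤ #(betaSets N n) ≤ #(Partition n) ≤ ∑ a k`. So all these are equalities, and the term
`k = 0` is the claim. -/
theorem card_restricted_eq_card_flushBetaSets (hm : m < ℓ) (hn : n ≤ N) :
    #(Nat.Partition.restricted n (¬ℓ ∣ ·)) = #(flushBetaSets ℓ m N n) := by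
  have hℓ : 0 < ℓ := m.zero_le.trans_lt hm
  have hle : ∀ k ∈ range (n / ℓ + 1),
      #(Nat.Partition.restricted (n - ℓ * k) (¬ℓ ∣ ·)) * Fintype.card (Nat.Partition k) ≤
        #(flushBetaSets ℓ m N (n - ℓ * k)) * Fintype.card (Nat.Partition k) := fun k _ =>
    Nat.mul_le_mul_right _
      (card_restricted_le_card_flushBetaSets hℓ ((Nat.sub_le _ _).trans hn))
  have heq := (sum_eq_sum_iff_of_le hle).1 (le_antisymm (sum_le_sum hle)
    ((sum_card_flushBetaSets_mul_le hm hn).trans (card_betaSets_le.trans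
      (card_partition_le_sum hℓ n))))
  simpa using heq 0 (by simp)

end Counting

/-! ### Sign-stable basic sets -/

section BasicSets

variable {ℓ m N n : ℕ}

theorem linearIndependent_truncCF_betaChar (hm : m < ℓ) (hn : n ≤ N) :
    LinearIndependent ℤ fun X : flushBetaSets ℓ m N n =>
      truncCF (cycleRegular ℓ n) (betaChar N n X) := by
  have hcol : LinearIndependent ℂ (regularTable ℓ m N n).col :=
    linearIndependent_col_of_card_eq
      (linearIndependent_row_regularTable (m.zero_le.trans_lt hm) hn)
      (by simpa using card_restricted_eq_card_flushBetaSets hm hn)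
  refine LinearIndependent.restrict_scalars' ℤ (LinearIndependent.of_comp (LinearMap.funLeft ℂ ℂ
    fun l : Nat.Partition.restricted n (¬ℓ ∣ ·) => permOfPartition l.1) ?_)
  convert hcol using 1
  ext X l
  exact if_pos (permOfPartition_mem_cycleRegular l.2)

theorem isBasicSetOf_image_betaChar (hm : m < ℓ) (hn : n ≤ N) :
    IsBasicSetOf (cycleRegular ℓ n) (IrrChar (Equiv.Perm (Fin n)))
      (betaChar N n '' flushBetaSets ℓ m N n) := by
  have hsub : betaChar N n '' flushBetaSets ℓ m N n ⊆ IrrChar (Equiv.Perm (Fin n)) := by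
    rintro _ ⟨X, hX, rfl⟩
    exact betaChar_mem_irrChar (mem_flushBetaSets.1 hX).1
  have hinj : Set.InjOn (betaChar N n) (flushBetaSets ℓ m N n) :=
    (betaChar_injOn N n).mono fun X hX => (mem_flushBetaSets.1 hX).1
  refine ⟨hsub, ?_, le_antisymm (Submodule.span_mono (Set.image_mono hsub))
    (Submodule.span_le.2 ?_)⟩
  · exact (linearIndependent_equiv' (Equiv.Set.imageOfInjOn _ _ hinj) rfl).1
      (linearIndependent_truncCF_betaChar hm hn)
  · rintro _ ⟨ψ, hψ, rfl⟩
    obtain ⟨X, hX, rfl⟩ := exists_eq_betaChar hn hψ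
    exact truncCF_betaChar_mem_span (m.zero_le.trans_lt hm) hn hX

lemma conjBetaSet_mem_flushBetaSets (hn : n ≤ N) (hm : 2 * m + 1 ≡ 2 * N [MOD ℓ])
    {X : Finset ℕ} (hX : X ∈ flushBetaSets ℓ m N n) :
    conjBetaSet N X ∈ flushBetaSets ℓ m N n := by
  rw [mem_flushBetaSets] at hX ⊢
  refine ⟨conjBetaSet_mem_betaSets hn hX.1, fun z hz hzX => ?_⟩
  rw [mem_conjBetaSet] at hzX ⊢
  refine ⟨by omega, fun hmem => hzX.2 ?_⟩
  have hmod : 2 * N - 1 - (z + ℓ) ≡ z [MOD ℓ] := by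
    refine Nat.ModEq.add_right_cancel' (z + 1 + ℓ) ?_
    have hzm : m ≡ z [MOD ℓ] := by rw [Nat.ModEq, hz, ← hz, Nat.mod_mod]
    calc 2 * N - 1 - (z + ℓ) + (z + 1 + ℓ) = 2 * N := by omega
      _ ≡ 2 * m + 1 [MOD ℓ] := hm.symm
      _ = m + (m + 1) := by ring
      _ ≡ z + (z + 1) [MOD ℓ] := hzm.add (hzm.add_right 1)
      _ ≡ z + (z + 1) + ℓ [MOD ℓ] := (Nat.add_mod_right _ _).symm
      _ = z + (z + 1 + ℓ) := add_assoc _ _ _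
  refine hX.2 _ (Eq.trans hmod hz) ?_
  rwa [show 2 * N - 1 - (z + ℓ) + ℓ = 2 * N - 1 - z by omega]

lemma exists_lt_two_mul_add_one_modEq (hodd : Odd ℓ) (n : ℕ) :
    ∃ m < ℓ, 2 * m + 1 ≡ 2 * n [MOD ℓ] := by
  obtain ⟨k, rfl⟩ := hodd
  refine ⟨(n + k) % (2 * k + 1), Nat.mod_lt _ (by omega), ?_⟩
  calc 2 * ((n + k) % (2 * k + 1)) + 1 ≡ 2 * (n + k) + 1 [MOD 2 * k + 1] :=
        ((Nat.mod_modEq _ _).mul_left 2).add_right 1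
    _ = 2 * n + (2 * k + 1) := by ring
    _ ≡ 2 * n [MOD 2 * k + 1] := Nat.add_mod_right _ _

lemma prime_dvd_multiset_lcm {α : Type*} [CommMonoidWithZero α] [NormalizedGCDMonoid α] {p : α}
    (hp : Prime p) (s : Multiset α) : p ∣ s.lcm ↔ ∃ a ∈ s, p ∣ a := by
  induction s using Multiset.induction with
  | empty => simpa [isUnit_iff_dvd_one] using hp.not_isUnit
  | cons a s ih => simp [Multiset.lcm_cons, hp.dvd_lcm, ih]

theorem cycleRegular_eq_pRegular {p : ℕ} (hp : p.Prime) (n : ℕ) :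
    cycleRegular p n = pRegular p (Equiv.Perm (Fin n)) := by
  ext g
  rw [mem_cycleRegular, pRegular, Set.mem_ofPred_eq, Nat.coprime_comm, hp.coprime_iff_not_dvd,
    ← Equiv.Perm.lcm_cycleType, prime_dvd_multiset_lcm hp.prime, Equiv.Perm.parts_partition]
  simp +contextual [or_imp, hp.one_lt.ne', Multiset.mem_replicate]

end BasicSets

end SymmetricGroup

open SymmetricGroup

theorem symmGroup_exists_sign_stable_pBasicSet_general (ℓ n : ℕ) (hodd : Odd ℓ) :
    ∃ B : Set (Equiv.Perm (Fin n) → ℂ),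
      IsBasicSetOf (cycleRegular ℓ n) (IrrChar (Equiv.Perm (Fin n))) B ∧
      ∀ χ ∈ B, (fun g => ((Equiv.Perm.sign g : ℤ) : ℂ) * χ g) ∈ B := by
  obtain ⟨m, hm, hmod⟩ := exists_lt_two_mul_add_one_modEq hodd n
  refine ⟨betaChar n n '' flushBetaSets ℓ m n n, isBasicSetOf_image_betaChar hm le_rfl, ?_⟩
  rintro _ ⟨X, hX, rfl⟩
  rw [sign_mul_betaChar le_rfl (mem_flushBetaSets.1 hX).1]
  exact ⟨_, conjBetaSet_mem_flushBetaSets le_rfl hmod hX, rfl⟩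

/-- For any odd prime `p` and any `n ≥ 1`, the symmetric group `S_n` has a `p`-basic set `B`
which is stable under multiplication by the sign character. -/
theorem symmGroup_exists_sign_stable_pBasicSet (p n : ℕ) (hp : p.Prime) (hodd : Odd p)
    (hn : 0 < n) :
    ∃ B : Set (Equiv.Perm (Fin n) → ℂ),
      IsBasicSetOf (pRegular p (Equiv.Perm (Fin n))) (IrrChar (Equiv.Perm (Fin n))) B ∧
      ∀ χ ∈ B, (fun g => ((Equiv.Perm.sign g : ℤ) : ℂ) * χ g) ∈ B :=
  cycleRegular_eq_pRegular hp n ▸ symmGroup_exists_sign_stable_pBasicSet_general p n hodd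
end
end

section
/- Let G and H be finite groups, C ⊆ G and C' ⊆ H conjugation-invariant subsets, b ⊆ Irr(G) and b' ⊆ Irr(H), and let I : b → b' with signs η : b → {1,−1} be a generalized perfect isometry from (b,C) to (b',C'). Then a subset B ⊆ b is a C-basic set of b if and only if the image I(B) = {I(χ) : χ ∈ B} ⊆ b' is a C'-basic set of b'. -/
open scoped Classical

noncomputable section

/-!
Let `K` be the module of integral relations between the vectors `χ^C`, `χ ∈ b`. A subset `B` of `b`
indexes a `ℤ`-basis of their span exactly when `ℤ^B` is a complement of `K` in `ℤ^b`: independence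
says that the two meet trivially, generation that they span `ℤ^b`. Since
`⟨χ, φ⟩_C = ⟨χ^C, φ^C⟩` and the scalar product is definite, `K` is determined by the Gram matrix
`⟨χ, φ⟩_C`, which a generalized perfect isometry preserves once the vectors are multiplied by their
signs. Signs in turn affect neither independence nor spans.
-/

section Relations

variable {R ι M N P : Type*}

section Basis

variable [Semiring R] [AddCommMonoid M] [Module R M]

variable (R) in
/-- The subfamily of `f` indexed by `s` is an `R`-basis of the span of the whole family. This is
stated for indices rather than vectors because distinct characters may have the same truncation. -/
def IsBasisIndexSet (f : ι → M) (s : Set ι) : Prop :=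
  LinearIndepOn R f s ∧ Submodule.span R (f '' s) = Submodule.span R (Set.range f)

theorem span_image_units_smul (ε : ι → Rˣ) (f : ι → M) (s : Set ι) :
    Submodule.span R ((ε • f) '' s) = Submodule.span R (f '' s) := by
  simp only [Set.image_eq_iUnion, Submodule.span_iUnion₂, Pi.smul_apply',
    Submodule.span_singleton_group_smul_eq]

theorem isBasisIndexSet_units_smul_iff {ε : ι → Rˣ} {f : ι → M} {s : Set ι} :
    IsBasisIndexSet R (ε • f) s ↔ IsBasisIndexSet R f s := by
  have hindep : LinearIndepOn R (ε • f) s ↔ LinearIndepOn R f s :=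
    LinearIndependent.units_smul_iff (fun i : s => f i) (fun i : s => ε i)
  simp only [IsBasisIndexSet, hindep, ← Set.image_univ, span_image_units_smul]

end Basis

section Kernel

variable [Ring R] [AddCommGroup M] [Module R M] {f : ι → M} {s : Set ι}

theorem isBasisIndexSet_iff_isCompl_ker :
    IsBasisIndexSet R f s ↔
      IsCompl (Finsupp.supported R R s) (LinearMap.ker (Finsupp.linearCombination R f)) := by
  rw [isCompl_iff, IsBasisIndexSet, linearIndepOn_iff_disjoint,
    Finsupp.span_image_eq_map_linearCombination, ← Finsupp.range_linearCombination,
    Submodule.map_eq_range_iff]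

theorem isBasisIndexSet_congr_of_ker_eq [AddCommGroup N] [Module R N] {g : ι → N}
    (h : LinearMap.ker (Finsupp.linearCombination R f) =
      LinearMap.ker (Finsupp.linearCombination R g)) :
    IsBasisIndexSet R f s ↔ IsBasisIndexSet R g s := by
  rw [isBasisIndexSet_iff_isCompl_ker, isBasisIndexSet_iff_isCompl_ker, h]

end Kernel

section Gram

variable [CommSemiring R] [AddCommMonoid M] [Module R M]
  [AddCommMonoid N] [Module R N] [AddCommMonoid P] [Module R P]

theorem ker_linearCombination_eq_of_gram_eq {β : M →ₗ[R] M →ₗ[R] P} {γ : N →ₗ[R] N →ₗ[R] P}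
    (hβ : ∀ x, β x x = 0 → x = 0) (hγ : ∀ y, γ y y = 0 → y = 0) {f : ι → M} {g : ι → N}
    (hgram : ∀ i j, β (f i) (f j) = γ (g i) (g j)) :
    LinearMap.ker (Finsupp.linearCombination R f) =
      LinearMap.ker (Finsupp.linearCombination R g) := by
  have hpullback : β.compl₁₂ (Finsupp.linearCombination R f) (Finsupp.linearCombination R f) =
      γ.compl₁₂ (Finsupp.linearCombination R g) (Finsupp.linearCombination R g) := by
    ext i j
    simpa using hgram i j
  ext c
  have hnorm : β (Finsupp.linearCombination R f c) (Finsupp.linearCombination R f c) =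
      γ (Finsupp.linearCombination R g c) (Finsupp.linearCombination R g c) :=
    LinearMap.congr_fun₂ hpullback c c
  simp only [LinearMap.mem_ker]
  constructor <;> intro hc
  · exact hγ _ (by simpa [hc] using hnorm.symm)
  · exact hβ _ (by simpa [hc] using hnorm)

end Gram

end Relations

section Truncation

variable {G : Type}

theorem truncCF_smul {S : Type*} [SMulZeroClass S ℂ] (C : Set G) (a : S) (φ : G → ℂ) :
    truncCF C (a • φ) = a • truncCF C φ :=
  Set.indicator_const_smul C a φ

theorem isBasicSetOf_image_iff [Group G] {ι : Type*} {C : Set G} {F : ι → G → ℂ}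
    (hF : F.Injective) {s : Set ι} :
    IsBasicSetOf C (Set.range F) (F '' s) ↔
      IsBasisIndexSet ℤ (fun i => truncCF C (F i)) s := by
  have hindep : LinearIndepOn ℤ (fun i => truncCF C (F i)) s ↔
      LinearIndepOn ℤ (truncCF C) (F '' s) :=
    linearIndependent_equiv' (hF.injOn.bijOn_image.equiv F) rfl
  rw [IsBasisIndexSet, hindep, ← Set.image_image (truncCF C) F, Set.range_comp' (truncCF C) F]
  exact and_iff_right (Set.image_subset_range F s)

variable [Fintype G]

theorem innerOn_univ_eq_dotProduct (α β : G → ℂ) :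
    innerOn Set.univ α β = (Fintype.card G : ℂ)⁻¹ * (α ⬝ᵥ star β) := by
  simp [innerOn, dotProduct]

theorem innerOn_univ_truncCF (C : Set G) (α β : G → ℂ) :
    innerOn Set.univ (truncCF C α) (truncCF C β) = innerOn C α β := by
  simp only [innerOn, truncCF, Set.mem_univ, if_true]
  refine congrArg _ (Finset.sum_congr rfl fun g _ => ?_)
  split_ifs <;> simp

open scoped ComplexOrder in
theorem eq_zero_of_innerOn_univ_self_eq_zero {α : G → ℂ} (h : innerOn Set.univ α α = 0) :
    α = 0 := by
  cases isEmpty_or_nonempty G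
  · exact Subsingleton.elim _ _
  · simpa [innerOn_univ_eq_dotProduct] using h

variable (G) in
/-- The scalar product of complex functions on `G`, viewed as a `ℤ`-bilinear form: over `ℤ` complex
conjugation is linear. -/
def innerBilin : (G → ℂ) →ₗ[ℤ] (G → ℂ) →ₗ[ℤ] ℂ :=
  LinearMap.mk₂ ℤ (innerOn Set.univ)
    (fun _ _ _ => by simp only [innerOn_univ_eq_dotProduct, add_dotProduct, mul_add])
    (fun _ _ _ => by simp only [innerOn_univ_eq_dotProduct, smul_dotProduct, mul_smul_comm])
    (fun _ _ _ => by simp only [innerOn_univ_eq_dotProduct, star_add, dotProduct_add, mul_add])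
    (fun _ _ _ => by simp only [innerOn_univ_eq_dotProduct, star_zsmul, dotProduct_smul,
      mul_smul_comm])

theorem ker_linearCombination_truncCF_eq {H : Type} {ι : Type*} [Fintype H] {C : Set G} {C' : Set H}
    {f : ι → G → ℂ} {g : ι → H → ℂ}
    (hgram : ∀ i j, innerOn C (f i) (f j) = innerOn C' (g i) (g j)) :
    LinearMap.ker (Finsupp.linearCombination ℤ fun i => truncCF C (f i)) =
      LinearMap.ker (Finsupp.linearCombination ℤ fun i => truncCF C' (g i)) :=
  ker_linearCombination_eq_of_gram_eq (β := innerBilin G) (γ := innerBilin H)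
    (fun _ => eq_zero_of_innerOn_univ_self_eq_zero)
    (fun _ => eq_zero_of_innerOn_univ_self_eq_zero) fun i j => by
      simpa only [innerBilin, LinearMap.mk₂_apply, innerOn_univ_truncCF] using hgram i j

end Truncation

theorem isBasicSetOf_iff_image_of_generalized_perfect_isometry_general
    {G H : Type} [Group G] [Fintype G] [Group H] [Fintype H]
    (C : Set G) (C' : Set H) (b : Set (G → ℂ)) (b' : Set (H → ℂ))
    (I : (G → ℂ) → (H → ℂ)) (η : (G → ℂ) → ℂ)
    (hI : Set.BijOn I b b')
    (hη : ∀ χ ∈ b, η χ = 1 ∨ η χ = -1)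
    (hiso : ∀ χ ∈ b, ∀ φ ∈ b,
      innerOn C χ φ = innerOn C' (fun h => η χ * I χ h) (fun h => η φ * I φ h))
    (B : Set (G → ℂ)) (hB : B ⊆ b) :
    IsBasicSetOf C b B ↔ IsBasicSetOf C' b' (I '' B) := by
  have hunit : ∀ χ : b, ∃ u : ℤˣ, (fun h => η χ * I χ h) = u • I χ := fun χ => by
    rcases hη χ χ.2 with h | h
    · exact ⟨1, by simp [h]⟩
    · exact ⟨-1, by simp [h, funext_iff]⟩
  choose ε hε using hunit
  lift B to Set b using hB
  have hsource : IsBasicSetOf C b (Subtype.val '' B) ↔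
      IsBasisIndexSet ℤ (fun χ : b => truncCF C χ) B := by
    rw [← isBasicSetOf_image_iff Subtype.val_injective, Subtype.range_val]
  have htarget : IsBasicSetOf C' b' (I '' (Subtype.val '' B)) ↔
      IsBasisIndexSet ℤ (fun χ : b => truncCF C' (I χ)) B := by
    rw [← isBasicSetOf_image_iff (F := fun χ : b => I χ) hI.injOn.injective, Set.image_image,
      ← hI.image_eq, Set.image_eq_range]
  have hker := ker_linearCombination_truncCF_eq (C := C) (C' := C') (f := fun χ : b => χ)
    (g := fun χ : b => ε χ • I χ) fun χ φ => by
      simpa only [hε] using hiso χ χ.2 φ φ.2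
  rw [hsource, htarget, isBasisIndexSet_congr_of_ker_eq hker]
  simp only [truncCF_smul]
  exact isBasisIndexSet_units_smul_iff

/-- A generalized perfect isometry `I` (with signs `η`) from `(b, C)` to `(b', C')` maps
`C`-basic sets of `b` exactly to `C'`-basic sets of `b'`. -/
theorem isBasicSetOf_iff_image_of_generalized_perfect_isometry
    {G H : Type} [Group G] [Fintype G] [Group H] [Fintype H]
    (C : Set G) (C' : Set H)
    (hC : ∀ g x : G, x ∈ C → g * x * g⁻¹ ∈ C)
    (hC' : ∀ h x : H, x ∈ C' → h * x * h⁻¹ ∈ C')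
    (b : Set (G → ℂ)) (b' : Set (H → ℂ))
    (hb : b ⊆ IrrChar G) (hb' : b' ⊆ IrrChar H)
    (I : (G → ℂ) → (H → ℂ)) (η : (G → ℂ) → ℂ)
    (hI : Set.BijOn I b b')
    (hη : ∀ χ ∈ b, η χ = 1 ∨ η χ = -1)
    (hiso : ∀ χ ∈ b, ∀ φ ∈ b,
      innerOn C χ φ = innerOn C' (fun h => η χ * I χ h) (fun h => η φ * I φ h))
    (B : Set (G → ℂ)) (hB : B ⊆ b) :
    IsBasicSetOf C b B ↔ IsBasicSetOf C' b' (I '' B) :=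
  isBasicSetOf_iff_image_of_generalized_perfect_isometry_general C C' b b' I η hI hη hiso B hB
end
end

section
/- Let G be a finite group and C ⊆ G a conjugation-invariant subset. If B is a C-basic set of G, then for every C-block b of G the intersection B ∩ b is a C-basic set of b. -/
/-!
Up to the factor `1/|G|`, `⟨α,β⟩_C` is the standard Hermitian form on `G → ℂ` applied to `α^C` and
`β^C`. This form is positive definite, so the lattices spanned by the truncations of `b` and of
`Irr(G) ∖ b`, being orthogonal, meet only in `0`. The lattice of `B` is the sum of those of `B ∩ b`
and `B ∖ b`, and it contains the lattice of `b`; as the latter meets that of `B ∖ b` trivially, the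
modular law identifies it with the lattice of `B ∩ b`.
-/

open scoped Classical

noncomputable section

/-- `b` is a `C`-block of `G`: a nonempty subset of `Irr G` which is orthogonal across `C`
to its complement in `Irr G`, and which is minimal (w.r.t. inclusion) among nonempty
subsets of `Irr G` with this property. -/
def IsCBlock {G : Type} [Group G] [Fintype G] (C : Set G) (b : Set (G → ℂ)) : Prop :=
  b.Nonempty ∧ b ⊆ IrrChar G ∧
  (∀ χ ∈ b, ∀ ψ ∈ IrrChar G \ b, innerOn C χ ψ = 0) ∧
  ∀ b' ⊆ b, b'.Nonempty →
    (∀ χ ∈ b', ∀ ψ ∈ IrrChar G \ b', innerOn C χ ψ = 0) → b' = b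

lemma span_image_inter_eq_of_disjoint {R M ι : Type*} [Ring R] [AddCommGroup M] [Module R M]
    {f : ι → M} {s t : Set ι} (hts : f '' t ⊆ Submodule.span R (f '' s))
    (hdisj : Disjoint (Submodule.span R (f '' t)) (Submodule.span R (f '' (s \ t)))) :
    Submodule.span R (f '' (s ∩ t)) = Submodule.span R (f '' t) := by
  refine eq_of_le_of_inf_le_of_le_sup
    (Submodule.span_mono (Set.image_mono Set.inter_subset_right))
    (hdisj.eq_bot.trans_le bot_le) ?_
  rwa [← Submodule.span_union, ← Set.image_union, Set.inter_union_sdiff, Submodule.span_le]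

section DotProduct

variable {k R ι : Type*} [Fintype ι] [Semiring k] [Star k] {S T : Set (ι → R)}

lemma dotProduct_star_eq_zero_of_mem_span [NonUnitalNonAssocSemiring R] [StarAddMonoid R]
    [Module k R] [StarModule k R] [IsScalarTower k R R] [SMulCommClass k R R]
    (h : ∀ s ∈ S, ∀ t ∈ T, s ⬝ᵥ star t = 0) {x y : ι → R}
    (hx : x ∈ Submodule.span k S) (hy : y ∈ Submodule.span k T) : x ⬝ᵥ star y = 0 := by
  induction hx, hy using Submodule.span_induction₂ with
  | mem_mem s t hs ht => exact h s hs t ht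
  | zero_left => simp
  | zero_right => simp
  | add_left _ _ _ _ _ _ h₁ h₂ => rw [add_dotProduct, h₁, h₂, add_zero]
  | add_right _ _ _ _ _ _ h₁ h₂ => rw [star_add, dotProduct_add, h₁, h₂, add_zero]
  | smul_left _ _ _ _ _ h₁ => rw [smul_dotProduct, h₁, smul_zero]
  | smul_right _ _ _ _ _ h₁ => rw [star_smul, dotProduct_smul, h₁, smul_zero]

lemma disjoint_span_of_dotProduct_star_eq_zero [NonUnitalRing R] [PartialOrder R] [StarRing R]
    [StarOrderedRing R] [NoZeroDivisors R] [Module k R] [StarModule k R] [IsScalarTower k R R]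
    [SMulCommClass k R R] (h : ∀ s ∈ S, ∀ t ∈ T, s ⬝ᵥ star t = 0) :
    Disjoint (Submodule.span k S) (Submodule.span k T) :=
  Submodule.disjoint_def.mpr fun _ hS hT =>
    dotProduct_self_star_eq_zero.mp (dotProduct_star_eq_zero_of_mem_span h hS hT)

end DotProduct

lemma innerOn_eq_dotProduct {G : Type} [Fintype G] (C : Set G) (α β : G → ℂ) :
    innerOn C α β = (Fintype.card G : ℂ)⁻¹ * (truncCF C α ⬝ᵥ star (truncCF C β)) := by
  simp [innerOn, truncCF, dotProduct, apply_ite, ← ite_and]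

lemma innerOn_eq_zero_iff {G : Type} [Fintype G] {C : Set G} {α β : G → ℂ} :
    innerOn C α β = 0 ↔ truncCF C α ⬝ᵥ star (truncCF C β) = 0 := by
  cases isEmpty_or_nonempty G <;> simp [innerOn_eq_dotProduct]

open scoped ComplexOrder in
lemma disjoint_span_truncCF_of_innerOn_eq_zero {G : Type} [Fintype G] {C : Set G}
    {S T : Set (G → ℂ)} (h : ∀ α ∈ S, ∀ β ∈ T, innerOn C α β = 0) :
    Disjoint (Submodule.span ℤ (truncCF C '' S)) (Submodule.span ℤ (truncCF C '' T)) := by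
  refine disjoint_span_of_dotProduct_star_eq_zero ?_
  rintro _ ⟨α, hα, rfl⟩ _ ⟨β, hβ, rfl⟩
  exact innerOn_eq_zero_iff.mp (h α hα β hβ)

theorem isBasicSetOf_inter_block_general {G : Type} [Group G] [Fintype G] {C : Set G}
    {X B b : Set (G → ℂ)} (hB : IsBasicSetOf C X B) (hbX : b ⊆ X)
    (horth : ∀ χ ∈ b, ∀ ψ ∈ X \ b, innerOn C χ ψ = 0) :
    IsBasicSetOf C b (B ∩ b) := by
  obtain ⟨hBX, hlin, hspan⟩ := hB
  have hlin_inter : LinearIndepOn ℤ (truncCF C) (B ∩ b) :=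
    LinearIndepOn.mono hlin Set.inter_subset_left
  have hb_span : truncCF C '' b ⊆ Submodule.span ℤ (truncCF C '' B) := by
    rw [hspan]
    exact (Set.image_mono hbX).trans Submodule.subset_span
  have hdisj : Disjoint (Submodule.span ℤ (truncCF C '' b))
      (Submodule.span ℤ (truncCF C '' (B \ b))) :=
    disjoint_span_truncCF_of_innerOn_eq_zero fun χ hχ ψ hψ =>
      horth χ hχ ψ ⟨hBX hψ.1, hψ.2⟩
  exact ⟨Set.inter_subset_right, hlin_inter, span_image_inter_eq_of_disjoint hb_span hdisj⟩

/-- If `B` is a `C`-basic set of `G`, then for every `C`-block `b` of `G`, the intersection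
`B ∩ b` is a `C`-basic set of `b`. -/
theorem isBasicSetOf_inter_block {G : Type} [Group G] [Fintype G]
    (C : Set G) (hC : ∀ g x : G, x ∈ C → g * x * g⁻¹ ∈ C)
    (B : Set (G → ℂ)) (hB : IsBasicSetOf C (IrrChar G) B)
    (b : Set (G → ℂ)) (hb : IsCBlock C b) :
    IsBasicSetOf C b (B ∩ b) := by
  obtain ⟨-, hbI, horth, -⟩ := hb
  exact isBasicSetOf_inter_block_general hB hbI horth
end
end

section
/- Let G and H be finite groups, C ⊆ G and C' ⊆ H conjugation-invariant subsets, b ⊆ Irr(G) and b' ⊆ Irr(H), and let I : b → b' with signs η : b → {1,−1} be a generalized perfect isometry from (b,C) to (b',C'). Assume moreover that ⟨χ,ψ⟩_C = 0 for all χ ∈ b and ψ ∈ Irr(G)∖b, and ⟨χ',ψ'⟩_{C'} = 0 for all χ' ∈ b' and ψ' ∈ Irr(H)∖b'. Let I_η denote the ℂ-linear isomorphism from the ℂ-span of b to the ℂ-span of b' sending χ ↦ η(χ)·I(χ). Then for every χ ∈ b, the truncation χ^C lies in the ℂ-span of b and I_η(χ^C) = (η(χ)·I(χ))^{C'}, i.e.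 I_η(χ^C) = (I_η(χ))^{C'}. -/
/-!
The irreducible characters form an orthonormal basis of the class functions. Since
`⟨χ^C, ψ⟩ = ⟨χ, ψ⟩_C`, orthogonality of `b` to its complement across `C` collapses the expansion of
the class function `χ^C` to `χ^C = ∑ ψ ∈ b, ⟨χ, ψ⟩_C ψ`, and likewise for `b'` and `C'`. Applying
`I_η` termwise turns the first expansion into the second, because `I_η` preserves the coefficients
and `conj (η ψ) * η ψ = 1`.

Orthonormality needs `conj (χ g) = χ g⁻¹`: averaging yields a positive definite form `P` that is
invariant under the representation, so that the conjugate transpose of the matrix of `g` is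
conjugate by `P` to the matrix of `g⁻¹`. For completeness, a class function `f` gives the central
element `∑ g, f(g) g⁻¹` of the group algebra. By Schur's lemma it acts as a scalar on each simple
module, with trace `|G|⟨f, χ⟩`; if `f` is orthogonal to all irreducible characters, these scalars
vanish and the element annihilates the semisimple group algebra, hence is zero.
-/

open scoped Classical

noncomputable section

open scoped MonoidAlgebra ComplexOrder ComplexConjugate

/-! ### The character of an inverse -/

section CharacterInv

lemma star_trace_eq_trace_of_conjTranspose_mul_mul_eq {R n : Type*} [CommRing R] [StarRing R]
    [Fintype n] [DecidableEq n] {P M N : Matrix n n R} (hP : IsUnit P)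
    (hM : M.conjTranspose * P * M = P) (hMN : M * N = 1) :
    star M.trace = N.trace := by
  obtain ⟨P, rfl⟩ := hP
  have hPN : P.val * N = M.conjTranspose * P.val := by
    calc P.val * N = M.conjTranspose * P.val * (M * N) := by rw [← Matrix.mul_assoc, hM]
      _ = M.conjTranspose * P.val := by rw [hMN, Matrix.mul_one]
  calc star M.trace = (M.conjTranspose * P.val * P⁻¹.val).trace := by
        rw [Units.mul_inv_cancel_right, Matrix.trace_conjTranspose]
    _ = (P⁻¹.val * (P.val * N)).trace := by rw [← hPN, Matrix.trace_mul_comm]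
    _ = N.trace := by rw [Units.inv_mul_cancel_left]

variable {K n G V : Type*} [Field K] [PartialOrder K] [StarRing K] [StarOrderedRing K]
  [Group G] [Finite G] [AddCommGroup V] [Module K V] [FiniteDimensional K V]

lemma exists_posDef_conjTranspose_mul_mul_eq [Fintype n] [DecidableEq n] (M : G →* Matrix n n K) :
    ∃ P : Matrix n n K, P.PosDef ∧ ∀ g, (M g).conjTranspose * P * M g = P := by
  have := Fintype.ofFinite G
  refine ⟨∑ h, (M h).conjTranspose * M h, ?_, fun g => ?_⟩
  · refine Matrix.posDef_sum Finset.univ_nonempty fun h _ => ?_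
    exact .conjTranspose_mul_self _
      (Matrix.mulVec_injective_of_isUnit ((Group.isUnit h).map M))
  · simp only [Finset.mul_sum, Finset.sum_mul]
    refine Fintype.sum_equiv (Equiv.mulRight g) _ _ fun h => ?_
    simp only [Equiv.coe_mulRight, map_mul, Matrix.conjTranspose_mul, Matrix.mul_assoc]

lemma star_character (ρ : Representation K G V) (g : G) :
    star (ρ.character g) = ρ.character g⁻¹ := by
  let e := Module.finBasis K V
  let M : G →* Matrix _ _ K := (LinearMap.toMatrixAlgEquiv e).toMulEquiv.toMonoidHom.comp ρ
  have htrace (g : G) : ρ.character g = (M g).trace := LinearMap.trace_eq_matrix_trace K e (ρ g)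
  obtain ⟨P, hP, hinv⟩ := exists_posDef_conjTranspose_mul_mul_eq M
  rw [htrace, htrace]
  exact star_trace_eq_trace_of_conjTranspose_mul_mul_eq hP.isUnit (hinv g)
    (by rw [← map_mul, mul_inv_cancel, map_one])

end CharacterInv

/-! ### Central elements of semisimple algebras -/

section SemisimpleAlgebra

lemma mem_annihilator_of_forall_isSimpleModule {R M : Type*} [Ring R] [AddCommGroup M] [Module R M]
    [IsSemisimpleModule R M] {r : R}
    (h : ∀ N : Submodule R M, IsSimpleModule R N → r ∈ N.annihilator) :
    r ∈ Module.annihilator R M := by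
  rw [← Submodule.annihilator_top, ← IsSemisimpleModule.sSup_simples_eq_top R M, sSup_eq_iSup',
    Submodule.annihilator_iSup, Submodule.mem_iInf]
  exact fun N => h N N.2

variable {k A : Type*} [Field k] [IsAlgClosed k] [Ring A] [Algebra k A] {z : A}

lemma exists_lsmul_eq_smul_one_of_mem_center (hz : z ∈ Subalgebra.center k A) (M : Type*)
    [AddCommGroup M] [Module k M] [Module A M] [IsScalarTower k A M] [IsSimpleModule A M]
    [FiniteDimensional k M] :
    ∃ c : k, Algebra.lsmul k k M z = c • 1 := by
  let T : Module.End A M :=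
    { DistribSMul.toAddMonoidHom M z with
      map_smul' r m := by
        simp [← mul_smul, Subalgebra.mem_center_iff.1 hz r] }
  obtain ⟨c, hc⟩ := (IsSimpleModule.algebraMap_end_bijective_of_isAlgClosed k).2 T
  exact ⟨c, LinearMap.ext fun m => (LinearMap.congr_fun hc m).symm⟩

variable [CharZero k]

lemma lsmul_eq_zero_of_mem_center_of_trace_eq_zero (hz : z ∈ Subalgebra.center k A) {M : Type*}
    [AddCommGroup M] [Module k M] [Module A M] [IsScalarTower k A M] [IsSimpleModule A M]
    [FiniteDimensional k M] (htrace : LinearMap.trace k M (Algebra.lsmul k k M z) = 0) :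
    Algebra.lsmul k k M z = 0 := by
  obtain ⟨c, hc⟩ := exists_lsmul_eq_smul_one_of_mem_center hz M
  have : Nontrivial M := IsSimpleModule.nontrivial A M
  rw [hc, map_smul, LinearMap.trace_one, smul_eq_mul, mul_eq_zero] at htrace
  have hc_zero : c = 0 := htrace.resolve_right (Nat.cast_ne_zero.2 Module.finrank_pos.ne')
  rw [hc, hc_zero, zero_smul]

lemma eq_zero_of_mem_center_of_trace_eq_zero [IsSemisimpleRing A] [FiniteDimensional k A]
    (hz : z ∈ Subalgebra.center k A)
    (htrace : ∀ N : Submodule A A, IsSimpleModule A N →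
      LinearMap.trace k N (Algebra.lsmul k k N z) = 0) :
    z = 0 := by
  have hann : z ∈ Module.annihilator A A :=
    mem_annihilator_of_forall_isSimpleModule fun N hN => Submodule.mem_annihilator.2 fun n hn => by
      have hzero : Algebra.lsmul k k N z = 0 :=
        lsmul_eq_zero_of_mem_center_of_trace_eq_zero hz (M := N) (htrace N hN)
      exact congrArg Subtype.val (LinearMap.congr_fun hzero ⟨n, hn⟩)
  simpa using Module.mem_annihilator.1 hann 1

end SemisimpleAlgebra

/-! ### Completeness of the irreducible characters -/

section Completeness

/-- The space of class functions on `G` with values in `k`: the functions constant on conjugacy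
classes. -/
def classFunctions (k G : Type*) [Semiring k] [Group G] : Submodule k (G → k) where
  carrier := {f | ∀ g x, f (g * x * g⁻¹) = f x}
  add_mem' hf₁ hf₂ g x := congrArg₂ (· + ·) (hf₁ g x) (hf₂ g x)
  zero_mem' _ _ := rfl
  smul_mem' c _ hf g x := congrArg (c * ·) (hf g x)

/-- The element `∑ g, f(g) g⁻¹` of the group algebra attached to a function `f` on the group. The
inverse makes its trace on a module with character `χ` equal to `∑ g, f(g) χ(g⁻¹)`, which is
`|G|⟨f, χ⟩` over `ℂ`. -/
def sumSingleInv {k G : Type*} [Semiring k] [Group G] [Fintype G] (f : G → k) : k[G] :=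
  ∑ g, MonoidAlgebra.single g⁻¹ (f g)

lemma sumSingleInv_eq_zero_iff {k G : Type*} [Semiring k] [Group G] [Fintype G] {f : G → k} :
    sumSingleInv f = 0 ↔ f = 0 := by
  refine ⟨fun h => funext fun x => ?_, by rintro rfl; simp [sumSingleInv]⟩
  simpa [sumSingleInv, Finsupp.single_apply] using congrArg (fun a : k[G] => a.coeff x⁻¹) h

lemma sumSingleInv_mem_center {k G : Type*} [CommSemiring k] [Group G] [Fintype G] {f : G → k}
    (hf : f ∈ classFunctions k G) :
    sumSingleInv f ∈ Subalgebra.center k k[G] := by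
  rw [Subalgebra.mem_center_iff]
  intro r
  induction r using MonoidAlgebra.induction_on with
  | of x =>
    simp only [sumSingleInv, Finset.sum_mul, Finset.mul_sum, MonoidAlgebra.of_apply,
      MonoidAlgebra.single_mul_single, mul_one, one_mul]
    refine Fintype.sum_equiv (MulAut.conj x).toEquiv _ _ fun g => ?_
    have hfx : f (x * (g * x⁻¹)) = f g := by rw [← mul_assoc]; exact hf x g
    simp [hfx, mul_assoc]
  | add a b ha hb => rw [mul_add, add_mul, ha, hb]
  | smul c a ha => rw [mul_smul_comm, smul_mul_assoc, ha]

section Module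

variable {k G M : Type*} [Field k] [Group G] [AddCommGroup M] [Module k M] [Module k[G] M]
  [IsScalarTower k k[G] M]

lemma trace_lsmul_sumSingleInv [Fintype G] (f : G → k) :
    LinearMap.trace k M (Algebra.lsmul k k M (sumSingleInv f)) =
      ∑ g, f g * (Representation.ofModule' (k := k) (G := G) M).character g⁻¹ := by
  have hsingle (g : G) :
      MonoidAlgebra.single g⁻¹ (f g) = f g • MonoidAlgebra.single g⁻¹ (1 : k) := by
    simp
  simp only [sumSingleInv, hsingle, map_sum, map_smul, smul_eq_mul]
  rfl

lemma isIrreducible_ofModule' [IsSimpleModule k[G] M] :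
    (Representation.ofModule' (k := k) (G := G) M).IsIrreducible := by
  rw [Representation.irreducible_iff_isSimpleModule_asModule]
  let ρ := Representation.ofModule' (k := k) (G := G) M
  have hρ : ρ.asAlgebraHom = Algebra.lsmul k k M :=
    (MonoidAlgebra.lift k (M →ₗ[k] M) G).apply_symm_apply _
  let e : ρ.asModule ≃ₗ[k[G]] M :=
    { ρ.asModuleEquiv.toAddEquiv with
      map_smul' r x := (ρ.asModuleEquiv_map_smul r x).trans (by rw [hρ]; rfl) }
  exact IsSimpleModule.congr e

end Module

universe u

variable {k G : Type u} [Field k] [IsAlgClosed k] [CharZero k] [Group G]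

lemma simple_of_isIrreducible [Finite G] {V : Type u} [AddCommGroup V] [Module k V]
    [FiniteDimensional k V] (ρ : Representation k G V) [ρ.IsIrreducible] :
    CategoryTheory.Simple (FDRep.of ρ) := by
  have := Fintype.ofFinite G
  have h := Representation.char_orthonormal ρ ρ
  rw [if_pos ⟨Representation.Equiv.refl ρ⟩, inv_mul_eq_one₀ (NeZero.ne _)] at h
  exact (FDRep.simple_iff_char_is_norm_one _).2 h.symm

lemma eq_zero_of_mem_classFunctions [Fintype G] {f : G → k} (hf : f ∈ classFunctions k G)
    (horth : ∀ V : FDRep k G, CategoryTheory.Simple V → ∑ g, f g * V.character g⁻¹ = 0) :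
    f = 0 := by
  refine sumSingleInv_eq_zero_iff.1 <|
    eq_zero_of_mem_center_of_trace_eq_zero (sumSingleInv_mem_center hf) fun N _ => ?_
  have := isIrreducible_ofModule' (k := k) (G := G) (M := N)
  rw [trace_lsmul_sumSingleInv]
  exact horth _ (simple_of_isIrreducible (Representation.ofModule' N))

end Completeness

/-! ### Expansion of class functions in irreducible characters -/

section Expansion

open RCLike

lemma wInner_sum_right {ι κ 𝕜 : Type*} [Fintype ι] [RCLike 𝕜] (w : ι → ℝ) (f : ι → 𝕜)
    (s : Finset κ) (g : κ → ι → 𝕜) :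
    ⟪f, ∑ i ∈ s, g i⟫_[𝕜, w] = ∑ i ∈ s, ⟪f, g i⟫_[𝕜, w] :=
  map_sum (AddMonoidHom.mk' (wInner w f) (wInner_add_right w f)) g s

variable {G : Type} [Group G]

lemma irrChar_subset_classFunctions : IrrChar G ⊆ classFunctions ℂ G := by
  rintro _ ⟨V, -, rfl⟩ g x
  exact V.char_conj x g

lemma wInner_character_left [Fintype G] (V : FDRep ℂ G) (f : G → ℂ) :
    ⟪V.character, f⟫ₙ_[ℂ] = (Nat.card G : ℂ)⁻¹ * ∑ g, f g * V.character g⁻¹ := by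
  have hconj (g : G) : conj (V.character g) = V.character g⁻¹ := star_character V.ρ g
  simp [wInner, hconj, Finset.mul_sum]

lemma wInner_irrChar [Fintype G] {χ ψ : G → ℂ} (hχ : χ ∈ IrrChar G) (hψ : ψ ∈ IrrChar G) :
    ⟪χ, ψ⟫ₙ_[ℂ] = if χ = ψ then 1 else 0 := by
  obtain ⟨V, hV, rfl⟩ := hχ
  obtain ⟨W, hW, rfl⟩ := hψ
  rw [wInner_character_left]
  split_ifs with h
  · rw [← h, FDRep.char_orthonormal, if_pos ⟨CategoryTheory.Iso.refl V⟩]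
  · rw [FDRep.char_orthonormal, if_neg fun ⟨i⟩ => h (FDRep.char_iso i).symm]

lemma linearIndependent_irrChar [Finite G] :
    LinearIndependent ℂ (fun χ : IrrChar G => (χ : G → ℂ)) := by
  have := Fintype.ofFinite G
  refine linearIndependent_of_ne_zero_of_wInner_cWeight_eq_zero (fun χ hχ => ?_) fun χ ψ hne => ?_
  · simpa [hχ] using wInner_irrChar χ.2 χ.2
  · exact (wInner_irrChar χ.2 ψ.2).trans (if_neg (Subtype.coe_ne_coe.2 hne))

lemma finite_irrChar [Finite G] : (IrrChar G).Finite :=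
  linearIndependent_irrChar.setFinite

variable [Fintype G]

lemma eq_zero_of_forall_wInner_irrChar_eq_zero {f : G → ℂ} (hf : f ∈ classFunctions ℂ G)
    (horth : ∀ ψ ∈ IrrChar G, ⟪ψ, f⟫ₙ_[ℂ] = 0) : f = 0 := by
  refine eq_zero_of_mem_classFunctions hf fun V hV => ?_
  have h := horth _ ⟨V, hV, rfl⟩
  rw [wInner_character_left] at h
  exact (mul_eq_zero.1 h).resolve_left (inv_ne_zero (NeZero.ne _))

lemma eq_finsum_wInner_smul {b : Set (G → ℂ)} (hb : b ⊆ IrrChar G) {f : G → ℂ}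
    (hf : f ∈ classFunctions ℂ G) (horth : ∀ ψ ∈ IrrChar G \ b, ⟪ψ, f⟫ₙ_[ℂ] = 0) :
    f = ∑ᶠ ψ ∈ b, ⟪ψ, f⟫ₙ_[ℂ] • ψ := by
  have hfin : b.Finite := finite_irrChar.subset hb
  rw [finsum_mem_eq_finite_toFinset_sum _ hfin, ← sub_eq_zero]
  refine eq_zero_of_forall_wInner_irrChar_eq_zero (Submodule.sub_mem _ hf ?_) fun φ hφ => ?_
  · exact Submodule.sum_mem _ fun ψ hψ => Submodule.smul_mem _ _ <|
      irrChar_subset_classFunctions (hb (hfin.mem_toFinset.1 hψ))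
  · have hterm : ∀ ψ ∈ hfin.toFinset,
        ⟪φ, ⟪ψ, f⟫ₙ_[ℂ] • ψ⟫ₙ_[ℂ] = if φ = ψ then ⟪ψ, f⟫ₙ_[ℂ] else 0 := fun ψ hψ => by
      simp [wInner_smul_right, wInner_irrChar hφ (hb (hfin.mem_toFinset.1 hψ))]
    rw [wInner_sub_right, wInner_sum_right, Finset.sum_congr rfl hterm, Finset.sum_ite_eq]
    simp only [hfin.mem_toFinset]
    split_ifs with h
    · exact sub_self _
    · rw [horth φ ⟨hφ, h⟩, sub_zero]

end Expansion

/-! ### Truncation -/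

section Truncation

open RCLike

lemma innerOn_eq_wInner_truncCF {G : Type} [Fintype G] (C : Set G) (α β : G → ℂ) :
    innerOn C α β = ⟪β, truncCF C α⟫ₙ_[ℂ] := by
  simp [innerOn, wInner, truncCF, Finset.mul_sum, apply_ite]

lemma innerOn_smul_left {G : Type} [Fintype G] (C : Set G) (c : ℂ) (α β : G → ℂ) :
    innerOn C (c • α) β = c * innerOn C α β := by
  simp only [innerOn, Pi.smul_apply, smul_eq_mul, Finset.mul_sum, mul_ite, mul_zero]
  congr! 2
  ring

lemma innerOn_smul_right {G : Type} [Fintype G] (C : Set G) (c : ℂ) (α β : G → ℂ) :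
    innerOn C α (c • β) = conj c * innerOn C α β := by
  rw [innerOn_eq_wInner_truncCF, wInner_smul_left, ← innerOn_eq_wInner_truncCF]; rfl

lemma innerOn_smul_smul_of_norm_eq_one {G : Type} [Fintype G] (C : Set G) {c : ℂ} (hc : ‖c‖ = 1)
    (α β : G → ℂ) :
    innerOn C α (c • β) • c • β = innerOn C α β • β := by
  rw [innerOn_smul_right, smul_smul, mul_right_comm, Complex.conj_mul', hc]
  simp

lemma truncCF_mem_classFunctions {G : Type} [Group G] {C : Set G}
    (hC : ∀ g x : G, x ∈ C → g * x * g⁻¹ ∈ C) {f : G → ℂ} (hf : f ∈ classFunctions ℂ G) :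
    truncCF C f ∈ classFunctions ℂ G := by
  intro g x
  have hmem : g * x * g⁻¹ ∈ C ↔ x ∈ C :=
    ⟨fun h => by simpa [mul_assoc] using hC g⁻¹ _ h, hC g x⟩
  simp only [truncCF, hmem, hf g x]

lemma truncCF_eq_finsum_innerOn_smul {G : Type} [Group G] [Fintype G] {C : Set G}
    (hC : ∀ g x : G, x ∈ C → g * x * g⁻¹ ∈ C) {b : Set (G → ℂ)} (hb : b ⊆ IrrChar G) {f : G → ℂ}
    (hf : f ∈ classFunctions ℂ G) (horth : ∀ ψ ∈ IrrChar G \ b, innerOn C f ψ = 0) :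
    truncCF C f = ∑ᶠ ψ ∈ b, innerOn C f ψ • ψ := by
  simp only [innerOn_eq_wInner_truncCF] at horth ⊢
  exact eq_finsum_wInner_smul hb (truncCF_mem_classFunctions hC hf) horth

end Truncation

theorem generalized_perfect_isometry_commutes_with_truncation_general
    {G H : Type} [Group G] [Fintype G] [Group H] [Fintype H] {C : Set G} {C' : Set H}
    (hC : ∀ g x : G, x ∈ C → g * x * g⁻¹ ∈ C) (hC' : ∀ h x : H, x ∈ C' → h * x * h⁻¹ ∈ C')
    {b : Set (G → ℂ)} {b' : Set (H → ℂ)} (hb : b ⊆ IrrChar G) (hb' : b' ⊆ IrrChar H)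
    {I : (G → ℂ) → (H → ℂ)} {η : (G → ℂ) → ℂ} (hI : Set.BijOn I b b') (hη : ∀ χ ∈ b, ‖η χ‖ = 1)
    (hiso : ∀ χ ∈ b, ∀ φ ∈ b, innerOn C χ φ = innerOn C' (η χ • I χ) (η φ • I φ))
    (hblock : ∀ χ ∈ b, ∀ ψ ∈ IrrChar G \ b, innerOn C χ ψ = 0)
    (hblock' : ∀ χ' ∈ b', ∀ ψ' ∈ IrrChar H \ b', innerOn C' χ' ψ' = 0) {χ : G → ℂ} (hχ : χ ∈ b) :
    truncCF C χ ∈ Submodule.span ℂ b ∧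
      ∀ T : (G → ℂ) →ₗ[ℂ] (H → ℂ), (∀ φ ∈ b, T φ = η φ • I φ) →
        T (truncCF C χ) = truncCF C' (η χ • I χ) := by
  have hexp : truncCF C χ = ∑ᶠ ψ ∈ b, innerOn C χ ψ • ψ :=
    truncCF_eq_finsum_innerOn_smul hC hb (irrChar_subset_classFunctions (hb hχ)) (hblock χ hχ)
  have hexp' : truncCF C' (η χ • I χ) = ∑ᶠ ψ' ∈ b', innerOn C' (η χ • I χ) ψ' • ψ' :=
    truncCF_eq_finsum_innerOn_smul hC' hb'
      (Submodule.smul_mem _ _ (irrChar_subset_classFunctions (hb' (hI.mapsTo hχ))))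
      fun ψ' hψ' => by rw [innerOn_smul_left, hblock' _ (hI.mapsTo hχ) ψ' hψ', mul_zero]
  refine ⟨?_, fun T hT => ?_⟩
  · rw [hexp]
    exact finsum_mem_induction (· ∈ Submodule.span ℂ b) (Submodule.zero_mem _)
      (fun _ _ => Submodule.add_mem _)
      fun ψ hψ => Submodule.smul_mem _ _ (Submodule.subset_span hψ)
  · rw [hexp, hexp']
    refine (T.toAddMonoidHom.map_finsum_mem _ (finite_irrChar.subset hb)).trans
      (finsum_mem_eq_of_bijOn I hI fun ψ hψ => ?_)
    calc T (innerOn C χ ψ • ψ)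
        = innerOn C' (η χ • I χ) (η ψ • I ψ) • η ψ • I ψ := by
          rw [map_smul, hT ψ hψ, hiso χ hχ ψ hψ]
      _ = innerOn C' (η χ • I χ) (I ψ) • I ψ :=
          innerOn_smul_smul_of_norm_eq_one C' (hη ψ hψ) _ _

/-- Under a generalized perfect isometry `I_η : (b,C) → (b',C')` between subsets of
irreducible characters which are orthogonal across `C` (resp. `C'`) to their complements,
the truncation `χ^C` of any `χ ∈ b` lies in the `ℂ`-span of `b`, and the induced `ℂ`-linear
map sends `χ^C` to `(I_η χ)^{C'}`: for any linear map `T` agreeing with `I_η` on `b`,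
`T (χ^C) = (η(χ)·I(χ))^{C'}`. -/
theorem generalized_perfect_isometry_commutes_with_truncation
    {G H : Type} [Group G] [Fintype G] [Group H] [Fintype H]
    (C : Set G) (C' : Set H)
    (hC : ∀ g x : G, x ∈ C → g * x * g⁻¹ ∈ C)
    (hC' : ∀ h x : H, x ∈ C' → h * x * h⁻¹ ∈ C')
    (b : Set (G → ℂ)) (b' : Set (H → ℂ))
    (hb : b ⊆ IrrChar G) (hb' : b' ⊆ IrrChar H)
    (I : (G → ℂ) → (H → ℂ)) (η : (G → ℂ) → ℂ)
    (hI : Set.BijOn I b b')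
    (hη : ∀ χ ∈ b, η χ = 1 ∨ η χ = -1)
    (hiso : ∀ χ ∈ b, ∀ φ ∈ b,
      innerOn C χ φ = innerOn C' (fun h => η χ * I χ h) (fun h => η φ * I φ h))
    (hblock : ∀ χ ∈ b, ∀ ψ ∈ IrrChar G \ b, innerOn C χ ψ = 0)
    (hblock' : ∀ χ' ∈ b', ∀ ψ' ∈ IrrChar H \ b', innerOn C' χ' ψ' = 0) :
    ∀ χ ∈ b, truncCF C χ ∈ Submodule.span ℂ b ∧
      ∀ T : (G → ℂ) →ₗ[ℂ] (H → ℂ), (∀ φ ∈ b, T φ = fun h => η φ * I φ h) →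
        T (truncCF C χ) = truncCF C' (fun h => η χ * I χ h) :=
  fun _ hχ => generalized_perfect_isometry_commutes_with_truncation_general hC hC' hb hb' hI
    (fun φ hφ => by rcases hη φ hφ with h | h <;> simp [h]) hiso hblock hblock' hχ
end
end
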